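/- Let 0 < α < 1. There exists a real-valued, 2π-periodic, nowhere linear function φ of class C^{1,α}(𝕋) such that: (i) ‖e^{iλφ}‖_{A_1(𝕋)} = O(|λ|^{α/(1+α)} · (log|λ|)^{(1−α)/(1+α)}) as |λ|→∞; (ii) ‖e^{iλφ}‖_{A_p(𝕋)} ≍ |λ|^{1/p − 1/(1+α)} for 1 < p < 1+α (i.e., for all large |λ| the ratio lies between two positive constants); ‖e^{iλφ}‖_{A_p(𝕋)} ≍ 1 for 1+α < p < 2; and ‖e^{iλφ}‖_{A_p(𝕋)} = O((log|λ|)^{1/p}) for p = 1+α. -/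

import Mathlib

open MeasureTheory Real Set
open scoped ENNReal

/-- The k-th Fourier coefficient of a (2π-periodic) function on the circle,
identified with a function on [0, 2π]. -/
noncomputable def fourierCoef (f : ℝ → ℂ) (k : ℤ) : ℂ :=
  (1 / (2 * (Real.pi : ℂ))) *
    ∫ t in (0:ℝ)..(2 * Real.pi), f t * Complex.exp (-Complex.I * (k : ℂ) * (t : ℂ))

/-- The A_p(𝕋) norm: ℓ^p norm of the sequence of Fourier coefficients
(valued in ℝ≥0∞ so that divergence gives ∞). -/
noncomputable def ApNorm (p : ℝ) (f : ℝ → ℂ) : ℝ≥0∞ :=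
  (∑' k : ℤ, ((‖fourierCoef f k‖₊ : ℝ≥0∞) ^ p)) ^ (1 / p)


/-! Basic facts about Fourier coefficients -/

theorem fc_eq (f : ℝ → ℂ) (k : ℤ) :
    fourierCoef f k = fourierCoeffOn Real.two_pi_pos f k := by
  rw [fourierCoeffOn_eq_integral, fourierCoef, sub_zero, Complex.real_smul]
  congr 1
  · push_cast; rfl
  · apply intervalIntegral.integral_congr
    intro t _
    simp only [smul_eq_mul]
    rw [fourier_coe_apply, mul_comm]
    congr 2
    have : (Real.pi : ℂ) ≠ 0 := by exact_mod_cast Real.pi_ne_zero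
    push_cast
    field_simp

theorem fc_parseval {f : ℝ → ℂ} (hf : Continuous f) :
    HasSum (fun k : ℤ => ‖fourierCoef f k‖ ^ 2)
      ((2 * π)⁻¹ * ∫ t in (0:ℝ)..(2 * π), ‖f t‖ ^ 2) := by
  have hL2 : MemLp f 2 (volume.restrict (Ioc 0 (2 * π))) := by
    obtain ⟨C, hC⟩ := (isCompact_Icc (a := (0:ℝ)) (b := 2 * π)).exists_bound_of_continuousOn
      hf.continuousOn
    refine MemLp.of_bound hf.aestronglyMeasurable C ?_
    filter_upwards [ae_restrict_mem measurableSet_Ioc] with t ht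
    exact hC t (Ioc_subset_Icc_self ht)
  have := hasSum_sq_fourierCoeffOn Real.two_pi_pos hL2
  simp only [sub_zero, smul_eq_mul] at this
  simpa only [fc_eq] using this

theorem fc_integrable {f : ℝ → ℂ} (hf : Continuous f) (k : ℤ) :
    IntervalIntegrable (fun t : ℝ => f t * Complex.exp (-Complex.I * (k : ℂ) * (t : ℂ)))
      volume 0 (2 * π) := by
  apply Continuous.intervalIntegrable
  fun_prop

theorem fc_add {f g : ℝ → ℂ} (hf : Continuous f) (hg : Continuous g) (k : ℤ) :
    fourierCoef (fun t => f t + g t) k = fourierCoef f k + fourierCoef g k := by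
  unfold fourierCoef
  rw [← mul_add, ← intervalIntegral.integral_add (fc_integrable hf k) (fc_integrable hg k)]
  simp only [add_mul]

theorem fc_sub {f g : ℝ → ℂ} (hf : Continuous f) (hg : Continuous g) (k : ℤ) :
    fourierCoef (fun t => f t - g t) k = fourierCoef f k - fourierCoef g k := by
  unfold fourierCoef
  rw [← mul_sub, ← intervalIntegral.integral_sub (fc_integrable hf k) (fc_integrable hg k)]
  simp only [sub_mul]

theorem fc_norm_le {f : ℝ → ℂ} (k : ℤ) :
    ‖fourierCoef f k‖ ≤ (2 * π)⁻¹ * ∫ t in (0:ℝ)..(2 * π), ‖f t‖ := by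
  unfold fourierCoef
  rw [norm_mul]
  have h1 : ‖(1 / (2 * (π : ℂ)))‖ = (2 * π)⁻¹ := by
    simp [abs_of_pos Real.pi_pos]
  rw [h1]
  gcongr
  refine (intervalIntegral.norm_integral_le_integral_norm Real.two_pi_pos.le).trans (le_of_eq ?_)
  congr 1; ext t
  rw [norm_mul]
  have : -Complex.I * (k : ℂ) * (t : ℂ) = ((-(k * t : ℝ) : ℝ) : ℂ) * Complex.I := by
    push_cast; ring
  rw [this, Complex.norm_exp_ofReal_mul_I, mul_one]

theorem fc_shift (f : ℝ → ℂ) (j k : ℤ) :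
    fourierCoef (fun t => Complex.exp (Complex.I * (j : ℂ) * (t : ℂ)) * f t) k
      = fourierCoef f (k - j) := by
  unfold fourierCoef
  congr 2; ext t
  beta_reduce
  rw [mul_comm (Complex.exp _) (f t), mul_assoc, ← Complex.exp_add]
  congr 2
  push_cast; ring

theorem fc_deriv {f f' : ℝ → ℂ} (hd : ∀ t, HasDerivAt f (f' t) t) (hc : Continuous f')
    (h0 : f 0 = f (2 * π)) (k : ℤ) :
    fourierCoef f' k = Complex.I * (k : ℂ) * fourierCoef f k := by
  have hf : Continuous f := continuous_iff_continuousAt.2 fun t => (hd t).continuousAt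
  unfold fourierCoef
  have hg : ∀ t : ℝ, HasDerivAt (fun t : ℝ => Complex.exp (-Complex.I * (k : ℂ) * (t : ℂ)))
      (Complex.exp (-Complex.I * (k : ℂ) * (t : ℂ)) * (-Complex.I * (k : ℂ))) t := by
    intro t
    have h1 : HasDerivAt (fun t : ℝ => -Complex.I * (k : ℂ) * (t : ℂ)) (-Complex.I * (k : ℂ)) t := by
      simpa using (Complex.ofRealCLM.hasDerivAt (x := t)).const_mul (-Complex.I * (k : ℂ))
    exact h1.cexp
  have h2 := intervalIntegral.integral_deriv_mul_eq_sub (a := 0) (b := 2 * π)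
    (fun x _ => hd x) (fun x _ => hg x) (hc.intervalIntegrable _ _)
    (Continuous.intervalIntegrable (by fun_prop) _ _)
  have h3 : Complex.exp (-Complex.I * (k : ℂ) * ((2 * π : ℝ) : ℂ)) = 1 := by
    rw [Complex.exp_eq_one_iff]
    exact ⟨-k, by push_cast; ring⟩
  have h4 : f (2 * π) * Complex.exp (-Complex.I * (k : ℂ) * ((2 * π : ℝ) : ℂ)) -
      f 0 * Complex.exp (-Complex.I * (k : ℂ) * ((0 : ℝ) : ℂ)) = 0 := by
    rw [h3, h0]; simp
  rw [h4, intervalIntegral.integral_add (fc_integrable hc k)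
    (Continuous.intervalIntegrable (by fun_prop) _ _)] at h2
  have h5 : ∫ x in (0:ℝ)..(2 * π), f x * (Complex.exp (-Complex.I * (k : ℂ) * (x : ℂ)) *
      (-Complex.I * (k : ℂ))) = (-Complex.I * (k : ℂ)) *
      ∫ x in (0:ℝ)..(2 * π), f x * Complex.exp (-Complex.I * (k : ℂ) * (x : ℂ)) := by
    rw [← intervalIntegral.integral_const_mul]
    congr 1; ext x; ring
  rw [h5] at h2
  linear_combination (1 / (2 * (π : ℂ))) * h2

/-- The Wiener norm. -/
noncomputable def N1 (f : ℝ → ℂ) : ℝ≥0∞ := ∑' k : ℤ, ‖fourierCoef f k‖ₑ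

theorem N1_add {f g : ℝ → ℂ} (hf : Continuous f) (hg : Continuous g) :
    N1 (fun t => f t + g t) ≤ N1 f + N1 g := by
  unfold N1
  rw [← ENNReal.tsum_add]
  exact ENNReal.tsum_le_tsum fun k => by rw [fc_add hf hg]; exact enorm_add_le _ _

theorem N1_sub {f g : ℝ → ℂ} (hf : Continuous f) (hg : Continuous g) :
    N1 (fun t => f t - g t) ≤ N1 f + N1 g := by
  unfold N1
  rw [← ENNReal.tsum_add]
  exact ENNReal.tsum_le_tsum fun k => by rw [fc_sub hf hg]; exact enorm_sub_le

theorem N1_shift (f : ℝ → ℂ) (j : ℤ) :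
    N1 (fun t => Complex.exp (Complex.I * (j : ℂ) * (t : ℂ)) * f t) = N1 f := by
  unfold N1
  simp only [fc_shift]
  exact (Equiv.subRight j).tsum_eq (fun k => ‖fourierCoef f k‖ₑ)

theorem sum_lorentz_nat {η : ℝ} (h0 : 0 < η) :
    Summable (fun k : ℕ => 1 / (1 + η ^ 2 * ((k : ℝ) + 1) ^ 2)) ∧
      ∑' k : ℕ, 1 / (1 + η ^ 2 * ((k : ℝ) + 1) ^ 2) ≤ 2 / η := by
  have key : ∀ n : ℕ, ∑ k ∈ Finset.range n, 1 / (1 + η ^ 2 * ((k : ℝ) + 1) ^ 2) ≤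
      2 / η * (1 - 1 / (1 + η * n)) := by
    intro n
    induction n with
    | zero => simp
    | succ n ih =>
      rw [Finset.sum_range_succ]
      have hn : (0 : ℝ) ≤ n := Nat.cast_nonneg n
      have h1 : 1 / (1 + η ^ 2 * ((n : ℝ) + 1) ^ 2) ≤
          2 / η * (1 / (1 + η * n) - 1 / (1 + η * (n + 1))) := by
        have e : 2 / η * (1 / (1 + η * n) - 1 / (1 + η * (n + 1))) =
          2 / ((1 + η * n) * (1 + η * (n + 1))) := by
          field_simp; ring
        rw [e, div_le_div_iff₀ (by positivity) (by positivity)]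
        nlinarith [sq_nonneg (η * (n + 1) - 1), mul_nonneg h0.le hn, mul_pos h0 h0,
          mul_nonneg (mul_pos h0 h0).le hn]
      push_cast
      linarith
  have key2 : ∀ n : ℕ, ∑ k ∈ Finset.range n, 1 / (1 + η ^ 2 * ((k : ℝ) + 1) ^ 2) ≤ 2 / η := by
    intro n
    refine (key n).trans ?_
    have : (0 : ℝ) < 2 / η := by positivity
    have : 0 ≤ 1 / (1 + η * n) := by positivity
    nlinarith
  have hs := summable_of_sum_range_le (fun k => by positivity) key2
  exact ⟨hs, hs.tsum_le_of_sum_range_le key2⟩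

theorem hasSum_int_aux {F : ℤ → ℝ} {g : ℕ → ℝ} {s : ℝ} (hg : HasSum g s) (h0 : F 0 = 1)
    (h1 : ∀ n : ℕ, F ((n : ℤ) + 1) = g n) (h2 : ∀ n : ℕ, F (-((n : ℤ) + 1)) = g n) :
    HasSum F (s + 1 + s) := by
  refine HasSum.of_nat_of_neg_add_one ?_ ?_
  · have := (hasSum_nat_add_iff (f := fun n : ℕ => F (n : ℤ)) (g := s) 1).1 (by
      simpa only [Nat.cast_add, Nat.cast_one, h1] using hg)
    simpa [h0] using this
  · simpa only [h2] using hg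

theorem sum_lorentz {η : ℝ} (h0 : 0 < η) (h1 : η ≤ 1) :
    Summable (fun k : ℤ => 1 / (1 + η ^ 2 * (k : ℝ) ^ 2)) ∧
      ∑' k : ℤ, 1 / (1 + η ^ 2 * (k : ℝ) ^ 2) ≤ 5 / η := by
  obtain ⟨hs, hb⟩ := sum_lorentz_nat h0
  have h := hasSum_int_aux (F := fun k : ℤ => 1 / (1 + η ^ 2 * (k : ℝ) ^ 2)) hs.hasSum
    (by simp) (fun n => by push_cast; ring_nf) (fun n => by push_cast; ring_nf)
  refine ⟨h.summable, ?_⟩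
  rw [h.tsum_eq]
  have : 1 ≤ 1 / η := by rw [le_div_iff₀ h0]; linarith
  have e : 5 / η = 2 / η + 1 / η + 2 / η := by ring
  rw [e]; linarith

theorem int_sq_bound {G : ℝ → ℂ} (hc : Continuous G) {A u v : ℝ} (hu : 0 ≤ u) (huv : u ≤ v)
    (hv : v ≤ 2 * π)
    (hb : ∀ t, ‖G t‖ ≤ A) (hz1 : ∀ t < u, G t = 0) (hz2 : ∀ t > v, G t = 0) :
    ∫ t in (0:ℝ)..(2 * π), ‖G t‖ ^ 2 ≤ A ^ 2 * (v - u) := by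
  have ii : ∀ a b : ℝ, IntervalIntegrable (fun t => ‖G t‖ ^ 2) volume a b := fun a b =>
    Continuous.intervalIntegrable (by fun_prop) _ _
  rw [← intervalIntegral.integral_add_adjacent_intervals (ii 0 u) (ii u (2 * π)),
    ← intervalIntegral.integral_add_adjacent_intervals (ii u v) (ii v (2 * π))]
  have z1 : ∫ t in (0:ℝ)..u, ‖G t‖ ^ 2 = 0 := by
    rw [intervalIntegral.integral_congr_Ioo_of_le (g := fun _ => 0) hu (fun t ht => by
      simp [hz1 t ht.2])]
    simp
  have z2 : ∫ t in v..(2 * π), ‖G t‖ ^ 2 = 0 := by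
    rw [intervalIntegral.integral_congr_Ioo_of_le (g := fun _ => 0) hv (fun t ht => by
      simp [hz2 t ht.1])]
    simp
  rw [z1, z2]
  have := intervalIntegral.integral_mono_on huv (ii u v) (g := fun _ => A ^ 2)
    (by simp) (fun t _ => by
      have := hb t
      have h0 := norm_nonneg (G t)
      gcongr)
  simp only [intervalIntegral.integral_const, smul_eq_mul] at this
  linarith

theorem bump0 {G G' : ℝ → ℂ} (hd : ∀ t, HasDerivAt G (G' t) t) (hc : Continuous G')
    {K η u v : ℝ} (hη : 0 < η) (hη1 : η ≤ 1) (hu : 0 ≤ u) (huv : u ≤ v)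
    (hv : v ≤ 2 * π) (hl : v - u ≤ 7 * η) (hb : ∀ t, ‖G t‖ ≤ K) (hb' : ∀ t, ‖G' t‖ ≤ K / η)
    (hz1 : ∀ t ≤ u, G t = 0) (hz2 : ∀ t ≥ v, G t = 0) :
    N1 G ≤ ENNReal.ofReal (5 * K) := by
  have hK0 : 0 ≤ K := (norm_nonneg _).trans (hb 0)
  have hGc : Continuous G := continuous_iff_continuousAt.2 fun t => (hd t).continuousAt
  rcases hK0.eq_or_lt with hK | hK
  · have : G = fun _ => 0 := by
      ext t; simpa [← hK] using hb t
    simp [N1, this, fourierCoef]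
  have hz1' : ∀ t < u, G' t = 0 := by
    intro t ht
    have h1 : HasDerivAt G 0 t := by
      refine (hasDerivAt_const t (0 : ℂ)).congr_of_eventuallyEq ?_
      filter_upwards [Iio_mem_nhds ht] with s hs using hz1 s (le_of_lt hs)
    exact (hd t).unique h1
  have hz2' : ∀ t > v, G' t = 0 := by
    intro t ht
    have h1 : HasDerivAt G 0 t := by
      refine (hasDerivAt_const t (0 : ℂ)).congr_of_eventuallyEq ?_
      filter_upwards [Ioi_mem_nhds ht] with s hs using hz2 s (le_of_lt hs)
    exact (hd t).unique h1
  have I1 := int_sq_bound hGc hu huv hv hb (fun t ht => hz1 t ht.le) (fun t ht => hz2 t ht.le)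
  have I2 := int_sq_bound hc hu huv hv hb' hz1' hz2'
  have P1 := fc_parseval hGc
  have P2 := fc_parseval hc
  have hder := fc_deriv hd hc (by rw [hz1 0 hu, hz2 _ hv])
  obtain ⟨hs, hsb⟩ := sum_lorentz hη hη1
  set X := (2 * π)⁻¹ * ∫ t in (0:ℝ)..(2 * π), ‖G t‖ ^ 2
  set Y := (2 * π)⁻¹ * ∫ t in (0:ℝ)..(2 * π), ‖G' t‖ ^ 2
  have hpi := Real.pi_gt_three
  have hX : X ≤ K ^ 2 * (7 * η) / 6 := by
    have : (2 * π)⁻¹ ≤ 1 / 6 := by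
      rw [inv_le_comm₀ (by positivity) (by positivity)]; norm_num; linarith
    calc X ≤ (2 * π)⁻¹ * (K ^ 2 * (v - u)) := mul_le_mul_of_nonneg_left I1 (by positivity)
      _ ≤ (1 / 6) * (K ^ 2 * (7 * η)) := by gcongr
      _ = _ := by ring
  have hY : η ^ 2 * Y ≤ K ^ 2 * (7 * η) / 6 := by
    have : (2 * π)⁻¹ ≤ 1 / 6 := by
      rw [inv_le_comm₀ (by positivity) (by positivity)]; norm_num; linarith
    calc η ^ 2 * Y ≤ η ^ 2 * ((2 * π)⁻¹ * ((K / η) ^ 2 * (v - u))) :=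
          mul_le_mul_of_nonneg_left (mul_le_mul_of_nonneg_left I2 (by positivity)) (by positivity)
      _ ≤ η ^ 2 * ((1 / 6) * ((K / η) ^ 2 * (7 * η))) := by gcongr
      _ = _ := by field_simp
  have HS : HasSum (fun k : ℤ => (1 / (2 * K * η)) * (‖fourierCoef G k‖ ^ 2 +
      η ^ 2 * ‖fourierCoef G' k‖ ^ 2) + (K * η / 2) * (1 / (1 + η ^ 2 * (k : ℝ) ^ 2)))
      ((1 / (2 * K * η)) * (X + η ^ 2 * Y) + (K * η / 2) *
        ∑' k : ℤ, 1 / (1 + η ^ 2 * (k : ℝ) ^ 2)) :=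
    ((P1.add (P2.mul_left _)).mul_left _).add (hs.hasSum.mul_left _)
  have pw : ∀ k : ℤ, ‖fourierCoef G k‖ ≤ (1 / (2 * K * η)) * (‖fourierCoef G k‖ ^ 2 +
      η ^ 2 * ‖fourierCoef G' k‖ ^ 2) + (K * η / 2) * (1 / (1 + η ^ 2 * (k : ℝ) ^ 2)) := by
    intro k
    rw [hder k]
    simp only [norm_mul, Complex.norm_I, one_mul, Complex.norm_intCast, mul_pow, sq_abs]
    set a := ‖fourierCoef G k‖
    set w := 1 + η ^ 2 * (k : ℝ) ^ 2 with hw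
    have hw0 : 0 < w := by positivity
    have e : 1 / (2 * K * η) * (a ^ 2 + η ^ 2 * ((k : ℝ) ^ 2 * a ^ 2)) + K * η / 2 * (1 / w) - a
        = (a * w - K * η) ^ 2 / (2 * K * η * w) := by
      have : a ^ 2 + η ^ 2 * ((k : ℝ) ^ 2 * a ^ 2) = w * a ^ 2 := by rw [hw]; ring
      rw [this]
      field_simp
      ring
    have : 0 ≤ (a * w - K * η) ^ 2 / (2 * K * η * w) := by positivity
    linarith
  have hle : N1 G ≤ ENNReal.ofReal ((1 / (2 * K * η)) * (X + η ^ 2 * Y) + (K * η / 2) *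
        ∑' k : ℤ, 1 / (1 + η ^ 2 * (k : ℝ) ^ 2)) := by
    rw [← HS.tsum_eq, ENNReal.ofReal_tsum_of_nonneg (fun k => (norm_nonneg _).trans (pw k))
      HS.summable]
    refine ENNReal.tsum_le_tsum fun k => ?_
    rw [← ofReal_norm]
    exact ENNReal.ofReal_le_ofReal (pw k)
  refine hle.trans (ENNReal.ofReal_le_ofReal ?_)
  have s1 : (1 / (2 * K * η)) * (X + η ^ 2 * Y) ≤
      (1 / (2 * K * η)) * (K ^ 2 * (7 * η) / 6 + K ^ 2 * (7 * η) / 6) := by gcongr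
  have s2 : (K * η / 2) * ∑' k : ℤ, 1 / (1 + η ^ 2 * (k : ℝ) ^ 2) ≤ (K * η / 2) * (5 / η) := by
    gcongr
  have e1 : (1 / (2 * K * η)) * (K ^ 2 * (7 * η) / 6 + K ^ 2 * (7 * η) / 6) = 7 / 6 * K := by
    field_simp; ring
  have e2 : (K * η / 2) * (5 / η) = 5 / 2 * K := by field_simp
  linarith

/-- Bump lemma with an arbitrary real frequency `ν`. -/
theorem bump1 {G G' : ℝ → ℂ} (hd : ∀ t, HasDerivAt G (G' t) t) (hc : Continuous G')
    {K η u v : ℝ} (ν : ℝ) (hη : 0 < η) (hη1 : η ≤ 1) (hu : 0 ≤ u) (huv : u ≤ v)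
    (hv : v ≤ 2 * π) (hl : v - u ≤ 7 * η) (hb : ∀ t, ‖G t‖ ≤ K) (hb' : ∀ t, ‖G' t‖ ≤ K / η)
    (hz1 : ∀ t ≤ u, G t = 0) (hz2 : ∀ t ≥ v, G t = 0) :
    N1 (fun t => Complex.exp (Complex.I * (ν : ℂ) * (t : ℂ)) * G t) ≤
      ENNReal.ofReal (10 * K) := by
  have hK0 : 0 ≤ K := (norm_nonneg _).trans (hb 0)
  set j : ℤ := ⌊ν⌋
  set r : ℝ := Int.fract ν
  have hr0 : 0 ≤ r := Int.fract_nonneg ν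
  have hr1 : r ≤ 1 := (Int.fract_lt_one ν).le
  have hGc : Continuous G := continuous_iff_continuousAt.2 fun t => (hd t).continuousAt
  have e : (fun t : ℝ => Complex.exp (Complex.I * (ν : ℂ) * (t : ℂ)) * G t) =
      fun t : ℝ => Complex.exp (Complex.I * (j : ℂ) * (t : ℂ)) *
        (Complex.exp (Complex.I * (r : ℂ) * (t : ℂ)) * G t) := by
    ext t
    rw [← mul_assoc, ← Complex.exp_add]
    congr 2
    have : (ν : ℂ) = (j : ℂ) + (r : ℂ) := by
      have := Int.floor_add_fract ν
      exact_mod_cast this.symm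
    rw [this]; ring
  rw [e, N1_shift]
  have hE : ∀ t : ℝ, ‖Complex.exp (Complex.I * (r : ℂ) * (t : ℂ))‖ = 1 := by
    intro t
    have : Complex.I * (r : ℂ) * (t : ℂ) = ((r * t : ℝ) : ℂ) * Complex.I := by push_cast; ring
    rw [this, Complex.norm_exp_ofReal_mul_I]
  have hg : ∀ t : ℝ, HasDerivAt (fun t : ℝ => Complex.exp (Complex.I * (r : ℂ) * (t : ℂ)))
      (Complex.exp (Complex.I * (r : ℂ) * (t : ℂ)) * (Complex.I * (r : ℂ))) t := by
    intro t
    have h1 : HasDerivAt (fun t : ℝ => Complex.I * (r : ℂ) * (t : ℂ)) (Complex.I * (r : ℂ)) t := by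
      simpa using (Complex.ofRealCLM.hasDerivAt (x := t)).const_mul (Complex.I * (r : ℂ))
    exact h1.cexp
  have := bump0 (K := 2 * K) (fun t => (hg t).mul (hd t)) (by fun_prop) hη hη1 hu huv hv hl
    (fun t => by rw [Pi.mul_apply, norm_mul, hE]; linarith [hb t])
    (fun t => by
      refine (norm_add_le _ _).trans ?_
      simp only [norm_mul, hE, Complex.norm_I, one_mul, Complex.norm_real, Real.norm_eq_abs,
        abs_of_nonneg hr0]
      have h1 : r * ‖G t‖ ≤ 1 * (K / η) := by
        have : K ≤ K / η := by rw [le_div_iff₀ hη]; nlinarith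
        exact mul_le_mul hr1 ((hb t).trans this) (norm_nonneg _) zero_le_one
      have h2 := hb' t
      have e3 : 2 * K / η = K / η + K / η := by ring
      rw [e3]; linarith)
    (fun t ht => by simp [hz1 t ht]) (fun t ht => by simp [hz2 t ht])
  have e4 : 5 * (2 * K) = 10 * K := by ring
  rw [e4] at this
  exact this

/-! The lower bound -/

theorem fc_one_zero : fourierCoef (fun _ => 1) 0 = 1 := by
  unfold fourierCoef
  have : (π : ℂ) ≠ 0 := by exact_mod_cast Real.pi_ne_zero
  simp
  field_simp

theorem fc_one_ne {k : ℤ} (hk : k ≠ 0) : fourierCoef (fun _ => 1) k = 0 := by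
  have h := fc_deriv (f := fun _ => 1) (f' := fun _ => 0) (fun t => hasDerivAt_const t 1)
    continuous_const rfl k
  have h0 : fourierCoef (fun _ => 0) k = 0 := by simp [fourierCoef]
  rw [h0] at h
  have hk' : (k : ℂ) ≠ 0 := by exact_mod_cast hk
  have := mul_eq_zero.1 h.symm
  rcases this with h1 | h1
  · simp [hk'] at h1
  · exact h1

/-- Dirichlet-type sum. -/
noncomputable def Dir (M : ℕ) (s : ℝ) : ℂ :=
  ∑ a ∈ Finset.range M, Complex.exp (Complex.I * (a : ℂ) * (s : ℂ))

/-- The Fejer kernel. -/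
noncomputable def Fej (M : ℕ) (s : ℝ) : ℝ := ‖Dir M s‖ ^ 2 / M

theorem Dir_continuous (M : ℕ) : Continuous (Dir M) := by
  unfold Dir; fun_prop

theorem Fej_continuous (M : ℕ) : Continuous (Fej M) := by
  have := Dir_continuous M
  unfold Fej; fun_prop

theorem Fej_nonneg (M : ℕ) (s : ℝ) : 0 ≤ Fej M s := by unfold Fej; positivity

theorem Fej_expand (M : ℕ) (s : ℝ) : (Fej M s : ℂ) =
    (1 / (M : ℂ)) * ∑ a ∈ Finset.range M, ∑ b ∈ Finset.range M,
      Complex.exp (Complex.I * ((a : ℂ) - (b : ℂ)) * (s : ℂ)) := by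
  have h : ((‖Dir M s‖ ^ 2 : ℝ) : ℂ) = Dir M s * (starRingEnd ℂ) (Dir M s) := by
    rw [Complex.mul_conj, Complex.normSq_eq_norm_sq]
  unfold Fej
  rw [Complex.ofReal_div, h]
  unfold Dir
  rw [map_sum, Finset.sum_mul_sum]
  simp only [← Complex.exp_conj, map_mul, Complex.conj_I, Complex.conj_ofReal, Complex.conj_natCast,
    ← Complex.exp_add]
  rw [div_eq_inv_mul, one_div]
  push_cast
  congr 1
  refine Finset.sum_congr rfl fun a _ => Finset.sum_congr rfl fun b _ => ?_
  congr 1; ring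

theorem Dir_periodic (M : ℕ) : Function.Periodic (Dir M) (2 * π) := by
  intro s
  unfold Dir
  refine Finset.sum_congr rfl fun a _ => ?_
  rw [Complex.exp_eq_exp_iff_exists_int]
  exact ⟨a, by push_cast; ring⟩

theorem Fej_periodic (M : ℕ) : Function.Periodic (Fej M) (2 * π) := by
  intro s
  unfold Fej
  rw [Dir_periodic M s]

theorem Fej_bound {M : ℕ} (hM : 0 < M) {s : ℝ} (hs : |s| ≤ π) :
    s ^ 2 * Fej M s ≤ π ^ 2 / M := by
  have h1 : Dir M s * (Complex.exp (Complex.I * (s : ℂ)) - 1) =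
      Complex.exp (Complex.I * (s : ℂ)) ^ M - 1 := by
    unfold Dir
    rw [← geom_sum_mul]
    congr 1
    refine Finset.sum_congr rfl fun a _ => ?_
    rw [← Complex.exp_nat_mul]; congr 1; ring
  have h2 : ‖Complex.exp (Complex.I * (s : ℂ)) ^ M - 1‖ ≤ 2 := by
    refine (norm_sub_le _ _).trans ?_
    rw [norm_pow, mul_comm, Complex.norm_exp_ofReal_mul_I]; norm_num
  have h3 : ‖Complex.exp (Complex.I * (s : ℂ)) - 1‖ = 2 * |Real.sin (s / 2)| := by
    rw [Complex.norm_exp_I_mul_ofReal_sub_one]; simp [abs_mul]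
  have h4 : 2 / π * |s / 2| ≤ |Real.sin (s / 2)| := by
    have h5 : |s / 2| ≤ π / 2 := by rw [abs_div, abs_two]; linarith
    exact Real.mul_abs_le_abs_sin h5
  have h6 : ‖Dir M s‖ * (2 * |Real.sin (s / 2)|) ≤ 2 := by
    rw [← h3, ← norm_mul, h1]; exact h2
  have h7 : ‖Dir M s‖ * |s| ≤ π := by
    have hpi := Real.pi_pos
    have : |s| ≤ π * |Real.sin (s / 2)| := by
      rw [abs_div, abs_two] at h4
      have := mul_le_mul_of_nonneg_left h4 hpi.le
      calc |s| = π * (2 / π * (|s| / 2)) := by field_simp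
        _ ≤ _ := this
    calc ‖Dir M s‖ * |s| ≤ ‖Dir M s‖ * (π * |Real.sin (s / 2)|) := by gcongr
      _ = π / 2 * (‖Dir M s‖ * (2 * |Real.sin (s / 2)|)) := by ring
      _ ≤ π / 2 * 2 := by gcongr
      _ = π := by ring
  unfold Fej
  rw [← mul_div_assoc]
  gcongr
  calc s ^ 2 * ‖Dir M s‖ ^ 2 = (‖Dir M s‖ * |s|) ^ 2 := by rw [mul_pow, sq_abs]; ring
    _ ≤ π ^ 2 := by gcongr

theorem Fej_pair {u : ℝ → ℂ} (hu : Continuous u) (M : ℕ) (t₀ : ℝ) :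
    (1 / (2 * (π : ℂ))) * ∫ t in (0:ℝ)..(2 * π), u t * (Fej M (t - t₀) : ℂ) =
    (1 / (M : ℂ)) * ∑ a ∈ Finset.range M, ∑ b ∈ Finset.range M,
      Complex.exp (-(Complex.I * ((a : ℂ) - (b : ℂ)) * (t₀ : ℂ))) *
        fourierCoef u ((b : ℤ) - (a : ℤ)) := by
  have e : ∀ t : ℝ, u t * (Fej M (t - t₀) : ℂ) = (1 / (M : ℂ)) * ∑ a ∈ Finset.range M,
      ∑ b ∈ Finset.range M, Complex.exp (-(Complex.I * ((a : ℂ) - (b : ℂ)) * (t₀ : ℂ))) *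
        (u t * Complex.exp (-Complex.I * (((b : ℤ) - (a : ℤ) : ℤ) : ℂ) * (t : ℂ))) := by
    intro t
    rw [Fej_expand, mul_left_comm, Finset.mul_sum]
    congr 1
    refine Finset.sum_congr rfl fun a _ => ?_
    rw [Finset.mul_sum]
    refine Finset.sum_congr rfl fun b _ => ?_
    rw [mul_left_comm, ← Complex.exp_add]
    congr 2
    push_cast; ring
  simp only [e]
  rw [intervalIntegral.integral_const_mul, intervalIntegral.integral_finsetSum, mul_left_comm,
    Finset.mul_sum]
  · congr 1
    refine Finset.sum_congr rfl fun a _ => ?_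
    rw [intervalIntegral.integral_finsetSum, Finset.mul_sum]
    · refine Finset.sum_congr rfl fun b _ => ?_
      rw [intervalIntegral.integral_const_mul, mul_left_comm, fourierCoef]
    · intro b _
      exact Continuous.intervalIntegrable (by fun_prop) _ _
  · intro a _
    exact Continuous.intervalIntegrable (by fun_prop) _ _

theorem Fej_mean {M : ℕ} (hM : 0 < M) : ∫ s in (-π)..π, Fej M s = 2 * π := by
  have h := Fej_pair (u := fun _ => 1) continuous_const M 0
  have hpi : (π : ℂ) ≠ 0 := by exact_mod_cast Real.pi_ne_zero
  have hM' : (M : ℂ) ≠ 0 := by exact_mod_cast hM.ne'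
  have h2 : ∀ a ∈ Finset.range M, ∑ b ∈ Finset.range M,
      Complex.exp (-(Complex.I * ((a : ℂ) - (b : ℂ)) * ((0 : ℝ) : ℂ))) *
        fourierCoef (fun _ => 1) ((b : ℤ) - (a : ℤ)) = 1 := by
    intro a ha
    rw [Finset.sum_eq_single a]
    · simp [fc_one_zero]
    · intro b _ hb
      rw [fc_one_ne, mul_zero]
      rw [sub_ne_zero]; exact_mod_cast hb
    · intro h; exact absurd ha h
  rw [Finset.sum_congr rfl h2] at h
  simp only [one_mul, sub_zero, Finset.sum_const, Finset.card_range, nsmul_eq_mul, mul_one] at h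
  rw [one_div_mul_cancel hM', intervalIntegral.integral_ofReal] at h
  have h3 : ∫ s in (-π)..π, Fej M s = ∫ s in (0:ℝ)..(2 * π), Fej M s := by
    have := (Fej_periodic M).intervalIntegral_add_eq (-π) 0
    rw [zero_add] at this
    rw [← this]; congr 1; ring
  rw [h3]
  have h4 : ((∫ s in (0:ℝ)..(2 * π), Fej M s : ℝ) : ℂ) = ((2 * π : ℝ) : ℂ) := by
    field_simp at h
    push_cast
    rw [h]
  exact_mod_cast h4

theorem cauchy_int {ρ : ℝ} (hρ : 0 < ρ) : ∫ s in (-π)..π, 1 / (s ^ 2 + ρ ^ 2) ≤ π / ρ := by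
  have e : ∀ s : ℝ, 1 / (s ^ 2 + ρ ^ 2) = (1 / ρ ^ 2) * (1 / (1 + (s / ρ) ^ 2)) := by
    intro s; field_simp; ring
  simp only [e]
  rw [intervalIntegral.integral_const_mul,
    intervalIntegral.integral_comp_div (fun x => 1 / (1 + x ^ 2)) hρ.ne', integral_one_div_one_add_sq]
  have h1 := Real.arctan_lt_pi_div_two (π / ρ)
  have h2 := Real.neg_pi_div_two_lt_arctan (-π / ρ)
  rw [smul_eq_mul]
  calc _ ≤ 1 / ρ ^ 2 * (ρ * π) := by
        gcongr
        linarith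
    _ = π / ρ := by field_simp

theorem LB1 {u : ℝ → ℂ} (hu : Continuous u) (hper : Function.Periodic u (2 * π))
    (hn : ∀ t, ‖u t‖ = 1) {M : ℕ} {ρ : ℝ} (hM : 0 < M) (hρ : 0 < ρ) (hMρ : 80 ≤ M * ρ) (t₀ : ℝ)
    (hloc : ∀ s, |s| ≤ ρ → ‖u (t₀ + s) - u t₀‖ ≤ 1 / 4) :
    (M : ℝ) / 2 ≤ ∑ a ∈ Finset.range M, ∑ b ∈ Finset.range M,
      ‖fourierCoef u ((b : ℤ) - (a : ℤ))‖ := by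
  have hMr : (0:ℝ) < M := by exact_mod_cast hM
  have hFc := Fej_continuous M
  have hpair := Fej_pair hu M t₀
  have hper2 : Function.Periodic (fun t => u t * (Fej M (t - t₀) : ℂ)) (2 * π) := by
    intro t
    have : t + 2 * π - t₀ = t - t₀ + 2 * π := by ring
    simp only [hper t, this, Fej_periodic M (t - t₀)]
  have hI : ∫ t in (0:ℝ)..(2 * π), u t * (Fej M (t - t₀) : ℂ) =
      ∫ s in (-π)..π, u (t₀ + s) * (Fej M s : ℂ) := by
    have h1 := hper2.intervalIntegral_add_eq 0 (t₀ - π)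
    rw [zero_add] at h1
    rw [h1]
    have h2 := intervalIntegral.integral_comp_add_left
      (fun t => u t * (Fej M (t - t₀) : ℂ)) t₀ (a := -π) (b := π)
    simp only [add_sub_cancel_left] at h2
    rw [h2]
    congr 1 <;> ring
  set J := ∫ s in (-π)..π, u (t₀ + s) * (Fej M s : ℂ) with hJ
  have hmean : ∫ s in (-π)..π, u t₀ * (Fej M s : ℂ) = u t₀ * (2 * π) := by
    rw [intervalIntegral.integral_const_mul, intervalIntegral.integral_ofReal, Fej_mean hM]
    push_cast; rfl
  have hdiff : J - u t₀ * (2 * π) = ∫ s in (-π)..π, (u (t₀ + s) - u t₀) * (Fej M s : ℂ) := by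
    rw [← hmean, hJ, ← intervalIntegral.integral_sub]
    · simp only [sub_mul]
    · exact Continuous.intervalIntegrable (by fun_prop) _ _
    · exact Continuous.intervalIntegrable (by fun_prop) _ _
  have hpi := Real.pi_pos
  have hbd : ‖J - u t₀ * (2 * π)‖ ≤ π := by
    rw [hdiff]
    have h1 : ∀ s ∈ Icc (-π) π, ‖(u (t₀ + s) - u t₀) * (Fej M s : ℂ)‖ ≤
        1 / 4 * Fej M s + (4 * π ^ 2 / M) * (1 / (s ^ 2 + ρ ^ 2)) := by
      intro s hs
      rw [norm_mul, Complex.norm_real, Real.norm_eq_abs, abs_of_nonneg (Fej_nonneg M s)]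
      have hF0 := Fej_nonneg M s
      by_cases hsr : |s| ≤ ρ
      · have h2 := hloc s hsr
        have h3 : 0 ≤ (4 * π ^ 2 / M) * (1 / (s ^ 2 + ρ ^ 2)) := by positivity
        have := mul_le_mul_of_nonneg_right h2 hF0
        linarith
      · push Not at hsr
        have h2 : ‖u (t₀ + s) - u t₀‖ ≤ 2 := by
          refine (norm_sub_le _ _).trans ?_
          rw [hn, hn]; norm_num
        have h3 := Fej_bound hM (abs_le.2 ⟨hs.1, hs.2⟩)
        have h4 : ρ ^ 2 ≤ s ^ 2 := by
          rw [← sq_abs s]; gcongr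
        have h5 : (s ^ 2 + ρ ^ 2) * Fej M s ≤ 2 * (π ^ 2 / M) := by nlinarith
        have h6 : 2 * Fej M s ≤ (4 * π ^ 2 / M) * (1 / (s ^ 2 + ρ ^ 2)) := by
          rw [mul_one_div, le_div_iff₀ (by positivity)]
          calc 2 * Fej M s * (s ^ 2 + ρ ^ 2) = 2 * ((s ^ 2 + ρ ^ 2) * Fej M s) := by ring
            _ ≤ 2 * (2 * (π ^ 2 / M)) := by linarith
            _ = _ := by ring
        have := mul_le_mul_of_nonneg_right h2 hF0
        linarith
    have hcd : Continuous fun s : ℝ => 1 / (s ^ 2 + ρ ^ 2) := by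
      apply Continuous.div continuous_const (by fun_prop)
      intro s; positivity
    have hIF : IntervalIntegrable (fun s => 1 / 4 * Fej M s) volume (-π) π :=
      Continuous.intervalIntegrable (by fun_prop) _ _
    have hIC : IntervalIntegrable (fun s : ℝ => (4 * π ^ 2 / M) * (1 / (s ^ 2 + ρ ^ 2)))
      volume (-π) π := Continuous.intervalIntegrable (by fun_prop) _ _
    refine (intervalIntegral.norm_integral_le_integral_norm (by linarith)).trans ?_
    refine (intervalIntegral.integral_mono_on (by linarith)
      (Continuous.intervalIntegrable (by fun_prop) _ _)
      (hIF.add hIC) h1).trans ?_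
    rw [intervalIntegral.integral_add hIF hIC, intervalIntegral.integral_const_mul,
      intervalIntegral.integral_const_mul, Fej_mean hM]
    have h7 := cauchy_int hρ
    have h8 : (4 * π ^ 2 / M) * ∫ s in (-π)..π, 1 / (s ^ 2 + ρ ^ 2) ≤ (4 * π ^ 2 / M) * (π / ρ) := by
      gcongr
    have h9 : (4 * π ^ 2 / M) * (π / ρ) ≤ π / 2 := by
      have e : (4 * π ^ 2 / M) * (π / ρ) = 4 * π ^ 2 * π / (M * ρ) := by field_simp
      rw [e, div_le_iff₀ (by positivity)]
      have : π < 3.15 := Real.pi_lt_d2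
      have h10 : π ^ 2 ≤ 10 := by nlinarith
      nlinarith
    linarith
  have hJn : π ≤ ‖J‖ := by
    have h1 : ‖u t₀ * (2 * π)‖ = 2 * π := by
      rw [norm_mul, hn, one_mul]
      simp [abs_of_pos hpi]
    have h2 := norm_sub_norm_le (u t₀ * (2 * π)) (u t₀ * (2 * π) - J)
    rw [sub_sub_cancel, norm_sub_rev] at h2
    linarith
  rw [hI] at hpair
  have h3 := congrArg norm hpair
  rw [norm_mul, norm_mul] at h3
  have h4 : ‖(1 / (2 * (π : ℂ)))‖ = (2 * π)⁻¹ := by simp [abs_of_pos Real.pi_pos]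
  have h5 : ‖(1 / (M : ℂ))‖ = (M : ℝ)⁻¹ := by simp
  rw [h4, h5] at h3
  have h6 : (1 : ℝ) / 2 ≤ (2 * π)⁻¹ * ‖J‖ := by
    calc (1 : ℝ) / 2 = (2 * π)⁻¹ * π := by field_simp
      _ ≤ _ := by gcongr
  rw [h3] at h6
  have h7 : ‖∑ a ∈ Finset.range M, ∑ b ∈ Finset.range M,
      Complex.exp (-(Complex.I * ((a : ℂ) - (b : ℂ)) * (t₀ : ℂ))) *
        fourierCoef u ((b : ℤ) - (a : ℤ))‖ ≤ ∑ a ∈ Finset.range M, ∑ b ∈ Finset.range M,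
      ‖fourierCoef u ((b : ℤ) - (a : ℤ))‖ := by
    refine (norm_sum_le _ _).trans (Finset.sum_le_sum fun a _ => ?_)
    refine (norm_sum_le _ _).trans (Finset.sum_le_sum fun b _ => ?_)
    rw [norm_mul]
    have : -(Complex.I * ((a : ℂ) - (b : ℂ)) * (t₀ : ℂ)) =
        ((-((a - b) * t₀) : ℝ) : ℂ) * Complex.I := by push_cast; ring
    rw [this, Complex.norm_exp_ofReal_mul_I, one_mul]
  have h8 := h6.trans (mul_le_mul_of_nonneg_left h7 (inv_nonneg.2 hMr.le))
  rw [inv_mul_eq_div, le_div_iff₀ hMr] at h8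
  linarith

theorem exp_I_sub_le (x y : ℝ) :
    ‖Complex.exp (Complex.I * (x : ℂ)) - Complex.exp (Complex.I * (y : ℂ))‖ ≤ |x - y| := by
  have h : Complex.exp (Complex.I * (x : ℂ)) - Complex.exp (Complex.I * (y : ℂ)) =
      Complex.exp (Complex.I * (y : ℂ)) * (Complex.exp (Complex.I * ((x - y : ℝ) : ℂ)) - 1) := by
    rw [mul_sub, ← Complex.exp_add, mul_one]
    congr 2; push_cast; ring
  rw [h, norm_mul]
  have h2 : ‖Complex.exp (Complex.I * (y : ℂ))‖ = 1 := by
    rw [mul_comm]; exact Complex.norm_exp_ofReal_mul_I y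
  rw [h2, one_mul]
  exact Real.norm_exp_I_mul_ofReal_sub_one_le

theorem taylor1 {φ φ' : ℝ → ℝ} (hd : ∀ t, HasDerivAt φ (φ' t) t) {C α : ℝ} (hα : 0 < α)
    (hC : 0 < C) (hH : ∀ s t, |φ' s - φ' t| ≤ C * |s - t| ^ α) (t₀ s : ℝ) :
    |φ (t₀ + s) - φ t₀ - φ' t₀ * s| ≤ C * |s| ^ α * |s| := by
  have key := Convex.norm_image_sub_le_of_norm_hasDerivWithin_le
    (f := fun x => φ (t₀ + x) - φ' t₀ * x) (f' := fun x => φ' (t₀ + x) - φ' t₀)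
    (s := uIcc 0 s) (x := 0) (y := s) (C := C * |s| ^ α) ?_ ?_ (convex_uIcc 0 s)
    left_mem_uIcc right_mem_uIcc
  · simp only [mul_zero, sub_zero, add_zero, Real.norm_eq_abs] at key
    convert key using 2
    ring
  · intro x _
    have h1 := (hd (t₀ + x)).comp_const_add t₀ x
    have h2 := (hasDerivAt_id x).const_mul (φ' t₀)
    rw [mul_one] at h2
    exact (h1.sub h2).hasDerivWithinAt
  · intro x hx
    refine (hH _ _).trans ?_
    rw [add_sub_cancel_left]
    have : |x| ≤ |s| := by
      have := abs_sub_left_of_mem_uIcc hx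
      simpa using this
    gcongr

theorem LBpt {φ φ' : ℝ → ℝ} (hd : ∀ t, HasDerivAt φ (φ' t) t)
    (hper : ∀ t, φ (t + 2 * π) = φ t) {C α : ℝ} (hα : 0 < α)
    (hC : 0 < C) (hH : ∀ s t, |φ' s - φ' t| ≤ C * |s - t| ^ α) {lam ρ : ℝ} (hρ : 0 < ρ)
    (hlr : |lam| * (C * ρ ^ α * ρ) ≤ 1 / 4) {M : ℕ} (hMρ : 80 ≤ M * ρ) (hM : 0 < M) (t₀ : ℝ) (ξ : ℤ)
    (hξ : lam * φ' t₀ = ξ) :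
    (M : ℝ) / 2 ≤ ∑ a ∈ Finset.range M, ∑ b ∈ Finset.range M,
      ‖fourierCoef (fun t => Complex.exp (Complex.I * (lam : ℂ) * (φ t : ℂ)))
        (((b : ℤ) - (a : ℤ)) + ξ)‖ := by
  have hcφ : Continuous φ := continuous_iff_continuousAt.2 fun t => (hd t).continuousAt
  have e : ∀ t : ℝ, Complex.exp (Complex.I * ((-ξ : ℤ) : ℂ) * (t : ℂ)) *
      Complex.exp (Complex.I * (lam : ℂ) * (φ t : ℂ)) =
      Complex.exp (Complex.I * ((lam * φ t - ξ * t : ℝ) : ℂ)) := by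
    intro t
    rw [← Complex.exp_add]; congr 1; push_cast; ring
  have h := LB1 (u := fun t : ℝ => Complex.exp (Complex.I * ((-ξ : ℤ) : ℂ) * (t : ℂ)) *
      Complex.exp (Complex.I * (lam : ℂ) * (φ t : ℂ))) (by fun_prop) ?_ ?_ hM hρ hMρ t₀ ?_
  · simpa only [fc_shift, sub_neg_eq_add] using h
  · intro t
    simp only [hper]
    congr 1
    rw [Complex.exp_eq_exp_iff_exists_int]
    refine ⟨-ξ, ?_⟩
    push_cast; ring
  · intro t
    rw [e, mul_comm]; exact Complex.norm_exp_ofReal_mul_I _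
  · intro s hs
    rw [e, e]
    refine (exp_I_sub_le _ _).trans ?_
    have e2 : lam * φ (t₀ + s) - ξ * (t₀ + s) - (lam * φ t₀ - ξ * t₀) =
        lam * (φ (t₀ + s) - φ t₀ - φ' t₀ * s) := by
      rw [← hξ]; ring
    rw [e2, abs_mul]
    refine le_trans ?_ hlr
    gcongr
    refine (taylor1 hd hα hC hH t₀ s).trans ?_
    gcongr

theorem LBsum {w : ℤ → ℝ≥0∞} {p : ℝ} (hp : 1 ≤ p) {M : ℕ} (hM : 0 < M) (Ξ : Finset ℤ)
    (h : ∀ ξ ∈ Ξ, ENNReal.ofReal ((M : ℝ) / 2) ≤ ∑ a ∈ Finset.range M, ∑ b ∈ Finset.range M,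
      w (((b : ℤ) - (a : ℤ)) + ξ)) :
    ENNReal.ofReal ((Ξ.card : ℝ) * (1 / (2 * M)) ^ p) ≤ ∑' k, w k ^ p := by
  set Q := ∑' k, w k ^ p with hQ
  have h1 : ∀ ξ ∈ Ξ, ENNReal.ofReal (((M : ℝ) / 2) ^ p) ≤
      ((M * M : ℕ) : ℝ≥0∞) ^ (p - 1) * ∑ a ∈ Finset.range M, ∑ b ∈ Finset.range M,
      w (((b : ℤ) - (a : ℤ)) + ξ) ^ p := by
    intro ξ hξ
    have := ENNReal.rpow_le_rpow (h ξ hξ) (by linarith : 0 ≤ p)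
    rw [ENNReal.ofReal_rpow_of_nonneg (by positivity) (by linarith)] at this
    refine this.trans ?_
    rw [← Finset.sum_product', ← Finset.sum_product']
    have h2 := ENNReal.rpow_sum_le_const_mul_sum_rpow (Finset.range M ×ˢ Finset.range M)
      (fun x : ℕ × ℕ => w (((x.2 : ℤ) - (x.1 : ℤ)) + ξ)) hp
    simpa only [Finset.card_product, Finset.card_range] using h2
  have h2 : (Ξ.card : ℝ≥0∞) * ENNReal.ofReal (((M : ℝ) / 2) ^ p) ≤
      ((M * M : ℕ) : ℝ≥0∞) ^ (p - 1) * (((M * M : ℕ) : ℝ≥0∞) * Q) := by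
    calc (Ξ.card : ℝ≥0∞) * ENNReal.ofReal (((M : ℝ) / 2) ^ p)
        = ∑ ξ ∈ Ξ, ENNReal.ofReal (((M : ℝ) / 2) ^ p) := by simp
      _ ≤ ∑ ξ ∈ Ξ, ((M * M : ℕ) : ℝ≥0∞) ^ (p - 1) * ∑ a ∈ Finset.range M, ∑ b ∈ Finset.range M,
            w (((b : ℤ) - (a : ℤ)) + ξ) ^ p := Finset.sum_le_sum h1
      _ = ((M * M : ℕ) : ℝ≥0∞) ^ (p - 1) * ∑ a ∈ Finset.range M, ∑ b ∈ Finset.range M,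
            ∑ ξ ∈ Ξ, w (((b : ℤ) - (a : ℤ)) + ξ) ^ p := by
          rw [← Finset.mul_sum, Finset.sum_comm]
          congr 1
          refine Finset.sum_congr rfl fun a _ => ?_
          rw [Finset.sum_comm]
      _ ≤ ((M * M : ℕ) : ℝ≥0∞) ^ (p - 1) * ∑ a ∈ Finset.range M, ∑ b ∈ Finset.range M, Q := by
          gcongr with a _ b _
          refine (ENNReal.sum_le_tsum Ξ).trans ?_
          rw [hQ]
          exact ((Equiv.addLeft ((b : ℤ) - (a : ℤ))).tsum_eq (fun k => w k ^ p)).le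
      _ = _ := by
          simp only [Finset.sum_const, Finset.card_range, nsmul_eq_mul]
          push_cast
          ring
  have hMr : (0 : ℝ) < M := by exact_mod_cast hM
  have e3 : ((M * M : ℕ) : ℝ≥0∞) ^ (p - 1) * (((M * M : ℕ) : ℝ≥0∞) * Q) =
      ENNReal.ofReal (((M : ℝ) * M) ^ p) * Q := by
    rw [← mul_assoc]
    congr 1
    have e4 : ((M * M : ℕ) : ℝ≥0∞) = ENNReal.ofReal ((M : ℝ) * M) := by
      rw [← ENNReal.ofReal_natCast]; push_cast; rfl
    rw [e4, ENNReal.ofReal_rpow_of_pos (by positivity), ← ENNReal.ofReal_mul (by positivity)]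
    congr 1
    rw [Real.rpow_sub_one (by positivity)]
    field_simp
  rw [e3] at h2
  have e5 : (Ξ.card : ℝ≥0∞) * ENNReal.ofReal (((M : ℝ) / 2) ^ p) =
      ENNReal.ofReal (((M : ℝ) * M) ^ p) * ENNReal.ofReal ((Ξ.card : ℝ) * (1 / (2 * M)) ^ p) := by
    rw [← ENNReal.ofReal_mul (by positivity), ← ENNReal.ofReal_natCast,
      ← ENNReal.ofReal_mul (by positivity)]
    congr 1
    have : (M : ℝ) / 2 = (M * M) * (1 / (2 * M)) := by field_simp
    rw [this, Real.mul_rpow (by positivity) (by positivity)]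
    ring
  rw [e5] at h2
  have hpos : 0 < ENNReal.ofReal (((M : ℝ) * M) ^ p) := ENNReal.ofReal_pos.2 (by positivity)
  exact (ENNReal.mul_le_mul_iff_right hpos.ne' ENNReal.ofReal_ne_top).1 h2

theorem LB {φ φ' : ℝ → ℝ} (hd : ∀ t, HasDerivAt φ (φ' t) t) (hc : Continuous φ')
    (hper : ∀ t, φ (t + 2 * π) = φ t) {C α : ℝ} (hα : 0 < α)
    (hC : 0 < C) (hH : ∀ s t, |φ' s - φ' t| ≤ C * |s - t| ^ α) {t₁ t₂ : ℝ}
    (hne : φ' t₁ ≠ φ' t₂) {p : ℝ} (hp : 1 ≤ p) :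
    ∃ c : ℝ, 0 < c ∧ ∃ Λ : ℝ, 2 ≤ Λ ∧ ∀ lam : ℝ, Λ ≤ |lam| →
      ENNReal.ofReal (c * |lam| ^ (1 / p - 1 / (1 + α))) ≤
        ApNorm p (fun t => Complex.exp (Complex.I * (lam : ℂ) * (φ t : ℂ))) := by
  set d := |φ' t₁ - φ' t₂| with hdd
  have hd0 : 0 < d := abs_pos.2 (sub_ne_zero.2 hne)
  have hp0 : 0 < p := by linarith
  refine ⟨(d / 2) ^ (1 / p) * (4 * C) ^ (-(1 / (1 + α))) / 162, by positivity,
    max 2 (max (2 / d) (1 / (4 * C))), le_max_left _ _, ?_⟩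
  intro lam hlam
  have hl2 : 2 ≤ |lam| := (le_max_left _ _).trans hlam
  have hld : 2 / d ≤ |lam| := ((le_max_left _ _).trans (le_max_right _ _)).trans hlam
  have hlC : 1 / (4 * C) ≤ |lam| := ((le_max_right _ _).trans (le_max_right _ _)).trans hlam
  rw [div_le_iff₀ hd0] at hld
  rw [div_le_iff₀ (by positivity)] at hlC
  have hl0 : 0 < |lam| := by linarith
  set ρ := (|lam| * (4 * C)) ^ (-(1 / (1 + α))) with hρ
  have hρ0 : 0 < ρ := by positivity
  have hρ1 : ρ ≤ 1 := Real.rpow_le_one_of_one_le_of_nonpos hlC (by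
    rw [neg_nonpos]; positivity)
  set M := ⌈80 / ρ⌉₊ with hM
  have hM1 : 80 ≤ M * ρ := by
    rw [← div_le_iff₀ hρ0]; exact Nat.le_ceil _
  have hM2 : (M : ℝ) ≤ 81 / ρ := by
    have h1 : (M : ℝ) < 80 / ρ + 1 := Nat.ceil_lt_add_one (by positivity)
    have h2 : 1 ≤ 1 / ρ := by rw [le_div_iff₀ hρ0]; linarith
    have h3 : 81 / ρ = 80 / ρ + 1 / ρ := by ring
    linarith
  have hM0 : 0 < M := Nat.ceil_pos.2 (by positivity)
  have hlr : |lam| * (C * ρ ^ α * ρ) ≤ 1 / 4 := by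
    have h1 : ρ ^ α * ρ = (|lam| * (4 * C))⁻¹ := by
      rw [← Real.rpow_add_one hρ0.ne', hρ, ← Real.rpow_mul (by positivity), ← Real.rpow_neg_one]
      congr 1; field_simp; ring
    have h2 : |lam| * (C * ρ ^ α * ρ) = |lam| * C * (ρ ^ α * ρ) := by ring
    rw [h2, h1]
    apply le_of_eq; field_simp
  set lo := min (lam * φ' t₁) (lam * φ' t₂) with hlo
  set hi := max (lam * φ' t₁) (lam * φ' t₂) with hhi
  have hdiff : hi - lo = |lam| * d := by
    rw [hhi, hlo, max_sub_min_eq_abs, ← mul_sub, abs_mul, hdd, abs_sub_comm (φ' t₂)]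
  set Ξ := Finset.Icc ⌈lo⌉ ⌊hi⌋ with hΞ
  have hcard : |lam| * d / 2 ≤ (Ξ.card : ℝ) := by
    rw [hΞ, Int.card_Icc]
    have h1 := Int.ceil_lt_add_one lo
    have h2 := Int.lt_floor_add_one hi
    have h3 : ((⌊hi⌋ + 1 - ⌈lo⌉ : ℤ) : ℝ) ≤ ((⌊hi⌋ + 1 - ⌈lo⌉).toNat : ℝ) := by
      exact_mod_cast Int.self_le_toNat _
    push_cast at h3
    linarith
  have hsum := LBsum (w := fun k => (‖fourierCoef (fun t => Complex.exp (Complex.I * (lam : ℂ) *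
      (φ t : ℂ))) k‖₊ : ℝ≥0∞)) hp hM0 Ξ ?_
  · have h4 : ENNReal.ofReal (((Ξ.card : ℝ) * (1 / (2 * M)) ^ p) ^ (1 / p)) ≤
        ApNorm p (fun t => Complex.exp (Complex.I * (lam : ℂ) * (φ t : ℂ))) := by
      rw [ApNorm, ← ENNReal.ofReal_rpow_of_nonneg (by positivity) (by positivity)]
      exact ENNReal.rpow_le_rpow hsum (by positivity)
    refine le_trans (ENNReal.ofReal_le_ofReal ?_) h4
    have e7 : ((Ξ.card : ℝ) * (1 / (2 * M)) ^ p) ^ (1 / p) =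
        (Ξ.card : ℝ) ^ (1 / p) * (1 / (2 * M)) := by
      rw [Real.mul_rpow (by positivity) (by positivity), ← Real.rpow_mul (by positivity),
        mul_one_div_cancel hp0.ne', Real.rpow_one]
    rw [e7]
    calc (d / 2) ^ (1 / p) * (4 * C) ^ (-(1 / (1 + α))) / 162 * |lam| ^ (1 / p - 1 / (1 + α))
        = (|lam| * d / 2) ^ (1 / p) * (ρ / 162) := by
          have e8 : ρ = |lam| ^ (-(1 / (1 + α))) * (4 * C) ^ (-(1 / (1 + α))) := by
            rw [hρ, Real.mul_rpow (abs_nonneg _) (by positivity)]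
          have e9 : (|lam| * d / 2) ^ (1 / p) = |lam| ^ (1 / p) * (d / 2) ^ (1 / p) := by
            rw [mul_div_assoc, Real.mul_rpow (abs_nonneg _) (by positivity)]
          rw [sub_eq_add_neg, Real.rpow_add hl0, e8, e9]
          ring
      _ ≤ (Ξ.card : ℝ) ^ (1 / p) * (1 / (2 * M)) := by
          have hMr : (0:ℝ) < M := by exact_mod_cast hM0
          refine mul_le_mul (Real.rpow_le_rpow (by positivity) hcard (by positivity)) ?_
            (by positivity) (by positivity)
          rw [le_div_iff₀ (by positivity)]
          rw [le_div_iff₀ hρ0] at hM2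
          linarith
  · intro ξ hξ
    rw [hΞ, Finset.mem_Icc, Int.ceil_le, Int.le_floor] at hξ
    have h5 : (ξ : ℝ) ∈ (fun t => lam * φ' t) '' (uIcc t₁ t₂) := by
      apply intermediate_value_uIcc (Continuous.continuousOn (by fun_prop))
      exact ⟨hξ.1, hξ.2⟩
    obtain ⟨t₀, _, ht₀⟩ := h5
    have h6 := ENNReal.ofReal_le_ofReal
      (LBpt hd hper hα hC hH hρ0 hlr hM1 hM0 t₀ ξ ht₀)
    refine h6.trans ?_
    rw [ENNReal.ofReal_sum_of_nonneg (fun _ _ => by positivity)]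
    refine Finset.sum_le_sum fun a _ => ?_
    rw [ENNReal.ofReal_sum_of_nonneg (fun _ _ => by positivity)]
    refine Finset.sum_le_sum fun b _ => ?_
    rw [ofReal_norm]; rfl

theorem LB2 {φ : ℝ → ℝ} (hc : Continuous φ) {p : ℝ} (hp : 1 ≤ p) (hp2 : p < 2) (lam : ℝ) :
    ENNReal.ofReal 1 ≤ ApNorm p (fun t => Complex.exp (Complex.I * (lam : ℂ) * (φ t : ℂ))) := by
  set f : ℝ → ℂ := fun t => Complex.exp (Complex.I * (lam : ℂ) * (φ t : ℂ)) with hf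
  have hfc : Continuous f := by fun_prop
  have hn : ∀ t, ‖f t‖ = 1 := by
    intro t
    have : Complex.I * (lam : ℂ) * (φ t : ℂ) = ((lam * φ t : ℝ) : ℂ) * Complex.I := by
      push_cast; ring
    rw [hf]; beta_reduce
    rw [this]; exact Complex.norm_exp_ofReal_mul_I _
  have hpars := fc_parseval hfc
  have hpi := Real.pi_pos
  have h1 : (2 * π)⁻¹ * ∫ t in (0:ℝ)..(2 * π), ‖f t‖ ^ 2 = 1 := by
    simp only [hn, one_pow, intervalIntegral.integral_const, smul_eq_mul, sub_zero, mul_one]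
    field_simp
  rw [h1] at hpars
  have hle : ∀ k, ‖fourierCoef f k‖ ≤ 1 := by
    intro k
    refine (fc_norm_le k).trans ?_
    simp only [hn, intervalIntegral.integral_const, smul_eq_mul, sub_zero, mul_one]
    apply le_of_eq; field_simp
  have h2 : (1 : ℝ≥0∞) ≤ ∑' k : ℤ, ((‖fourierCoef f k‖₊ : ℝ≥0∞) ^ p) := by
    have h3 := ENNReal.ofReal_tsum_of_nonneg (fun k => sq_nonneg ‖fourierCoef f k‖) hpars.summable
    rw [hpars.tsum_eq, ENNReal.ofReal_one] at h3
    rw [h3]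
    refine ENNReal.tsum_le_tsum fun k => ?_
    rw [ENNReal.ofReal_pow (norm_nonneg _), ofReal_norm, ← ENNReal.rpow_natCast]
    refine ENNReal.rpow_le_rpow_of_exponent_ge ?_ (by simpa using hp2.le)
    rw [← ofReal_norm]
    exact ENNReal.ofReal_le_one.2 (hle k)
  rw [ENNReal.ofReal_one, ApNorm]
  exact ENNReal.one_le_rpow h2 (by positivity)

/-- The Cantor-type function with ratio θ. -/
structure Cant (θ : ℝ) (S : ℝ → ℝ) : Prop where
  pos : 0 < θ
  lt : θ < 1 / 2
  le0 : ∀ x ≤ 0, S x = 0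
  ge1 : ∀ x, 1 ≤ x → S x = 1
  nonneg : ∀ x, 0 ≤ S x
  le1 : ∀ x, S x ≤ 1
  eq : ∀ x, S x = 1 / 2 * (S (x / θ) + S ((x - 1 + θ) / θ))

noncomputable def Sn (θ : ℝ) : ℕ → ℝ → ℝ
  | 0 => fun x => max 0 (min 1 x)
  | n + 1 => fun x => 1 / 2 * (Sn θ n (x / θ) + Sn θ n ((x - 1 + θ) / θ))

theorem Sn_props {θ : ℝ} (h0 : 0 < θ) (h2 : θ < 1 / 2) (n : ℕ) :
    (∀ x ≤ 0, Sn θ n x = 0) ∧ (∀ x, 1 ≤ x → Sn θ n x = 1) ∧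
      (∀ x, 0 ≤ Sn θ n x) ∧ (∀ x, Sn θ n x ≤ 1) := by
  induction n with
  | zero =>
    refine ⟨fun x hx => ?_, fun x hx => ?_, fun x => ?_, fun x => ?_⟩ <;> simp only [Sn]
    · exact max_eq_left ((min_le_right _ _).trans hx)
    · rw [min_eq_left hx]; norm_num
    · exact le_max_left _ _
    · exact max_le zero_le_one (min_le_left _ _)
  | succ n ih =>
    obtain ⟨a, b, c, d⟩ := ih
    refine ⟨fun x hx => ?_, fun x hx => ?_, fun x => ?_, fun x => ?_⟩ <;> simp only [Sn]
    · rw [a _ (div_nonpos_of_nonpos_of_nonneg hx h0.le),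
        a _ (div_nonpos_of_nonpos_of_nonneg (by linarith) h0.le)]; norm_num
    · rw [b, b]; norm_num
      · rw [le_div_iff₀ h0]; linarith
      · rw [le_div_iff₀ h0]; linarith
    · have := c (x / θ); have := c ((x - 1 + θ) / θ); linarith
    · have := d (x / θ); have := d ((x - 1 + θ) / θ); linarith

theorem Sn_diff {θ : ℝ} (h0 : 0 < θ) (h2 : θ < 1 / 2) (n : ℕ) :
    ∀ x, |Sn θ n x - Sn θ (n + 1) x| ≤ 2 / 2 / 2 ^ n := by
  induction n with
  | zero =>
    intro x
    obtain ⟨-, -, c, d⟩ := Sn_props h0 h2 0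
    obtain ⟨-, -, c', d'⟩ := Sn_props h0 h2 1
    have := c x; have := d x; have := c' x; have := d' x
    rw [abs_le]; constructor <;> norm_num <;> linarith
  | succ n ih =>
    intro x
    obtain ⟨a, b, -, -⟩ := Sn_props h0 h2 n
    obtain ⟨a', b', -, -⟩ := Sn_props h0 h2 (n + 1)
    have e : Sn θ (n + 1) x - Sn θ (n + 1 + 1) x =
      1 / 2 * (Sn θ n (x / θ) - Sn θ (n + 1) (x / θ)) +
      1 / 2 * (Sn θ n ((x - 1 + θ) / θ) - Sn θ (n + 1) ((x - 1 + θ) / θ)) := by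
      have e1 : Sn θ (n + 1) x = 1 / 2 * (Sn θ n (x / θ) + Sn θ n ((x - 1 + θ) / θ)) := rfl
      have e2 : Sn θ (n + 1 + 1) x =
        1 / 2 * (Sn θ (n + 1) (x / θ) + Sn θ (n + 1) ((x - 1 + θ) / θ)) := rfl
      rw [e1, e2]; ring
    have e3 : (2:ℝ) / 2 / 2 ^ (n + 1) = 1 / 2 * (2 / 2 / 2 ^ n) := by
      rw [pow_succ]; field_simp
    rw [e, e3]
    rcases le_total x (1 - θ) with hx | hx
    · have h : (x - 1 + θ) / θ ≤ 0 := div_nonpos_of_nonpos_of_nonneg (by linarith) h0.le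
      rw [a _ h, a' _ h, sub_zero, mul_zero, add_zero, abs_mul, abs_of_pos (by norm_num)]
      have := ih (x / θ)
      gcongr
    · have h : 1 ≤ x / θ := by rw [le_div_iff₀ h0]; linarith
      rw [b _ h, b' _ h, sub_self, mul_zero, zero_add, abs_mul, abs_of_pos (by norm_num)]
      have := ih ((x - 1 + θ) / θ)
      gcongr

theorem exists_cant {θ : ℝ} (h0 : 0 < θ) (h2 : θ < 1 / 2) : ∃ S, Cant θ S := by
  have hl : ∀ x, ∃ l, Filter.Tendsto (fun n => Sn θ n x) Filter.atTop (nhds l) := fun x =>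
    cauchySeq_tendsto_of_complete
      (cauchySeq_of_le_geometric_two (C := 2) fun n => by
        rw [Real.dist_eq]; exact Sn_diff h0 h2 n x)
  choose S hS using hl
  refine ⟨S, h0, h2, fun x hx => ?_, fun x hx => ?_, fun x => ?_, fun x => ?_, fun x => ?_⟩
  · exact tendsto_nhds_unique (hS x) (by
      simp only [fun n => (Sn_props h0 h2 n).1 x hx]; exact tendsto_const_nhds)
  · exact tendsto_nhds_unique (hS x) (by
      simp only [fun n => (Sn_props h0 h2 n).2.1 x hx]; exact tendsto_const_nhds)
  · exact ge_of_tendsto' (hS x) fun n => (Sn_props h0 h2 n).2.2.1 x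
  · exact le_of_tendsto' (hS x) fun n => (Sn_props h0 h2 n).2.2.2 x
  · have h3 := (hS x).comp (Filter.tendsto_add_atTop_nat 1)
    exact tendsto_nhds_unique h3 (((hS (x / θ)).add (hS ((x - 1 + θ) / θ))).const_mul (1 / 2))

section
variable {θ : ℝ} {S : ℝ → ℝ}

theorem Cant.left (h : Cant θ S) {x : ℝ} (hx : x ≤ 1 - θ) : S x = 1 / 2 * S (x / θ) := by
  rw [h.eq, h.le0 ((x - 1 + θ) / θ) (div_nonpos_of_nonpos_of_nonneg (by linarith) h.pos.le),
    add_zero]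

theorem Cant.right (h : Cant θ S) {x : ℝ} (hx : θ ≤ x) :
    S x = 1 / 2 * (1 + S ((x - 1 + θ) / θ)) := by
  rw [h.eq, h.ge1 (x / θ) (by rw [le_div_iff₀ h.pos]; linarith)]

theorem Cant.mod (h : Cant θ S) (m : ℕ) : ∀ x y, |x - y| ≤ (1 - 2 * θ) * θ ^ m →
    |S x - S y| ≤ (1 / 2) ^ m := by
  have h0 := h.pos
  have h2 := h.lt
  induction m with
  | zero =>
    intro x y _
    have := h.nonneg x; have := h.nonneg y; have := h.le1 x; have := h.le1 y
    rw [abs_le]; constructor <;> norm_num <;> linarith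
  | succ m ih =>
    intro x y hxy
    have h3 : |x - y| / θ ≤ (1 - 2 * θ) * θ ^ m := by
      rw [div_le_iff₀ h0]; rw [pow_succ] at hxy; linarith
    have h4 : |x - y| ≤ 1 - 2 * θ := by
      refine hxy.trans ?_
      have : θ ^ (m + 1) ≤ 1 := pow_le_one₀ h0.le (by linarith)
      nlinarith
    by_cases hc : x ≤ 1 - θ ∧ y ≤ 1 - θ
    · rw [h.left hc.1, h.left hc.2, ← mul_sub, abs_mul, pow_succ', abs_of_pos (by norm_num)]
      have : |x / θ - y / θ| ≤ (1 - 2 * θ) * θ ^ m := by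
        rw [← sub_div, abs_div, abs_of_pos h0]; exact h3
      have := ih _ _ this
      gcongr
    · have hx : θ ≤ x ∧ θ ≤ y := by
        rw [abs_le] at h4
        by_contra hcon
        apply hc
        constructor
        · by_contra h5
          apply hcon; constructor <;> linarith
        · by_contra h5
          apply hcon; constructor <;> linarith
      rw [h.right hx.1, h.right hx.2, ← mul_sub, abs_mul, pow_succ', abs_of_pos (by norm_num),
        add_sub_add_left_eq_sub]
      have : |(x - 1 + θ) / θ - (y - 1 + θ) / θ| ≤ (1 - 2 * θ) * θ ^ m := by
        have e : (x - 1 + θ) / θ - (y - 1 + θ) / θ = (x - y) / θ := by ring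
        rw [e, abs_div, abs_of_pos h0]
        exact h3
      have := ih _ _ this
      gcongr

theorem Cant.holder (h : Cant θ S) {α : ℝ} (hα : 0 < α) (hθ : θ ^ α = 1 / 2) (x y : ℝ) :
    |S x - S y| ≤ (1 / ((1 - 2 * θ) * θ)) ^ α * |x - y| ^ α := by
  have h0 := h.pos
  have h2 := h.lt
  have h3 : 0 < 1 - 2 * θ := by linarith
  rcases eq_or_ne x y with rfl | hne
  · simp; positivity
  have hd : 0 < |x - y| := abs_pos.2 (sub_ne_zero.2 hne)
  rw [← Real.mul_rpow (by positivity) hd.le]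
  rcases lt_or_ge (1 - 2 * θ) |x - y| with hl | hl
  · have h4 : |S x - S y| ≤ 1 := by
      have := h.nonneg x; have := h.nonneg y; have := h.le1 x; have := h.le1 y
      exact abs_le.2 ⟨by linarith, by linarith⟩
    refine h4.trans (Real.one_le_rpow ?_ hα.le)
    rw [one_div, inv_mul_eq_div, le_div_iff₀ (by positivity)]
    nlinarith
  · obtain ⟨m, hm1, hm2⟩ := exists_nat_pow_near_of_lt_one (x := |x - y| / (1 - 2 * θ)) (y := θ)
      (by positivity) (by rw [div_le_one h3]; exact hl) h0 (by linarith)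
    rw [div_le_iff₀ h3] at hm2
    rw [lt_div_iff₀ h3] at hm1
    refine (h.mod m x y (by linarith)).trans ?_
    rw [← hθ, ← Real.rpow_natCast, ← Real.rpow_mul h0.le, mul_comm α, Real.rpow_mul h0.le,
      Real.rpow_natCast]
    apply Real.rpow_le_rpow (by positivity) _ hα.le
    rw [one_div, inv_mul_eq_div, le_div_iff₀ (by positivity)]
    rw [pow_succ] at hm1
    linarith

theorem Cant.continuous (h : Cant θ S) : Continuous S := by
  rw [Metric.continuous_iff]
  intro y ε hε
  have h0 := h.pos
  have h2 := h.lt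
  obtain ⟨m, hm⟩ := exists_pow_lt_of_lt_one hε (by norm_num : (1:ℝ) / 2 < 1)
  refine ⟨(1 - 2 * θ) * θ ^ m, mul_pos (by linarith) (by positivity), fun x hx => ?_⟩
  rw [Real.dist_eq] at *
  exact (h.mod m x y hx.le).trans_lt hm

theorem Cant.mid (h : Cant θ S) {x : ℝ} (hx : θ ≤ x) (hx2 : x ≤ 1 - θ) : S x = 1 / 2 := by
  rw [h.left hx2, h.ge1 (x / θ) (by rw [le_div_iff₀ h.pos]; linarith)]; norm_num

theorem Cant.locconst (h : Cant θ S) : ∀ u v : ℝ, u < v →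
    ∃ u' v' c : ℝ, u ≤ u' ∧ u' < v' ∧ v' ≤ v ∧ ∀ t ∈ Icc u' v', S t = c := by
  have h0 := h.pos
  have h2 := h.lt
  have out : ∀ u v : ℝ, u < v → (u < 0 ∨ 1 < v) →
      ∃ u' v' c : ℝ, u ≤ u' ∧ u' < v' ∧ v' ≤ v ∧ ∀ t ∈ Icc u' v', S t = c := by
    intro u v huv hc
    rcases hc with hc | hc
    · exact ⟨u, min v 0, 0, le_rfl, lt_min huv hc, min_le_left _ _,
        fun t ht => h.le0 t (ht.2.trans (min_le_right _ _))⟩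
    · exact ⟨max u 1, v, 1, le_max_left _ _, max_lt huv hc, le_rfl,
        fun t ht => h.ge1 t ((le_max_right _ _).trans ht.1)⟩
  have main : ∀ n : ℕ, ∀ u v : ℝ, θ ^ n < v - u →
      ∃ u' v' c : ℝ, u ≤ u' ∧ u' < v' ∧ v' ≤ v ∧ ∀ t ∈ Icc u' v', S t = c := by
    intro n
    induction n with
    | zero =>
      intro u v huv
      rw [pow_zero] at huv
      apply out u v (by linarith)
      by_contra hcon
      push Not at hcon
      linarith
    | succ n ih =>
      intro u v huv
      have hp : 0 < θ ^ (n + 1) := by positivity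
      have huv' : θ ^ n < v / θ - u / θ := by
        rw [← sub_div, lt_div_iff₀ h0, ← pow_succ]; exact huv
      by_cases hc : v ≤ 1 - θ
      · obtain ⟨u', v', c, h3, h4, h5, h6⟩ := ih _ _ huv'
        rw [div_le_iff₀ h0] at h3
        rw [le_div_iff₀ h0] at h5
        refine ⟨u' * θ, v' * θ, 1 / 2 * c, h3, by gcongr, h5, fun t ht => ?_⟩
        rw [h.left (ht.2.trans (h5.trans hc)), h6]
        exact ⟨by rw [le_div_iff₀ h0]; exact ht.1, by rw [div_le_iff₀ h0]; exact ht.2⟩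
      by_cases hc2 : θ ≤ u
      · have huv2 : θ ^ n < (v - 1 + θ) / θ - (u - 1 + θ) / θ := by
          rw [← sub_div, lt_div_iff₀ h0, ← pow_succ]; linarith
        obtain ⟨u', v', c, h3, h4, h5, h6⟩ := ih _ _ huv2
        rw [div_le_iff₀ h0] at h3
        rw [le_div_iff₀ h0] at h5
        have h7 : u' * θ < v' * θ := by gcongr
        refine ⟨u' * θ + 1 - θ, v' * θ + 1 - θ, 1 / 2 * (1 + c), by linarith, by linarith,
          by linarith, fun t ht => ?_⟩
        rw [h.right (by linarith [ht.1]), h6]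
        exact ⟨by rw [le_div_iff₀ h0]; linarith [ht.1], by rw [div_le_iff₀ h0]; linarith [ht.2]⟩
      · push Not at hc hc2
        exact ⟨θ, 1 - θ, 1 / 2, hc2.le, by linarith, hc.le, fun t ht => h.mid ht.1 ht.2⟩
  intro u v huv
  obtain ⟨n, hn⟩ := exists_pow_lt_of_lt_one (sub_pos.2 huv) (by linarith : θ < 1)
  exact main n u v hn

end

noncomputable def Rf (S : ℝ → ℝ) (x : ℝ) : ℝ := ∫ t in (0:ℝ)..x, S t

section
variable {θ : ℝ} {S : ℝ → ℝ}

theorem Cant.hasDerivAt (h : Cant θ S) (x : ℝ) : HasDerivAt (Rf S) (S x) x :=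
  intervalIntegral.integral_hasDerivAt_right (h.continuous.intervalIntegrable _ _)
    (h.continuous.stronglyMeasurableAtFilter _ _) h.continuous.continuousAt

theorem Cant.R0 (h : Cant θ S) {x : ℝ} (hx : x ≤ 0) : Rf S x = 0 := by
  unfold Rf
  rw [intervalIntegral.integral_congr (g := fun _ => 0), intervalIntegral.integral_zero]
  intro t ht
  rw [uIcc_of_ge hx] at ht
  exact h.le0 t ht.2

theorem Cant.R1 (h : Cant θ S) {x : ℝ} (hx : 1 ≤ x) : Rf S x = x - 1 + Rf S 1 := by
  unfold Rf
  rw [← intervalIntegral.integral_add_adjacent_intervals (h.continuous.intervalIntegrable 0 1)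
    (h.continuous.intervalIntegrable 1 x), add_comm]
  congr 1
  rw [intervalIntegral.integral_congr (g := fun _ => 1)]
  · simp
  intro t ht
  rw [uIcc_of_le hx] at ht
  exact h.ge1 t ht.1

theorem Cant.Rcont (h : Cant θ S) : Continuous (Rf S) :=
  continuous_iff_continuousAt.2 fun x => (h.hasDerivAt x).continuousAt

theorem Cant.Rnonneg (h : Cant θ S) (x : ℝ) : 0 ≤ Rf S x := by
  rcases le_total x 0 with hx | hx
  · rw [h.R0 hx]
  · exact intervalIntegral.integral_nonneg hx fun t _ => h.nonneg t

theorem Cant.Rle (h : Cant θ S) {x : ℝ} (hx : 0 ≤ x) : Rf S x ≤ x := by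
  have := intervalIntegral.integral_mono_on hx (h.continuous.intervalIntegrable 0 x)
    (continuous_const.intervalIntegrable (μ := volume) 0 x) (fun t _ => h.le1 t)
  simpa [Rf] using this

theorem Cant.Rhalf (h : Cant θ S) : Rf S (1 / 2) ≤ 1 / 4 + 1 / 4 := by
  have := h.Rle (x := 1 / 2) (by norm_num)
  linarith

theorem Cant.Req (h : Cant θ S) (x : ℝ) :
    Rf S x = θ / 2 * Rf S (x / θ) + θ / 2 * Rf S ((x - 1 + θ) / θ) := by
  have h0 := h.pos
  have hd : ∀ y, HasDerivAt (fun x => Rf S x -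
      (θ / 2 * Rf S (x / θ) + θ / 2 * Rf S ((x - 1 + θ) / θ))) 0 y := by
    intro y
    have h1 := ((h.hasDerivAt (y / θ)).comp y ((hasDerivAt_id y).div_const θ)).const_mul (θ / 2)
    have h2 := ((h.hasDerivAt ((y - 1 + θ) / θ)).comp y
      ((((hasDerivAt_id y).sub_const 1).add_const θ).div_const θ)).const_mul (θ / 2)
    refine ((h.hasDerivAt y).sub (h1.add h2)).congr_deriv ?_
    rw [h.eq y]; field_simp; ring
  have hc := is_const_of_deriv_eq_zero (fun y => (hd y).differentiableAt)
    (fun y => (hd y).deriv) x 0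
  rw [h.R0 le_rfl, h.R0 (x := 0 / θ) (by simp), h.R0 (x := (0 - 1 + θ) / θ)
    (div_nonpos_of_nonpos_of_nonneg (by linarith [h.lt]) h0.le)] at hc
  linarith

theorem Cant.Rleft (h : Cant θ S) {x : ℝ} (hx : x ≤ 1 - θ) : Rf S x = θ / 2 * Rf S (x / θ) := by
  rw [h.Req, h.R0 (x := (x - 1 + θ) / θ)
    (div_nonpos_of_nonpos_of_nonneg (by linarith) h.pos.le), mul_zero, add_zero]

theorem Cant.Rright (h : Cant θ S) {x : ℝ} (hx : θ ≤ x) :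
    Rf S x = 1 / 2 * x + (θ / 2 * (Rf S 1 - 1)) + θ / 2 * Rf S ((x - 1 + θ) / θ) := by
  have h0 := h.pos
  rw [h.Req, h.R1 (x := x / θ) (by rw [le_div_iff₀ h.pos]; linarith)]
  field_simp; ring

theorem Cant.Rmid (h : Cant θ S) {x : ℝ} (hx : θ ≤ x) (hx2 : x ≤ 1 - θ) :
    Rf S x = 1 / 2 * x + (θ / 2 * (Rf S 1 - 1)) := by
  rw [h.Rright hx, h.R0 (x := (x - 1 + θ) / θ)
    (div_nonpos_of_nonpos_of_nonneg (by linarith) h.pos.le), mul_zero, add_zero]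

end

/-- Every interval contains a subinterval on which the function is affine. -/
def LA (f : ℝ → ℝ) : Prop := ∀ u v : ℝ, u < v →
    ∃ u' v' a b : ℝ, u ≤ u' ∧ u' < v' ∧ v' ≤ v ∧ ∀ t ∈ Icc u' v', f t = a * t + b

theorem Cant.LA {θ : ℝ} {S : ℝ → ℝ} (h : Cant θ S) : LA (Rf S) := by
  intro u v huv
  obtain ⟨u', v', c, h1, h2, h3, h4⟩ := h.locconst u v huv
  refine ⟨u', v', c, Rf S u' - c * u', h1, h2, h3, fun t ht => ?_⟩
  have key : Rf S t - Rf S u' = ∫ s in u'..t, S s := by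
    unfold Rf
    rw [intervalIntegral.integral_interval_sub_left (h.continuous.intervalIntegrable _ _)
      (h.continuous.intervalIntegrable _ _)]
  rw [intervalIntegral.integral_congr (g := fun _ => c)] at key
  · simp only [intervalIntegral.integral_const, smul_eq_mul] at key
    linarith
  · intro s hs
    rw [uIcc_of_le ht.1] at hs
    exact h4 s ⟨hs.1, hs.2.trans ht.2⟩

theorem LA.add {f g : ℝ → ℝ} (hf : LA f) (hg : LA g) : LA (fun t => f t + g t) := by
  intro u v huv
  obtain ⟨u1, v1, a1, b1, h1, h2, h3, h4⟩ := hf u v huv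
  obtain ⟨u2, v2, a2, b2, k1, k2, k3, k4⟩ := hg u1 v1 h2
  refine ⟨u2, v2, a1 + a2, b1 + b2, h1.trans k1, k2, k3.trans h3, fun t ht => ?_⟩
  simp only [h4 t ⟨k1.trans ht.1, ht.2.trans k3⟩, k4 t ht]; ring

theorem LA.comp {f : ℝ → ℝ} (hf : LA f) (c t₀ : ℝ) {η : ℝ} (hη : 0 < η) :
    LA (fun t => c * f ((t - t₀) / η)) := by
  intro u v huv
  obtain ⟨u1, v1, a1, b1, h1, h2, h3, h4⟩ := hf ((u - t₀) / η) ((v - t₀) / η) (by gcongr)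
  rw [div_le_iff₀ hη] at h1
  rw [le_div_iff₀ hη] at h3
  have h5 : u1 * η < v1 * η := by gcongr
  refine ⟨u1 * η + t₀, v1 * η + t₀, c * a1 / η, c * (b1 - a1 * t₀ / η), by linarith, by linarith,
    by linarith, fun t ht => ?_⟩
  simp only
  rw [h4]
  · field_simp; ring
  · exact ⟨by rw [le_div_iff₀ hη]; linarith [ht.1], by rw [div_le_iff₀ hη]; linarith [ht.2]⟩

theorem LA.const (c : ℝ) : LA (fun _ => c) := fun u v huv =>
  ⟨u, v, 0, c, le_rfl, huv, le_rfl, fun t _ => by ring⟩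

/-- Smooth cutoffs adapted to the Cantor set. -/
structure Cut (θ ε K : ℝ) (σ σ' ρ ρ' : ℝ → ℝ) : Prop where
  epos : 0 < ε
  ele : ε ≤ 1 / 2
  eth : 2 * (θ * (1 + ε)) ≤ 1
  K1 : 1 ≤ K
  sd : ∀ y, HasDerivAt σ (σ' y) y
  sc : Continuous σ'
  sb : ∀ y, |σ' y| ≤ K
  s0 : ∀ y, 0 ≤ σ y
  s1 : ∀ y, σ y ≤ 1
  sl : ∀ y ≤ -ε, σ y = 0
  sr : ∀ y, 0 ≤ y → σ y = 1
  rd : ∀ y, HasDerivAt ρ (ρ' y) y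
  rc : Continuous ρ'
  rb : ∀ y, |ρ' y| ≤ K
  r0 : ∀ y, 0 ≤ ρ y
  r1 : ∀ y, ρ y ≤ 1
  rl : ∀ y ≤ 1, ρ y = 0
  rr : ∀ y, 1 + ε ≤ y → ρ y = 1

theorem exists_cut {θ : ℝ} (h0 : 0 < θ) (h2 : θ < 1 / 2) :
    ∃ ε K σ σ' ρ ρ', Cut θ ε K σ σ' ρ ρ' := by
  set ε := min (1 / 2) (1 / (2 * θ) - 1) with hε
  have he : 0 < ε := by
    apply lt_min (by norm_num)
    rw [sub_pos, lt_div_iff₀ (by positivity)]; linarith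
  have he2 : ε ≤ 1 / (2 * θ) - 1 := min_le_right _ _
  have hcd : ContDiff ℝ 1 Real.smoothTransition := Real.smoothTransition.contDiff
  have hdc : Continuous (deriv Real.smoothTransition) := hcd.continuous_deriv le_rfl
  have hd : ∀ y, HasDerivAt Real.smoothTransition (deriv Real.smoothTransition y) y := fun y =>
    (hcd.differentiable one_ne_zero y).hasDerivAt
  obtain ⟨B, hB⟩ := (isCompact_Icc (a := (0:ℝ)) (b := 1)).exists_bound_of_continuousOn
      hdc.continuousOn
  have hB0 : 0 ≤ B := (norm_nonneg _).trans (hB 0 (by simp))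
  have hBall : ∀ y, |deriv Real.smoothTransition y| ≤ B := by
    intro y
    by_cases hy : y ∈ Icc (0:ℝ) 1
    · exact hB y hy
    · have : deriv Real.smoothTransition y = 0 := by
        rw [mem_Icc, not_and_or, not_le, not_le] at hy
        rcases hy with hy | hy
        · have : Real.smoothTransition =ᶠ[nhds y] fun _ => 0 := by
            filter_upwards [Iio_mem_nhds hy] with z hz
            exact Real.smoothTransition.zero_of_nonpos (le_of_lt hz)
          rw [this.deriv_eq]; simp
        · have : Real.smoothTransition =ᶠ[nhds y] fun _ => 1 := by
            filter_upwards [Ioi_mem_nhds hy] with z hz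
            exact Real.smoothTransition.one_of_one_le (le_of_lt hz)
          rw [this.deriv_eq]; simp
      rw [this]; simpa using hB0
  have hbd : ∀ z, |deriv Real.smoothTransition z * (1 / ε)| ≤ max 1 (B / ε) := by
    intro z
    refine le_trans ?_ (le_max_right _ _)
    rw [abs_mul, abs_of_pos (by positivity : 0 < 1 / ε), mul_one_div]
    have := hBall z
    gcongr
  refine ⟨ε, max 1 (B / ε), fun y => Real.smoothTransition (1 + y / ε),
    fun y => deriv Real.smoothTransition (1 + y / ε) * (1 / ε),
    fun y => Real.smoothTransition ((y - 1) / ε),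
    fun y => deriv Real.smoothTransition ((y - 1) / ε) * (1 / ε), ?_⟩
  constructor
  · exact he
  · exact min_le_left _ _
  · rw [le_sub_iff_add_le, le_div_iff₀ (by positivity)] at he2
    linarith
  · exact le_max_left _ _
  · intro y
    exact (hd (1 + y / ε)).comp y (((hasDerivAt_id y).div_const ε).const_add 1)
  · fun_prop
  · exact fun y => hbd _
  · exact fun y => Real.smoothTransition.nonneg _
  · exact fun y => Real.smoothTransition.le_one _
  · intro y hy
    apply Real.smoothTransition.zero_of_nonpos
    have : y / ε ≤ -1 := by rw [div_le_iff₀ he]; linarith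
    linarith
  · intro y hy
    apply Real.smoothTransition.one_of_one_le
    have : 0 ≤ y / ε := by positivity
    linarith
  · intro y
    exact (hd ((y - 1) / ε)).comp y (((hasDerivAt_id y).sub_const 1).div_const ε)
  · fun_prop
  · exact fun y => hbd _
  · exact fun y => Real.smoothTransition.nonneg _
  · exact fun y => Real.smoothTransition.le_one _
  · intro y hy
    apply Real.smoothTransition.zero_of_nonpos
    exact div_nonpos_of_nonpos_of_nonneg (by linarith) he.le
  · intro y hy
    apply Real.smoothTransition.one_of_one_le
    rw [le_div_iff₀ he]; linarith

/-- Wave packet with phase `a t + b + μ P((t-t₀)/η)` and amplitude `κ((t-t₀)/η)`. -/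
noncomputable def W (P κ : ℝ → ℝ) (a b μ t₀ η : ℝ) : ℝ → ℂ := fun t =>
  Complex.exp (Complex.I * ((a * t + b + μ * P ((t - t₀) / η) : ℝ) : ℂ)) *
    ((κ ((t - t₀) / η) : ℝ) : ℂ)

theorem W_cont {P κ : ℝ → ℝ} (hP : Continuous P) (hκ : Continuous κ) (a b μ t₀ η : ℝ) :
    Continuous (W P κ a b μ t₀ η) := by
  unfold W; fun_prop

theorem norm_exp_I (x : ℝ) : ‖Complex.exp (Complex.I * (x : ℂ))‖ = 1 := by
  rw [mul_comm]; exact Complex.norm_exp_ofReal_mul_I x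

theorem W_norm (P κ : ℝ → ℝ) (a b μ t₀ η t : ℝ) :
    ‖W P κ a b μ t₀ η t‖ = |κ ((t - t₀) / η)| := by
  unfold W
  rw [norm_mul, norm_exp_I, one_mul, Complex.norm_real, Real.norm_eq_abs]

theorem W_add (P κ₁ κ₂ : ℝ → ℝ) (a b μ t₀ η : ℝ) :
    W P (fun x => κ₁ x + κ₂ x) a b μ t₀ η =
      fun t => W P κ₁ a b μ t₀ η t + W P κ₂ a b μ t₀ η t := by
  ext t; unfold W; push_cast; ring

theorem piece {κ κ' : ℝ → ℝ} (hd : ∀ y, HasDerivAt κ (κ' y) y) (hc : Continuous κ')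
    {K u₀ v₀ : ℝ} (huv : u₀ ≤ v₀) (hl : v₀ - u₀ ≤ 7) (hb : ∀ y, |κ y| ≤ K)
    (hb' : ∀ y, |κ' y| ≤ K) (hz1 : ∀ y ≤ u₀, κ y = 0) (hz2 : ∀ y, v₀ ≤ y → κ y = 0)
    {η t₀ : ℝ} (hη : 0 < η) (hη1 : η ≤ 1) (h0 : 0 ≤ t₀ + u₀ * η) (h1 : t₀ + v₀ * η ≤ 2 * π)
    {P : ℝ → ℝ} {c d : ℝ} (hP : ∀ y ∈ Icc u₀ v₀, P y = c * y + d) (a b μ : ℝ) :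
    N1 (W P κ a b μ t₀ η) ≤ ENNReal.ofReal (10 * K) := by
  set w : ℂ := Complex.exp (Complex.I * ((b + μ * (d - c * t₀ / η) : ℝ) : ℂ)) with hw
  have hwn : ‖w‖ = 1 := norm_exp_I _
  have e : W P κ a b μ t₀ η = fun t : ℝ => Complex.exp (Complex.I * ((a + μ * c / η : ℝ) : ℂ) * (t : ℂ)) *
      (w * ((κ ((t - t₀) / η) : ℝ) : ℂ)) := by
    ext t
    unfold W
    by_cases ht : (t - t₀) / η ∈ Icc u₀ v₀
    · rw [hP _ ht, ← mul_assoc, hw, ← Complex.exp_add]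
      congr 2
      push_cast; field_simp; ring
    · have : κ ((t - t₀) / η) = 0 := by
        rw [mem_Icc, not_and_or, not_le, not_le] at ht
        rcases ht with ht | ht
        · exact hz1 _ ht.le
        · exact hz2 _ ht.le
      rw [this]; simp
  rw [e]
  refine bump1 (G' := fun t : ℝ => w * ((κ' ((t - t₀) / η) * (1 / η) : ℝ) : ℂ))
    (u := t₀ + u₀ * η) (v := t₀ + v₀ * η) ?_ ?_ _ hη hη1 h0 ?_ h1 ?_ ?_ ?_ ?_ ?_
  · intro t
    refine HasDerivAt.const_mul w (HasDerivAt.ofReal_comp ?_)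
    exact (hd ((t - t₀) / η)).comp t (((hasDerivAt_id t).sub_const t₀).div_const η)
  · fun_prop
  · gcongr
  · have : t₀ + v₀ * η - (t₀ + u₀ * η) = (v₀ - u₀) * η := by ring
    rw [this]; gcongr
  · intro t
    rw [norm_mul, hwn, one_mul, Complex.norm_real]; exact hb _
  · intro t
    rw [norm_mul, hwn, one_mul, Complex.norm_real, Real.norm_eq_abs, abs_mul,
      abs_of_pos (by positivity : 0 < 1 / η), mul_one_div]
    have := hb' ((t - t₀) / η)
    gcongr
  · intro t ht
    rw [hz1 ((t - t₀) / η) (by rw [div_le_iff₀ hη]; linarith)]; simp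
  · intro t ht
    rw [hz2 ((t - t₀) / η) (by rw [le_div_iff₀ hη]; linarith)]; simp

/-- The iterated cutoffs. -/
noncomputable def chi (θ : ℝ) (ω : ℝ → ℝ) : ℕ → ℝ → ℝ
  | 0 => ω
  | m + 1 => fun x => chi θ ω m (x / θ) + chi θ ω m ((x - 1 + θ) / θ)

section
variable {θ ε K : ℝ} {S σ σ' ρ ρ' : ℝ → ℝ}

theorem Cut.scont (c : Cut θ ε K σ σ' ρ ρ') : Continuous σ :=
  continuous_iff_continuousAt.2 fun x => (c.sd x).continuousAt

theorem Cut.rcont (c : Cut θ ε K σ σ' ρ ρ') : Continuous ρ :=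
  continuous_iff_continuousAt.2 fun x => (c.rd x).continuousAt

theorem chi_props (h : Cant θ S) (c : Cut θ ε K σ σ' ρ ρ') (m : ℕ) :
    Continuous (chi θ (fun y => σ y - ρ y) m) ∧
    (∀ x ≤ -ε, chi θ (fun y => σ y - ρ y) m x = 0) ∧
    (∀ x, 1 + ε ≤ x → chi θ (fun y => σ y - ρ y) m x = 0) ∧
    (∀ x, 0 ≤ chi θ (fun y => σ y - ρ y) m x) ∧
    (∀ x, chi θ (fun y => σ y - ρ y) m x ≤ 1) := by
  have h0 := h.pos
  have h2 := h.lt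
  have e0 := c.epos
  have e1 := c.ele
  have e2 := c.eth
  induction m with
  | zero =>
    have := c.scont
    have := c.rcont
    refine ⟨by unfold chi; fun_prop, fun x hx => ?_, fun x hx => ?_, fun x => ?_, fun x => ?_⟩
      <;> simp only [chi]
    · rw [c.sl x hx, c.rl x (by linarith), sub_zero]
    · rw [c.sr x (by linarith), c.rr x hx, sub_self]
    · rcases le_total x 0 with hx | hx
      · rw [c.rl x (by linarith)]; have := c.s0 x; linarith
      · rw [c.sr x hx]; have := c.r1 x; linarith
    · have := c.s1 x; have := c.r0 x; linarith
  | succ m ih =>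
    obtain ⟨hc, hl, hr, hn, h1⟩ := ih
    have A : ∀ x, x ≤ 1 / 2 → chi θ (fun y => σ y - ρ y) m ((x - 1 + θ) / θ) = 0 := by
      intro x hx
      apply hl
      rw [div_le_iff₀ h0]; linarith
    have B : ∀ x, 1 / 2 ≤ x → chi θ (fun y => σ y - ρ y) m (x / θ) = 0 := by
      intro x hx
      apply hr
      rw [le_div_iff₀ h0]; linarith
    refine ⟨by unfold chi; fun_prop, fun x hx => ?_, fun x hx => ?_, fun x => ?_, fun x => ?_⟩
      <;> simp only [chi]
    · rw [A x (by linarith), hl, add_zero]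
      rw [div_le_iff₀ h0]; nlinarith
    · rw [B x (by linarith), hr, add_zero]
      rw [le_div_iff₀ h0]; nlinarith
    · exact add_nonneg (hn _) (hn _)
    · rcases le_total x (1 / 2) with hx | hx
      · rw [A x hx, add_zero]; exact h1 _
      · rw [B x hx, zero_add]; exact h1 _

/-- Step: splitting into the two children. -/
theorem W_split (h : Cant θ S) (c : Cut θ ε K σ σ' ρ ρ') {κ : ℝ → ℝ} (hκ : Continuous κ)
    (hl : ∀ x ≤ -ε, κ x = 0) (hr : ∀ x, 1 + ε ≤ x → κ x = 0) (a b μ t₀ : ℝ) {η : ℝ} (hη : 0 < η) :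
    ∃ a' b', N1 (W (Rf S) (fun x => κ (x / θ) + κ ((x - 1 + θ) / θ)) a b μ t₀ η) ≤
      N1 (W (Rf S) κ a b (μ * (θ / 2)) t₀ (η * θ)) +
      N1 (W (Rf S) κ a' b' (μ * (θ / 2)) (t₀ + (1 - θ) * η) (η * θ)) := by
  have h0 := h.pos
  have h2 := h.lt
  have e0 := c.epos
  have e1 := c.ele
  have e2 := c.eth
  refine ⟨a + μ * (1 / 2) / η, b + μ * (θ / 2 * (Rf S 1 - 1)) - μ * (1 / 2) * t₀ / η, ?_⟩
  have e : W (Rf S) (fun x => κ (x / θ) + κ ((x - 1 + θ) / θ)) a b μ t₀ η = fun t =>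
      W (Rf S) κ a b (μ * (θ / 2)) t₀ (η * θ) t +
      W (Rf S) κ (a + μ * (1 / 2) / η) (b + μ * (θ / 2 * (Rf S 1 - 1)) - μ * (1 / 2) * t₀ / η)
        (μ * (θ / 2)) (t₀ + (1 - θ) * η) (η * θ) t := by
    rw [W_add]
    ext t
    congr 1
    · unfold W
      have q : (t - t₀) / (η * θ) = (t - t₀) / η / θ := by rw [div_div]
      rw [q]
      by_cases hx : (t - t₀) / η / θ < 1 + ε
      · rw [div_lt_iff₀ h0] at hx
        rw [h.Rleft (x := (t - t₀) / η) (by linarith)]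
        congr 4; ring
      · simp [hr _ (not_lt.1 hx)]
    · unfold W
      have q : (t - (t₀ + (1 - θ) * η)) / (η * θ) = ((t - t₀) / η - 1 + θ) / θ := by
        field_simp; ring
      rw [q]
      by_cases hx : -ε < ((t - t₀) / η - 1 + θ) / θ
      · rw [lt_div_iff₀ h0] at hx
        rw [h.Rright (x := (t - t₀) / η) (by nlinarith)]
        congr 4; field_simp; ring
      · simp [hl _ (not_lt.1 hx)]
  rw [e]
  exact N1_add (W_cont h.Rcont hκ _ _ _ _ _) (W_cont h.Rcont hκ _ _ _ _ _)

/-- The remainder `ω - χ₁`. -/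
theorem W_beta (h : Cant θ S) (c : Cut θ ε K σ σ' ρ ρ') (a b μ t₀ : ℝ) {η : ℝ} (hη : 0 < η)
    (hη1 : η ≤ 1) (ht0 : 0 ≤ t₀ - ε * η) (ht1 : t₀ + (1 + ε) * η ≤ 2 * π) :
    N1 (W (Rf S) (fun x => (σ x - ρ x) - ((σ (x / θ) - ρ (x / θ)) +
      (σ ((x - 1 + θ) / θ) - ρ ((x - 1 + θ) / θ)))) a b μ t₀ η) ≤
      ENNReal.ofReal (30 * (2 * K / θ)) := by
  have h0 := h.pos
  have h2 := h.lt
  have e0 := c.epos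
  have e1 := c.ele
  have e2 := c.eth
  have K1 := c.K1
  have hsc := c.scont
  have hrc := c.rcont
  have hsc' := c.sc
  have hrc' := c.rc
  have hRc := h.Rcont
  have hKL : K ≤ K / θ := by rw [le_div_iff₀ h0]; nlinarith
  have hL : 2 * K / θ = K / θ + K / θ := by ring
  have hL1 : 1 ≤ 2 * K / θ := by linarith
  have hdiv : ∀ x : ℝ, |x| ≤ K → |x * (1 / θ)| ≤ K / θ := by
    intro x hx
    rw [abs_mul, abs_of_pos (by positivity : 0 < 1 / θ), mul_one_div]
    gcongr
  have tri : ∀ x y A B : ℝ, |x| ≤ A → |y| ≤ B → |x - y| ≤ A + B := fun x y A B hx hy =>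
    (abs_sub x y).trans (add_le_add hx hy)
  have dl : ∀ {f f' : ℝ → ℝ}, (∀ y, HasDerivAt f (f' y) y) → ∀ y,
      HasDerivAt (fun y => f (y / θ)) (f' (y / θ) * (1 / θ)) y := fun hf y =>
    (hf (y / θ)).comp y ((hasDerivAt_id y).div_const θ)
  have dr : ∀ {f f' : ℝ → ℝ}, (∀ y, HasDerivAt f (f' y) y) → ∀ y,
      HasDerivAt (fun y => f ((y - 1 + θ) / θ)) (f' ((y - 1 + θ) / θ) * (1 / θ)) y := fun hf y =>
    (hf ((y - 1 + θ) / θ)).comp y ((((hasDerivAt_id y).sub_const 1).add_const θ).div_const θ)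
  have ab1 : ∀ x y : ℝ, 0 ≤ x → x ≤ 1 → 0 ≤ y → y ≤ 1 → |x - y| ≤ 2 * K / θ := by
    intro x y _ _ _ _
    refine le_trans ?_ hL1
    rw [abs_le]; constructor <;> linarith
  have p1 : N1 (W (Rf S) (fun y => σ y - σ (y / θ)) a b μ t₀ η) ≤ ENNReal.ofReal (10 * (2 * K / θ)) := by
    refine piece (κ := fun y => σ y - σ (y / θ)) (fun y => (c.sd y).sub (dl c.sd y)) (by fun_prop) (u₀ := -ε) (v₀ := 0)
      (by linarith) (by linarith) ?_ ?_ ?_ ?_ hη hη1 (by linarith) (by nlinarith) (c := 0) (d := 0) ?_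
      _ _ _
    · exact fun y => ab1 _ _ (c.s0 _) (c.s1 _) (c.s0 _) (c.s1 _)
    · intro y
      rw [hL]
      exact tri _ _ _ _ ((c.sb _).trans hKL) (hdiv _ (c.sb _))
    · intro y hy
      rw [c.sl y hy, c.sl (y / θ) (by rw [div_le_iff₀ h0]; nlinarith), sub_zero]
    · intro y hy
      rw [c.sr y hy, c.sr (y / θ) (by positivity), sub_self]
    · intro y hy
      rw [h.R0 hy.2]; ring
  have p2 : N1 (W (Rf S) (fun y => ρ (y / θ) - σ ((y - 1 + θ) / θ)) a b μ t₀ η) ≤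
      ENNReal.ofReal (10 * (2 * K / θ)) := by
    refine piece (κ := fun y => ρ (y / θ) - σ ((y - 1 + θ) / θ)) (fun y => (dl c.rd y).sub (dr c.sd y)) (by fun_prop) (u₀ := θ) (v₀ := 1 - θ)
      (by linarith) (by linarith) ?_ ?_ ?_ ?_ hη hη1 (by nlinarith) (by nlinarith)
      (c := 1 / 2) (d := θ / 2 * (Rf S 1 - 1)) ?_ _ _ _
    · exact fun y => ab1 _ _ (c.r0 _) (c.r1 _) (c.s0 _) (c.s1 _)
    · intro y
      rw [hL]
      exact tri _ _ _ _ (hdiv _ (c.rb _)) (hdiv _ (c.sb _))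
    · intro y hy
      rw [c.rl (y / θ) (by rw [div_le_iff₀ h0]; linarith), c.sl _ (by
        rw [div_le_iff₀ h0]; linarith), sub_zero]
    · intro y hy
      rw [c.rr (y / θ) (by rw [le_div_iff₀ h0]; linarith), c.sr _ (by
        rw [le_div_iff₀ h0]; linarith), sub_self]
    · intro y hy
      exact h.Rmid hy.1 hy.2
  have p3 : N1 (W (Rf S) (fun y => ρ ((y - 1 + θ) / θ) - ρ y) a b μ t₀ η) ≤
      ENNReal.ofReal (10 * (2 * K / θ)) := by
    refine piece (κ := fun y => ρ ((y - 1 + θ) / θ) - ρ y) (fun y => (dr c.rd y).sub (c.rd y)) (by fun_prop) (u₀ := 1) (v₀ := 1 + ε)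
      (by linarith) (by linarith) ?_ ?_ ?_ ?_ hη hη1 (by nlinarith) (by nlinarith)
      (c := 1) (d := Rf S 1 - 1) ?_ _ _ _
    · exact fun y => ab1 _ _ (c.r0 _) (c.r1 _) (c.r0 _) (c.r1 _)
    · intro y
      rw [hL]
      exact tri _ _ _ _ (hdiv _ (c.rb _)) ((c.rb _).trans hKL)
    · intro y hy
      rw [c.rl y hy, c.rl _ (by rw [div_le_iff₀ h0]; linarith), sub_zero]
    · intro y hy
      rw [c.rr y hy, c.rr _ (by rw [le_div_iff₀ h0]; nlinarith), sub_self]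
    · intro y hy
      rw [h.R1 hy.1]; ring
  have e : W (Rf S) (fun x => (σ x - ρ x) - ((σ (x / θ) - ρ (x / θ)) +
      (σ ((x - 1 + θ) / θ) - ρ ((x - 1 + θ) / θ)))) a b μ t₀ η = fun t =>
      (W (Rf S) (fun y => σ y - σ (y / θ)) a b μ t₀ η t +
      W (Rf S) (fun y => ρ (y / θ) - σ ((y - 1 + θ) / θ)) a b μ t₀ η t) +
      W (Rf S) (fun y => ρ ((y - 1 + θ) / θ) - ρ y) a b μ t₀ η t := by
    ext t; unfold W; push_cast; ring
  rw [e]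
  have c1 := W_cont hRc (κ := fun y => σ y - σ (y / θ)) (by fun_prop) a b μ t₀ η
  have c2 := W_cont hRc (κ := fun y => ρ (y / θ) - σ ((y - 1 + θ) / θ)) (by fun_prop) a b μ t₀ η
  have c3 := W_cont hRc (κ := fun y => ρ ((y - 1 + θ) / θ) - ρ y) (by fun_prop) a b μ t₀ η
  refine (N1_add (by fun_prop) c3).trans ?_
  refine (add_le_add ((N1_add c1 c2).trans (add_le_add p1 p2)) p3).trans ?_
  rw [← ENNReal.ofReal_add (by positivity) (by positivity),
    ← ENNReal.ofReal_add (by positivity) (by positivity)]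
  apply ENNReal.ofReal_le_ofReal
  linarith

theorem W_base (h : Cant θ S) (c : Cut θ ε K σ σ' ρ ρ') (a b : ℝ) {μ t₀ : ℝ} {η : ℝ} (hη : 0 < η)
    (hη1 : η ≤ 1) (ht0 : 0 ≤ t₀ - ε * η) (ht1 : t₀ + (1 + ε) * η ≤ 2 * π) (hμ : |μ| ≤ 1) :
    N1 (W (Rf S) (fun x => σ x - ρ x) a b μ t₀ η) ≤ ENNReal.ofReal (30 * (2 * K / θ)) := by
  have h0 := h.pos
  have h2 := h.lt
  have e0 := c.epos
  have e1 := c.ele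
  have K1 := c.K1
  have hsc := c.scont
  have hrc := c.rcont
  have hsc' := c.sc
  have hrc' := c.rc
  have hRc := h.Rcont
  have hSc := h.continuous
  obtain ⟨-, hl, hr, hn, hle⟩ := chi_props h c 0
  simp only [chi] at hl hr hn hle
  set w : ℂ := Complex.exp (Complex.I * (b : ℂ)) with hw
  have hwn : ‖w‖ = 1 := norm_exp_I _
  have e : W (Rf S) (fun x => σ x - ρ x) a b μ t₀ η = fun t : ℝ =>
      Complex.exp (Complex.I * (a : ℂ) * (t : ℂ)) *
      (w * Complex.exp (Complex.I * ((μ * Rf S ((t - t₀) / η) : ℝ) : ℂ)) *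
        ((σ ((t - t₀) / η) - ρ ((t - t₀) / η) : ℝ) : ℂ)) := by
    ext t
    unfold W
    rw [← mul_assoc, ← mul_assoc, hw, ← Complex.exp_add, ← Complex.exp_add]
    congr 2
    push_cast; ring
  rw [e]
  have hbb : (3 * K : ℝ) ≤ 3 * (2 * K / θ) := by
    have : K ≤ 2 * K / θ := by rw [le_div_iff₀ h0]; nlinarith
    linarith
  refine (bump1 (K := 3 * K) (G' := fun t : ℝ =>
    w * (Complex.exp (Complex.I * ((μ * Rf S ((t - t₀) / η) : ℝ) : ℂ)) *
        (Complex.I * ((μ * (S ((t - t₀) / η) * (1 / η)) : ℝ) : ℂ))) *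
        ((σ ((t - t₀) / η) - ρ ((t - t₀) / η) : ℝ) : ℂ) +
    w * Complex.exp (Complex.I * ((μ * Rf S ((t - t₀) / η) : ℝ) : ℂ)) *
        ((σ' ((t - t₀) / η) * (1 / η) - ρ' ((t - t₀) / η) * (1 / η) : ℝ) : ℂ))
    (u := t₀ - ε * η) (v := t₀ + (1 + ε) * η) ?_ ?_ _ hη hη1 ht0 ?_ ht1 ?_ ?_ ?_ ?_ ?_).trans ?_
  · intro t
    have dx : HasDerivAt (fun t => (t - t₀) / η) (1 / η) t :=
      ((hasDerivAt_id t).sub_const t₀).div_const η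
    have d1 : HasDerivAt (fun t => μ * Rf S ((t - t₀) / η)) (μ * (S ((t - t₀) / η) * (1 / η))) t :=
      (HasDerivAt.comp (h₂ := Rf S) t (h.hasDerivAt ((t - t₀) / η)) dx).const_mul μ
    have d2 := (d1.ofReal_comp.const_mul Complex.I).cexp.const_mul w
    have d3 : HasDerivAt (fun t => σ ((t - t₀) / η) - ρ ((t - t₀) / η))
        (σ' ((t - t₀) / η) * (1 / η) - ρ' ((t - t₀) / η) * (1 / η)) t :=
      ((c.sd ((t - t₀) / η)).comp t dx).sub ((c.rd ((t - t₀) / η)).comp t dx)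
    exact d2.mul d3.ofReal_comp
  · fun_prop
  · nlinarith
  · nlinarith
  · intro t
    rw [norm_mul, norm_mul, hwn, norm_exp_I, one_mul, one_mul, Complex.norm_real, Real.norm_eq_abs,
      abs_of_nonneg (hn _)]
    have := hle ((t - t₀) / η)
    linarith
  · intro t
    refine (norm_add_le _ _).trans ?_
    simp only [norm_mul, hwn, norm_exp_I, one_mul, Complex.norm_real, Complex.norm_I,
      Real.norm_eq_abs]
    rw [← sub_mul, abs_mul (σ' _ - ρ' _),
      abs_of_pos (by positivity : 0 < 1 / η), abs_of_nonneg (h.nonneg _), abs_of_nonneg (hn _)]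
    have q1 : |σ' ((t - t₀) / η) - ρ' ((t - t₀) / η)| ≤ K + K :=
      (abs_sub _ _).trans (add_le_add (c.sb _) (c.rb _))
    have q2 : |μ| * (S ((t - t₀) / η) * (1 / η)) * (σ ((t - t₀) / η) - ρ ((t - t₀) / η)) ≤
        1 * (1 * (1 / η)) * 1 := by
      have a1 := h.nonneg ((t - t₀) / η)
      have a2 := h.le1 ((t - t₀) / η)
      have a3 := hn ((t - t₀) / η)
      have a4 := hle ((t - t₀) / η)
      gcongr
    have q3 : |σ' ((t - t₀) / η) - ρ' ((t - t₀) / η)| * (1 / η) ≤ (K + K) * (1 / η) := by gcongr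
    have q4 : 1 * (1 * (1 / η)) * 1 ≤ K * (1 / η) := by
      have : 0 < 1 / η := by positivity
      nlinarith
    calc _ ≤ K * (1 / η) + (K + K) * (1 / η) := add_le_add (q2.trans q4) q3
      _ = _ := by ring
  · intro t ht
    rw [hl ((t - t₀) / η) (by rw [div_le_iff₀ hη]; linarith)]; simp
  · intro t ht
    rw [hr ((t - t₀) / η) (by rw [le_div_iff₀ hη]; linarith)]; simp
  · apply ENNReal.ofReal_le_ofReal
    linarith

theorem key_diff (h : Cant θ S) (c : Cut θ ε K σ σ' ρ ρ') (m : ℕ) : ∀ (a b μ t₀ η : ℝ), 0 < η →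
    η ≤ 1 → 0 ≤ t₀ - ε * η → t₀ + (1 + ε) * η ≤ 2 * π →
    N1 (W (Rf S) (fun x => (σ x - ρ x) - chi θ (fun y => σ y - ρ y) m x) a b μ t₀ η) ≤
      ENNReal.ofReal (30 * (2 * K / θ) * (2 ^ m - 1)) := by
  have h0 := h.pos
  have h2 := h.lt
  have e0 := c.epos
  have e1 := c.ele
  have K1 := c.K1
  have hsc := c.scont
  have hrc := c.rcont
  have hRc := h.Rcont
  induction m with
  | zero =>
    intro a b μ t₀ η _ _ _ _
    have : W (Rf S) (fun x => (σ x - ρ x) - chi θ (fun y => σ y - ρ y) 0 x) a b μ t₀ η =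
        fun _ => 0 := by
      ext t; unfold W; simp [chi]
    rw [this]
    simp [N1, fourierCoef]
  | succ m ih =>
    intro a b μ t₀ η hη hη1 ht0 ht1
    obtain ⟨hcc, hl, hr, -, -⟩ := chi_props h c m
    obtain ⟨-, hl0, hr0, -, -⟩ := chi_props h c 0
    simp only [chi] at hl0 hr0
    set X := chi θ (fun y => σ y - ρ y) m with hX
    obtain ⟨a', b', hs⟩ := W_split h c (κ := fun x => (σ x - ρ x) - X x) (by fun_prop)
      (fun x hx => by rw [hl x hx, hl0 x hx, sub_zero])
      (fun x hx => by rw [hr x hx, hr0 x hx, sub_zero]) a b μ t₀ hη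
    have hθη : η * θ ≤ η := by nlinarith
    have hεη : 0 < ε * η := by positivity
    have hpη : 0 < η * θ := by positivity
    have b1 := ih a b (μ * (θ / 2)) t₀ (η * θ) hpη (by linarith) (by nlinarith) (by nlinarith)
    have b2 := ih a' b' (μ * (θ / 2)) (t₀ + (1 - θ) * η) (η * θ) hpη (by linarith) (by nlinarith)
      (by nlinarith)
    have b3 := W_beta h c a b μ t₀ hη hη1 ht0 ht1
    have e : W (Rf S) (fun x => (σ x - ρ x) - chi θ (fun y => σ y - ρ y) (m + 1) x) a b μ t₀ η =
        fun t => W (Rf S) (fun x => (σ x - ρ x) - ((σ (x / θ) - ρ (x / θ)) +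
          (σ ((x - 1 + θ) / θ) - ρ ((x - 1 + θ) / θ)))) a b μ t₀ η t +
        W (Rf S) (fun x => ((σ (x / θ) - ρ (x / θ)) - X (x / θ)) +
          ((σ ((x - 1 + θ) / θ) - ρ ((x - 1 + θ) / θ)) - X ((x - 1 + θ) / θ))) a b μ t₀ η t := by
      rw [← W_add]
      congr 1; ext x
      simp only [chi, ← hX]; ring
    rw [e]
    refine (N1_add (W_cont hRc (by fun_prop) _ _ _ _ _)
      (W_cont hRc (by fun_prop) _ _ _ _ _)).trans ?_
    refine (add_le_add b3 (hs.trans (add_le_add b1 b2))).trans ?_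
    have h1m : (1:ℝ) ≤ 2 ^ m := one_le_pow₀ (by norm_num)
    have hC : 0 ≤ 30 * (2 * K / θ) := by positivity
    have hC2 : 0 ≤ 30 * (2 * K / θ) * (2 ^ m - 1) := mul_nonneg hC (by linarith)
    rw [← ENNReal.ofReal_add hC2 hC2, ← ENNReal.ofReal_add hC (by linarith)]
    apply ENNReal.ofReal_le_ofReal
    rw [pow_succ]
    linarith

theorem key_full (h : Cant θ S) (c : Cut θ ε K σ σ' ρ ρ') (m : ℕ) : ∀ (a b μ t₀ η : ℝ), 0 < η →
    η ≤ 1 → 0 ≤ t₀ - ε * η → t₀ + (1 + ε) * η ≤ 2 * π → |μ| * (θ / 2) ^ m ≤ 1 →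
    N1 (W (Rf S) (fun x => σ x - ρ x) a b μ t₀ η) ≤
      ENNReal.ofReal (30 * (2 * K / θ) * (2 * 2 ^ m - 1)) := by
  have h0 := h.pos
  have h2 := h.lt
  have e0 := c.epos
  have e1 := c.ele
  have K1 := c.K1
  have hsc := c.scont
  have hrc := c.rcont
  have hRc := h.Rcont
  induction m with
  | zero =>
    intro a b μ t₀ η hη hη1 ht0 ht1 hμ
    rw [pow_zero, mul_one] at hμ
    refine (W_base h c a b hη hη1 ht0 ht1 hμ).trans (ENNReal.ofReal_le_ofReal ?_)
    norm_num
  | succ m ih =>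
    intro a b μ t₀ η hη hη1 ht0 ht1 hμ
    obtain ⟨-, hl0, hr0, -, -⟩ := chi_props h c 0
    simp only [chi] at hl0 hr0
    obtain ⟨a', b', hs⟩ := W_split h c (κ := fun x => σ x - ρ x) (by fun_prop) hl0 hr0 a b μ t₀ hη
    have hθη : η * θ ≤ η := by nlinarith
    have hεη : 0 < ε * η := by positivity
    have hpη : 0 < η * θ := by positivity
    have hμ' : |μ * (θ / 2)| * (θ / 2) ^ m ≤ 1 := by
      rw [abs_mul, abs_of_pos (by positivity : 0 < θ / 2), mul_assoc, ← pow_succ']; exact hμ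
    have b1 := ih a b (μ * (θ / 2)) t₀ (η * θ) hpη (by linarith) (by nlinarith) (by nlinarith) hμ'
    have b2 := ih a' b' (μ * (θ / 2)) (t₀ + (1 - θ) * η) (η * θ) hpη (by linarith) (by nlinarith)
      (by nlinarith) hμ'
    have b3 := W_beta h c a b μ t₀ hη hη1 ht0 ht1
    have e : W (Rf S) (fun x => σ x - ρ x) a b μ t₀ η =
        fun t => W (Rf S) (fun x => (σ x - ρ x) - ((σ (x / θ) - ρ (x / θ)) +
          (σ ((x - 1 + θ) / θ) - ρ ((x - 1 + θ) / θ)))) a b μ t₀ η t +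
        W (Rf S) (fun x => (σ (x / θ) - ρ (x / θ)) +
          (σ ((x - 1 + θ) / θ) - ρ ((x - 1 + θ) / θ))) a b μ t₀ η t := by
      rw [← W_add]
      congr 1; ext x
      ring
    rw [e]
    refine (N1_add (W_cont hRc (by fun_prop) _ _ _ _ _)
      (W_cont hRc (by fun_prop) _ _ _ _ _)).trans ?_
    refine (add_le_add b3 (hs.trans (add_le_add b1 b2))).trans ?_
    have h1m : (1:ℝ) ≤ 2 ^ m := one_le_pow₀ (by norm_num)
    have hC : 0 ≤ 30 * (2 * K / θ) := by positivity
    have hC2 : 0 ≤ 30 * (2 * K / θ) * (2 * 2 ^ m - 1) := mul_nonneg hC (by linarith)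
    rw [← ENNReal.ofReal_add hC2 hC2, ← ENNReal.ofReal_add hC (by linarith)]
    apply ENNReal.ofReal_le_ofReal
    rw [pow_succ]
    linarith

end

noncomputable def Psi (S : ℝ → ℝ) (x : ℝ) : ℝ := Rf S x - 2 * Rf S (x - 2) + Rf S (x - 4)

noncomputable def psi (S : ℝ → ℝ) (x : ℝ) : ℝ := S x - 2 * S (x - 2) + S (x - 4)

section
variable {θ ε K : ℝ} {S σ σ' ρ ρ' : ℝ → ℝ}

theorem Psi_deriv (h : Cant θ S) (x : ℝ) : HasDerivAt (Psi S) (psi S x) x :=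
  ((h.hasDerivAt x).sub (((h.hasDerivAt (x - 2)).comp_sub_const x 2).const_mul 2)).add
    ((h.hasDerivAt (x - 4)).comp_sub_const x 4)

theorem Psi_cont (h : Cant θ S) : Continuous (Psi S) :=
  continuous_iff_continuousAt.2 fun x => (Psi_deriv h x).continuousAt

theorem psi_cont (h : Cant θ S) : Continuous (psi S) := by
  have := h.continuous
  unfold psi; fun_prop

theorem Psi_le0 (h : Cant θ S) {x : ℝ} (hx : x ≤ 0) : Psi S x = 0 := by
  unfold Psi
  rw [h.R0 hx, h.R0 (x := x - 2) (by linarith), h.R0 (x := x - 4) (by linarith)]; ring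

theorem Psi_ge5 (h : Cant θ S) {x : ℝ} (hx : 5 ≤ x) : Psi S x = 0 := by
  unfold Psi
  rw [h.R1 (x := x) (by linarith), h.R1 (x := x - 2) (by linarith),
    h.R1 (x := x - 4) (by linarith)]; ring

theorem psi_le0 (h : Cant θ S) {x : ℝ} (hx : x ≤ 0) : psi S x = 0 := by
  unfold psi
  rw [h.le0 x hx, h.le0 (x - 2) (by linarith), h.le0 (x - 4) (by linarith)]; ring

theorem psi_ge5 (h : Cant θ S) {x : ℝ} (hx : 5 ≤ x) : psi S x = 0 := by
  unfold psi
  rw [h.ge1 x (by linarith), h.ge1 (x - 2) (by linarith), h.ge1 (x - 4) (by linarith)]; ring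

theorem psi_abs (h : Cant θ S) (x : ℝ) : |psi S x| ≤ 2 := by
  unfold psi
  have := h.nonneg x; have := h.nonneg (x - 2); have := h.nonneg (x - 4)
  have := h.le1 x; have := h.le1 (x - 2); have := h.le1 (x - 4)
  rw [abs_le]; constructor <;> linarith

theorem Psi_abs (h : Cant θ S) (x : ℝ) : |Psi S x| ≤ 10 := by
  rcases le_total x 0 with hx | hx
  · rw [Psi_le0 h hx]; norm_num
  rcases le_total 5 x with hx5 | hx5
  · rw [Psi_ge5 h hx5]; norm_num
  have hb : ∀ y ≤ 5, Rf S y ≤ 5 := by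
    intro y hy
    rcases le_total y 0 with hy0 | hy0
    · rw [h.R0 hy0]; norm_num
    · linarith [h.Rle hy0]
  have a1 := hb x hx5
  have a2 := hb (x - 2) (by linarith)
  have a3 := hb (x - 4) (by linarith)
  have := h.Rnonneg x
  have := h.Rnonneg (x - 2)
  have := h.Rnonneg (x - 4)
  unfold Psi
  rw [abs_le]; constructor <;> linarith

theorem Psi_mid (h : Cant θ S) : 1 / 2 ≤ Psi S (5 / 2) := by
  unfold Psi
  rw [h.R1 (x := 5 / 2) (by norm_num), h.R0 (x := 5 / 2 - 4) (by norm_num)]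
  have h1 := h.Rhalf
  have h2 := h.Rnonneg 1
  have e : (5 / 2 - 2 : ℝ) = 1 / 2 := by norm_num
  rw [e]; linarith

theorem Psi_LA (h : Cant θ S) : LA (Psi S) := by
  have h1 := (h.LA.add (h.LA.comp (-2) 2 one_pos)).add (h.LA.comp 1 4 one_pos)
  have e : Psi S = fun t => Rf S t + -2 * Rf S ((t - 2) / 1) + 1 * Rf S ((t - 4) / 1) := by
    ext t; unfold Psi; simp only [div_one]; ring
  rw [e]; exact h1

theorem Psi_A (h : Cant θ S) {x : ℝ} (hx : x ≤ 3 / 2) : Psi S x = Rf S x := by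
  unfold Psi
  rw [h.R0 (x := x - 2) (by linarith), h.R0 (x := x - 4) (by linarith)]; ring

theorem Psi_B (h : Cant θ S) {x : ℝ} (hx : 1 ≤ x) (hx2 : x ≤ 4) :
    Psi S x = x - 1 + Rf S 1 - 2 * Rf S (x - 2) := by
  unfold Psi
  rw [h.R1 hx, h.R0 (x := x - 4) (by linarith)]; ring

theorem Psi_C (h : Cant θ S) {x : ℝ} (hx : 3 ≤ x) :
    Psi S x = -x + 5 - Rf S 1 + Rf S (x - 4) := by
  unfold Psi
  rw [h.R1 (x := x) (by linarith), h.R1 (x := x - 2) (by linarith)]; ring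

theorem W_trans {P Q κ : ℝ → ℝ} (s A B ν : ℝ) (hP : ∀ y, κ y ≠ 0 → P (y + s) = A * y + B + ν * Q y)
    (a b μ t₀ : ℝ) {η : ℝ} (hη : 0 < η) :
    W P (fun x => κ (x - s)) a b μ t₀ η =
      W Q κ (a + μ * A / η) (b + μ * (B - A * (t₀ + s * η) / η)) (μ * ν) (t₀ + s * η) η := by
  ext t
  unfold W
  have e : (t - (t₀ + s * η)) / η = (t - t₀) / η - s := by field_simp; ring
  rw [e]
  by_cases hk : κ ((t - t₀) / η - s) = 0
  · simp [hk]
  · have := hP _ hk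
    rw [sub_add_cancel] at this
    rw [this]
    congr 4
    field_simp; ring

/-- The three translated copies. -/
noncomputable def T3 (S κ : ℝ → ℝ) (a b μ t₀ η : ℝ) : ℝ → ℂ := fun t =>
  (W (Psi S) (fun x => κ (x - 0)) a b μ t₀ η t + W (Psi S) (fun x => κ (x - 2)) a b μ t₀ η t) +
    W (Psi S) (fun x => κ (x - 4)) a b μ t₀ η t

theorem T3_cont (h : Cant θ S) {κ : ℝ → ℝ} (hκ : Continuous κ) (a b μ t₀ η : ℝ) :
    Continuous (T3 S κ a b μ t₀ η) := by
  have := Psi_cont h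
  unfold T3 W
  fun_prop

theorem T3_N1 (h : Cant θ S) (c : Cut θ ε K σ σ' ρ ρ') {κ : ℝ → ℝ} (hκ : Continuous κ)
    (hl : ∀ x ≤ -ε, κ x = 0) (hr : ∀ x, 1 + ε ≤ x → κ x = 0) (a b μ t₀ : ℝ) {η : ℝ} (hη : 0 < η)
    {B : ℝ} (hB0 : 0 ≤ B)
    (hB : ∀ a b μ' s : ℝ, |μ'| ≤ 2 * |μ| → 0 ≤ s → s ≤ 4 →
      N1 (W (Rf S) κ a b μ' (t₀ + s * η) η) ≤ ENNReal.ofReal B) :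
    N1 (T3 S κ a b μ t₀ η) ≤ ENNReal.ofReal (3 * B) := by
  have e1 := c.ele
  have hPc := Psi_cont h
  have hmu : |μ| ≤ 2 * |μ| := by linarith [abs_nonneg μ]
  have hsup : ∀ y, κ y ≠ 0 → -ε < y ∧ y < 1 + ε := by
    intro y hy
    constructor
    · by_contra hc; exact hy (hl y (not_lt.1 hc))
    · by_contra hc; exact hy (hr y (not_lt.1 hc))
  have b0 : N1 (W (Psi S) (fun x => κ (x - 0)) a b μ t₀ η) ≤ ENNReal.ofReal B := by
    rw [W_trans (Q := Rf S) 0 0 0 1 (fun y hy => by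
      rw [add_zero, Psi_A h (by linarith [hsup y hy])]; ring) a b μ t₀ hη]
    exact hB _ _ _ _ (by rw [mul_one]; exact hmu) le_rfl (by norm_num)
  have b2 : N1 (W (Psi S) (fun x => κ (x - 2)) a b μ t₀ η) ≤ ENNReal.ofReal B := by
    rw [W_trans (Q := Rf S) 2 1 (1 + Rf S 1) (-2) (fun y hy => by
      rw [Psi_B h (by linarith [hsup y hy]) (by linarith [hsup y hy]), add_sub_cancel_right]; ring)
      a b μ t₀ hη]
    exact hB _ _ _ _ (by rw [abs_mul]; norm_num; linarith) (by norm_num) (by norm_num)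
  have b4 : N1 (W (Psi S) (fun x => κ (x - 4)) a b μ t₀ η) ≤ ENNReal.ofReal B := by
    rw [W_trans (Q := Rf S) 4 (-1) (1 - Rf S 1) 1 (fun y hy => by
      rw [Psi_C h (by linarith [hsup y hy]), add_sub_cancel_right]; ring) a b μ t₀ hη]
    exact hB _ _ _ _ (by rw [mul_one]; exact hmu) (by norm_num) le_rfl
  have c0 := W_cont hPc (κ := fun x => κ (x - 0)) (by fun_prop) a b μ t₀ η
  have c2 := W_cont hPc (κ := fun x => κ (x - 2)) (by fun_prop) a b μ t₀ η
  have c4 := W_cont hPc (κ := fun x => κ (x - 4)) (by fun_prop) a b μ t₀ η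
  refine (N1_add (by fun_prop) c4).trans ?_
  refine (add_le_add ((N1_add c0 c2).trans (add_le_add b0 b2)) b4).trans ?_
  rw [← ENNReal.ofReal_add hB0 hB0, ← ENNReal.ofReal_add (by positivity) hB0]
  apply ENNReal.ofReal_le_ofReal
  linarith

/-- The three affine pieces. -/
noncomputable def T0 (S σ ρ : ℝ → ℝ) (a b μ t₀ η : ℝ) : ℝ → ℂ := fun t =>
  (W (Psi S) (fun x => ρ x - σ (x - 2)) a b μ t₀ η t +
    W (Psi S) (fun x => ρ (x - 2) - σ (x - 4)) a b μ t₀ η t) +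
    W (fun _ => 0) (fun x => ρ (x - 4) - σ x) a b μ t₀ η t

theorem T0_cont (h : Cant θ S) (c : Cut θ ε K σ σ' ρ ρ') (a b μ t₀ η : ℝ) :
    Continuous (T0 S σ ρ a b μ t₀ η) := by
  have := Psi_cont h
  have := c.scont
  have := c.rcont
  unfold T0 W
  fun_prop

theorem T0_N1 (h : Cant θ S) (c : Cut θ ε K σ σ' ρ ρ') (a b μ t₀ : ℝ) {η : ℝ} (hη : 0 < η)
    (hη1 : η ≤ 1) (ht0 : 0 ≤ t₀ - η) (ht1 : t₀ + 6 * η ≤ 2 * π) :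
    N1 (T0 S σ ρ a b μ t₀ η) ≤ ENNReal.ofReal (30 * (2 * K / θ)) := by
  have h0 := h.pos
  have h2 := h.lt
  have e0 := c.epos
  have e1 := c.ele
  have K1 := c.K1
  have hsc := c.scont
  have hrc := c.rcont
  have hsc' := c.sc
  have hrc' := c.rc
  have hPc := Psi_cont h
  have hKL : K + K ≤ 2 * K / θ := by rw [le_div_iff₀ h0]; nlinarith
  have hL1 : 1 ≤ 2 * K / θ := by linarith
  have tri : ∀ x y : ℝ, |x| ≤ K → |y| ≤ K → |x - y| ≤ 2 * K / θ := fun x y hx hy =>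
    ((abs_sub x y).trans (add_le_add hx hy)).trans hKL
  have ab1 : ∀ x y : ℝ, 0 ≤ x → x ≤ 1 → 0 ≤ y → y ≤ 1 → |x - y| ≤ 2 * K / θ := by
    intro x y _ _ _ _
    refine le_trans ?_ hL1
    rw [abs_le]; constructor <;> linarith
  have p1 : N1 (W (Psi S) (fun x => ρ x - σ (x - 2)) a b μ t₀ η) ≤
      ENNReal.ofReal (10 * (2 * K / θ)) := by
    refine piece (κ := fun x => ρ x - σ (x - 2)) (κ' := fun x => ρ' x - σ' (x - 2))
      (fun y => (c.rd y).sub ((c.sd (y - 2)).comp_sub_const y 2)) (by fun_prop) (u₀ := 1) (v₀ := 2)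
      (by linarith) (by linarith) ?_ ?_ ?_ ?_ hη hη1 (by linarith) (by linarith) (c := 1)
      (d := -1 + Rf S 1) ?_ _ _ _
    · exact fun y => ab1 _ _ (c.r0 _) (c.r1 _) (c.s0 _) (c.s1 _)
    · exact fun y => tri _ _ (c.rb _) (c.sb _)
    · intro y hy
      rw [c.rl y hy, c.sl _ (by linarith), sub_zero]
    · intro y hy
      rw [c.rr y (by linarith), c.sr _ (by linarith), sub_self]
    · intro y hy
      rw [Psi_B h hy.1 (by linarith [hy.2]), h.R0 (x := y - 2) (by linarith [hy.2])]; ring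
  have p2 : N1 (W (Psi S) (fun x => ρ (x - 2) - σ (x - 4)) a b μ t₀ η) ≤
      ENNReal.ofReal (10 * (2 * K / θ)) := by
    refine piece (κ := fun x => ρ (x - 2) - σ (x - 4)) (κ' := fun x => ρ' (x - 2) - σ' (x - 4))
      (fun y => ((c.rd (y - 2)).comp_sub_const y 2).sub ((c.sd (y - 4)).comp_sub_const y 4))
      (by fun_prop) (u₀ := 3) (v₀ := 4)
      (by linarith) (by linarith) ?_ ?_ ?_ ?_ hη hη1 (by linarith) (by linarith) (c := -1)
      (d := 5 - Rf S 1) ?_ _ _ _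
    · exact fun y => ab1 _ _ (c.r0 _) (c.r1 _) (c.s0 _) (c.s1 _)
    · exact fun y => tri _ _ (c.rb _) (c.sb _)
    · intro y hy
      rw [c.rl _ (by linarith), c.sl _ (by linarith), sub_zero]
    · intro y hy
      rw [c.rr _ (by linarith), c.sr _ (by linarith), sub_self]
    · intro y hy
      rw [Psi_C h hy.1, h.R0 (x := y - 4) (by linarith [hy.2])]; ring
  have p3 : N1 (W (fun _ => 0) (fun x => ρ (x - 4) - σ x) a b μ t₀ η) ≤
      ENNReal.ofReal (10 * (2 * K / θ)) := by
    refine piece (κ := fun x => ρ (x - 4) - σ x) (κ' := fun x => ρ' (x - 4) - σ' x)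
      (fun y => ((c.rd (y - 4)).comp_sub_const y 4).sub (c.sd y))
      (by fun_prop) (u₀ := -ε) (v₀ := 5 + ε)
      (by linarith) (by linarith) ?_ ?_ ?_ ?_ hη hη1 (by nlinarith) (by nlinarith) (c := 0)
      (d := 0) ?_ _ _ _
    · exact fun y => ab1 _ _ (c.r0 _) (c.r1 _) (c.s0 _) (c.s1 _)
    · exact fun y => tri _ _ (c.rb _) (c.sb _)
    · intro y hy
      rw [c.rl _ (by linarith), c.sl _ (by linarith), sub_zero]
    · intro y hy
      rw [c.rr _ (by linarith), c.sr _ (by linarith), sub_self]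
    · intro y hy
      ring
  have c1 := W_cont hPc (κ := fun x => ρ x - σ (x - 2)) (by fun_prop) a b μ t₀ η
  have c2 := W_cont hPc (κ := fun x => ρ (x - 2) - σ (x - 4)) (by fun_prop) a b μ t₀ η
  have c3 := W_cont (P := fun _ => 0) continuous_const (κ := fun x => ρ (x - 4) - σ x)
    (by fun_prop) a b μ t₀ η
  refine (N1_add (by fun_prop) c3).trans ?_
  refine (add_le_add ((N1_add c1 c2).trans (add_le_add p1 p2)) p3).trans ?_
  rw [← ENNReal.ofReal_add (by positivity) (by positivity),
    ← ENNReal.ofReal_add (by positivity) (by positivity)]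
  apply ENNReal.ofReal_le_ofReal
  linarith

/-- The block. -/
noncomputable def Bl (S : ℝ → ℝ) (a b μ t₀ η : ℝ) : ℝ → ℂ := fun t =>
  Complex.exp (Complex.I * ((a * t + b + μ * Psi S ((t - t₀) / η) : ℝ) : ℂ)) -
    Complex.exp (Complex.I * ((a * t + b : ℝ) : ℂ))

theorem Bl_cont (h : Cant θ S) (a b μ t₀ η : ℝ) : Continuous (Bl S a b μ t₀ η) := by
  have := Psi_cont h
  unfold Bl; fun_prop

theorem Bl_eq (h : Cant θ S) (c : Cut θ ε K σ σ' ρ ρ') (a b μ t₀ η : ℝ) :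
    Bl S a b μ t₀ η = fun t => T0 S σ ρ a b μ t₀ η t +
      T3 S (fun x => σ x - ρ x) a b μ t₀ η t := by
  have e0 := c.epos
  have e1 := c.ele
  ext t
  unfold Bl T0 T3 W
  set x := (t - t₀) / η with hx
  by_cases hin : 0 ≤ x ∧ x ≤ 5
  · beta_reduce
    rw [sub_zero, c.sr x hin.1, c.rl (x - 4) (by linarith)]
    simp only [mul_zero, add_zero]
    push_cast; ring
  · have hP : Psi S x = 0 := by
      rw [not_and_or, not_le, not_le] at hin
      rcases hin with hh | hh
      · exact Psi_le0 h hh.le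
      · exact Psi_ge5 h hh.le
    rw [hP]
    simp only [sub_zero, mul_zero, add_zero]
    push_cast; ring

theorem T3_split (κ₁ κ₂ : ℝ → ℝ) (a b μ t₀ η : ℝ) :
    T3 S κ₁ a b μ t₀ η = fun t => T3 S (fun x => κ₁ x - κ₂ x) a b μ t₀ η t +
      T3 S κ₂ a b μ t₀ η t := by
  ext t; unfold T3 W; push_cast; ring

theorem aff_int {f : ℝ → ℝ} (hf : Integrable f) (c : ℝ) {η : ℝ} (hη : 0 < η) :
    Integrable (fun t => f ((t - c) / η)) ∧ ∫ t, f ((t - c) / η) = η * ∫ t, f t := by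
  refine ⟨(hf.comp_div hη.ne').comp_sub_right c, ?_⟩
  rw [integral_sub_right_eq_self (fun t => f (t / η)) c, Measure.integral_comp_div,
    abs_of_pos hη, smul_eq_mul]

theorem chi_int (h : Cant θ S) (c : Cut θ ε K σ σ' ρ ρ') (m : ℕ) :
    Integrable (chi θ (fun y => σ y - ρ y) m) ∧
      ∫ t, chi θ (fun y => σ y - ρ y) m t = (2 * θ) ^ m * ∫ t, (σ t - ρ t) := by
  induction m with
  | zero =>
    obtain ⟨hc, hl, hr, -, -⟩ := chi_props h c 0
    refine ⟨hc.integrable_of_hasCompactSupport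
      (HasCompactSupport.intro (isCompact_Icc (a := -ε) (b := 1 + ε)) ?_), by simp [chi]⟩
    intro x hx
    rw [mem_Icc, not_and_or, not_le, not_le] at hx
    rcases hx with hx | hx
    · exact hl x hx.le
    · exact hr x hx.le
  | succ m ih =>
    obtain ⟨i1, i2⟩ := aff_int ih.1 0 h.pos
    obtain ⟨j1, j2⟩ := aff_int ih.1 (1 - θ) h.pos
    simp only [sub_zero] at i1 i2
    have e : ∀ x : ℝ, x - (1 - θ) = x - 1 + θ := fun x => by ring
    simp only [e] at j1 j2
    refine ⟨i1.add j1, ?_⟩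
    simp only [chi]
    rw [integral_add i1 j1, i2, j2, ih.2]; ring

theorem T3_L2 (h : Cant θ S) (c : Cut θ ε K σ σ' ρ ρ') (m : ℕ) (a b μ t₀ : ℝ) {η : ℝ} (hη : 0 < η) :
    ∑' k : ℤ, ENNReal.ofReal (‖fourierCoef
      (T3 S (chi θ (fun y => σ y - ρ y) m) a b μ t₀ η) k‖ ^ 2) ≤
      ENNReal.ofReal (9 * (∫ t, (σ t - ρ t)) * η * (2 * θ) ^ m) := by
  obtain ⟨hc, hl, hr, hn, h1⟩ := chi_props h c m
  obtain ⟨hi, hI⟩ := chi_int h c m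
  set X := chi θ (fun y => σ y - ρ y) m with hX
  have hTc := T3_cont h hc a b μ t₀ η
  have hp := fc_parseval hTc
  rw [← ENNReal.ofReal_tsum_of_nonneg (fun k => by positivity) hp.summable, hp.tsum_eq]
  apply ENNReal.ofReal_le_ofReal
  have i0 := aff_int hi t₀ hη
  have sh : ∀ s : ℝ, Integrable (fun t => X ((t - t₀) / η - s)) ∧
      ∫ t, X ((t - t₀) / η - s) = η * ∫ t, X t := by
    intro s
    have := aff_int hi (t₀ + s * η) hη
    have e : ∀ t : ℝ, (t - (t₀ + s * η)) / η = (t - t₀) / η - s := fun t => by field_simp; ring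
    simpa only [e] using this
  set Y : ℝ → ℝ := fun t => 3 * (X ((t - t₀) / η - 0) + X ((t - t₀) / η - 2) +
    X ((t - t₀) / η - 4)) with hY
  have hYi : Integrable Y := (((sh 0).1.add (sh 2).1).add (sh 4).1).const_mul 3
  have hYI : ∫ t, Y t = 9 * η * ∫ t, X t := by
    have s02 : Integrable (fun t => X ((t - t₀) / η - 0) + X ((t - t₀) / η - 2)) :=
      (sh 0).1.add (sh 2).1
    rw [hY, integral_const_mul, integral_add s02 (sh 4).1,
      integral_add (sh 0).1 (sh 2).1, (sh 0).2, (sh 2).2, (sh 4).2]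
    ring
  have hle : ∀ t, ‖T3 S X a b μ t₀ η t‖ ^ 2 ≤ Y t := by
    intro t
    have n1 : ‖T3 S X a b μ t₀ η t‖ ≤ X ((t - t₀) / η - 0) + X ((t - t₀) / η - 2) +
        X ((t - t₀) / η - 4) := by
      unfold T3
      refine (norm_add₃_le).trans ?_
      simp only [W_norm]
      rw [abs_of_nonneg (hn _), abs_of_nonneg (hn _), abs_of_nonneg (hn _)]
    have n0 := norm_nonneg (T3 S X a b μ t₀ η t)
    have q1 := h1 ((t - t₀) / η - 0)
    have q2 := h1 ((t - t₀) / η - 2)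
    have q3 := h1 ((t - t₀) / η - 4)
    rw [hY]
    simp only
    nlinarith
  have hpi := Real.two_pi_pos
  have s1 : ∫ t in (0:ℝ)..(2 * π), ‖T3 S X a b μ t₀ η t‖ ^ 2 ≤ ∫ t, Y t := by
    rw [intervalIntegral.integral_of_le hpi.le]
    calc _ ≤ ∫ t in Ioc 0 (2 * π), Y t := by
          apply setIntegral_mono
          · have : Continuous fun t => ‖T3 S X a b μ t₀ η t‖ ^ 2 := by fun_prop
            exact (this.intervalIntegrable 0 (2 * π)).1
          · exact hYi.integrableOn
          · exact hle
      _ ≤ _ := setIntegral_le_integral hYi (Filter.Eventually.of_forall fun t =>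
          (sq_nonneg _).trans (hle t))
  rw [hYI, hI] at s1
  have s2 : (2 * π)⁻¹ ≤ 1 := inv_le_one_of_one_le₀ (by linarith [Real.pi_gt_three])
  have s3 : 0 ≤ ∫ t in (0:ℝ)..(2 * π), ‖T3 S X a b μ t₀ η t‖ ^ 2 :=
    intervalIntegral.integral_nonneg hpi.le fun t _ => by positivity
  calc _ ≤ 1 * ∫ t in (0:ℝ)..(2 * π), ‖T3 S X a b μ t₀ η t‖ ^ 2 := by gcongr
    _ ≤ _ := by rw [one_mul]; refine s1.trans (le_of_eq ?_); ring

theorem Bl_zero (h : Cant θ S) (a b μ : ℝ) {t₀ η : ℝ} (hη : 0 < η) {t : ℝ}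
    (ht : t ≤ t₀ ∨ t₀ + 5 * η ≤ t) : Bl S a b μ t₀ η t = 0 := by
  have : Psi S ((t - t₀) / η) = 0 := by
    rcases ht with ht | ht
    · exact Psi_le0 h (div_nonpos_of_nonpos_of_nonneg (by linarith) hη.le)
    · exact Psi_ge5 h (by rw [le_div_iff₀ hη]; linarith)
  unfold Bl
  rw [this]; simp

theorem Bl_norm (a b μ t₀ η t : ℝ) : ‖Bl S a b μ t₀ η t‖ ≤ 2 := by
  unfold Bl
  refine (norm_sub_le _ _).trans ?_
  rw [norm_exp_I, norm_exp_I]; norm_num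

theorem Bl_coef (h : Cant θ S) (a b μ : ℝ) {t₀ η : ℝ} (hη : 0 < η)
    (ht0 : 0 ≤ t₀ - η) (ht1 : t₀ + 6 * η ≤ 2 * π) (k : ℤ) :
    ‖fourierCoef (Bl S a b μ t₀ η) k‖ ≤ 2 * η := by
  refine (fc_norm_le k).trans ?_
  have hc := Bl_cont h a b μ t₀ η
  have key := int_sq_bound (G := fun t => ((√‖Bl S a b μ t₀ η t‖ : ℝ) : ℂ)) (by fun_prop)
    (A := √2) (u := t₀) (v := t₀ + 5 * η) (by linarith) (by linarith) (by linarith) ?_ ?_ ?_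
  · have e : ∀ t, ‖((√‖Bl S a b μ t₀ η t‖ : ℝ) : ℂ)‖ ^ 2 = ‖Bl S a b μ t₀ η t‖ := by
      intro t
      rw [Complex.norm_real, Real.norm_eq_abs, sq_abs, Real.sq_sqrt (norm_nonneg _)]
    simp only [e] at key
    rw [Real.sq_sqrt (by norm_num)] at key
    have hpi := Real.pi_gt_three
    rw [inv_mul_le_iff₀ (by positivity)]
    nlinarith
  · intro t
    rw [Complex.norm_real, Real.norm_eq_abs, abs_of_nonneg (Real.sqrt_nonneg _)]
    exact Real.sqrt_le_sqrt (Bl_norm _ _ _ _ _ _)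
  · intro t ht
    simp only [Bl_zero h a b μ hη (Or.inl ht.le)]; simp
  · intro t ht
    simp only [Bl_zero h a b μ hη (Or.inr (le_of_lt ht))]; simp

theorem Bl_small (h : Cant θ S) (a b μ : ℝ) {t₀ η : ℝ} (hη : 0 < η) (hη1 : η ≤ 1)
    (ht0 : 0 ≤ t₀ - η) (ht1 : t₀ + 6 * η ≤ 2 * π) :
    N1 (Bl S a b μ t₀ η) ≤ ENNReal.ofReal (100 * |μ|) := by
  have hPc := Psi_cont h
  have hpc := psi_cont h
  set w : ℂ := Complex.exp (Complex.I * (b : ℂ)) with hw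
  have hwn : ‖w‖ = 1 := norm_exp_I _
  have e : Bl S a b μ t₀ η = fun t : ℝ => Complex.exp (Complex.I * (a : ℂ) * (t : ℂ)) *
      (w * (Complex.exp (Complex.I * ((μ * Psi S ((t - t₀) / η) : ℝ) : ℂ)) - 1)) := by
    ext t
    unfold Bl
    rw [hw, ← mul_assoc, ← Complex.exp_add, mul_sub, ← Complex.exp_add, mul_one]
    congr 2 <;> push_cast <;> ring
  have e2 : (100 : ℝ) * |μ| = 10 * (10 * |μ|) := by ring
  rw [e, e2]
  refine bump1 (G' := fun t : ℝ =>
    w * (Complex.exp (Complex.I * ((μ * Psi S ((t - t₀) / η) : ℝ) : ℂ)) *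
        (Complex.I * ((μ * (psi S ((t - t₀) / η) * (1 / η)) : ℝ) : ℂ))))
    (u := t₀) (v := t₀ + 5 * η) ?_ ?_ _ hη hη1 (by linarith) (by linarith) (by linarith)
    (by linarith) ?_ ?_ ?_ ?_
  · intro t
    have dx : HasDerivAt (fun t => (t - t₀) / η) (1 / η) t :=
      ((hasDerivAt_id t).sub_const t₀).div_const η
    have d1 : HasDerivAt (fun t => μ * Psi S ((t - t₀) / η))
        (μ * (psi S ((t - t₀) / η) * (1 / η))) t :=
      (HasDerivAt.comp (h₂ := Psi S) t (Psi_deriv h ((t - t₀) / η)) dx).const_mul μ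
    exact ((d1.ofReal_comp.const_mul Complex.I).cexp.sub_const 1).const_mul w
  · fun_prop
  · intro t
    rw [norm_mul, hwn, one_mul]
    refine (Real.norm_exp_I_mul_ofReal_sub_one_le).trans ?_
    rw [Real.norm_eq_abs, abs_mul, mul_comm]
    have := Psi_abs h ((t - t₀) / η)
    gcongr
  · intro t
    rw [norm_mul, norm_mul, norm_mul, hwn, norm_exp_I, one_mul, one_mul, Complex.norm_I, one_mul,
      Complex.norm_real, Real.norm_eq_abs, abs_mul, abs_mul, abs_of_pos (by positivity : 0 < 1 / η)]
    have := psi_abs h ((t - t₀) / η)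
    calc |μ| * (|psi S ((t - t₀) / η)| * (1 / η)) ≤ |μ| * (10 * (1 / η)) := by
          gcongr; linarith
      _ = _ := by ring
  · intro t ht
    rw [Psi_le0 h (div_nonpos_of_nonpos_of_nonneg (by linarith) hη.le)]; simp
  · intro t ht
    rw [Psi_ge5 h (x := (t - t₀) / η) (by rw [le_div_iff₀ hη]; linarith)]; simp

theorem block (h : Cant θ S) (c : Cut θ ε K σ σ' ρ ρ') : ∃ A : ℝ, 1 ≤ A ∧
    ∀ a b μ t₀ η : ℝ, 0 < η → η ≤ 1 → 0 ≤ t₀ - η → t₀ + 6 * η ≤ 2 * π →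
      (∀ m : ℕ, ∃ g f : ℝ → ℂ, Continuous g ∧ Continuous f ∧
        (∀ k, fourierCoef (Bl S a b μ t₀ η) k = fourierCoef g k + fourierCoef f k) ∧
        N1 g ≤ ENNReal.ofReal (A * 2 ^ m) ∧
        ∑' k : ℤ, ENNReal.ofReal (‖fourierCoef f k‖ ^ 2) ≤ ENNReal.ofReal (A * η * (2 * θ) ^ m)) ∧
      (∀ M : ℕ, 2 * |μ| * (θ / 2) ^ M ≤ 1 → N1 (Bl S a b μ t₀ η) ≤ ENNReal.ofReal (A * 2 ^ M)) ∧
      N1 (Bl S a b μ t₀ η) ≤ ENNReal.ofReal (A * |μ|) ∧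
      ∀ k, ‖fourierCoef (Bl S a b μ t₀ η) k‖ ≤ 2 * η := by
  have h0 := h.pos
  have h2 := h.lt
  have e0 := c.epos
  have e1 := c.ele
  have K1 := c.K1
  have hsc := c.scont
  have hrc := c.rcont
  obtain ⟨-, hl0, hr0, hn0, -⟩ := chi_props h c 0
  simp only [chi] at hl0 hr0 hn0
  set L := 30 * (2 * K / θ) with hL
  set I := ∫ t, (σ t - ρ t) with hI
  have hL0 : 0 < L := by positivity
  have hI0 : 0 ≤ I := integral_nonneg hn0
  refine ⟨100 + 10 * L + 9 * I, by linarith, ?_⟩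
  intro a b μ t₀ η hη hη1 ht0 ht1
  have dom : ∀ s : ℝ, 0 ≤ s → s ≤ 4 → 0 ≤ (t₀ + s * η) - ε * η ∧
      (t₀ + s * η) + (1 + ε) * η ≤ 2 * π := by
    intro s hs hs4
    constructor <;> nlinarith
  refine ⟨fun m => ?_, fun M hM => ?_, ?_, Bl_coef h a b μ hη ht0 ht1⟩
  · obtain ⟨hc, hl, hr, -, -⟩ := chi_props h c m
    set X := chi θ (fun y => σ y - ρ y) m with hX
    have h1m : (1:ℝ) ≤ 2 ^ m := one_le_pow₀ (by norm_num)
    have cd : Continuous fun x => (σ x - ρ x) - X x := by fun_prop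
    have cT0 := T0_cont h c a b μ t₀ η
    have cT3 := T3_cont h cd a b μ t₀ η
    have cX := T3_cont h hc a b μ t₀ η
    refine ⟨fun t => T0 S σ ρ a b μ t₀ η t + T3 S (fun x => (σ x - ρ x) - X x) a b μ t₀ η t,
      T3 S X a b μ t₀ η, by fun_prop, cX, fun k => ?_, ?_, ?_⟩
    · rw [← fc_add (by fun_prop) cX, Bl_eq h c, T3_split _ X]
      congr 1; ext t; ring
    · refine (N1_add cT0 cT3).trans ?_
      have b1 := T0_N1 h c a b μ t₀ hη hη1 ht0 ht1
      have hLm : 0 ≤ L * (2 ^ m - 1) := mul_nonneg hL0.le (by linarith)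
      have b2 := T3_N1 h c cd (fun x hx => by rw [hl x hx, hl0 x hx, sub_zero])
        (fun x hx => by rw [hr x hx, hr0 x hx, sub_zero]) a b μ t₀ hη (B := L * (2 ^ m - 1)) hLm
        (fun a b μ' s _ hs hs4 => key_diff h c m a b μ' _ η hη hη1 (dom s hs hs4).1 (dom s hs hs4).2)
      refine (add_le_add b1 b2).trans ?_
      rw [← ENNReal.ofReal_add hL0.le (by positivity)]
      apply ENNReal.ofReal_le_ofReal
      nlinarith
    · refine (T3_L2 h c m a b μ t₀ hη).trans (ENNReal.ofReal_le_ofReal ?_)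
      gcongr
      linarith
  · have h1m : (1:ℝ) ≤ 2 ^ M := one_le_pow₀ (by norm_num)
    have cd : Continuous fun x => σ x - ρ x := by fun_prop
    rw [Bl_eq h c]
    refine (N1_add (T0_cont h c a b μ t₀ η) (T3_cont h cd a b μ t₀ η)).trans ?_
    have b1 := T0_N1 h c a b μ t₀ hη hη1 ht0 ht1
    have hLm : 0 ≤ L * (2 * 2 ^ M - 1) := mul_nonneg hL0.le (by linarith)
    have b2 := T3_N1 h c cd hl0 hr0 a b μ t₀ hη (B := L * (2 * 2 ^ M - 1)) hLm
      (fun a b μ' s hμ hs hs4 => key_full h c M a b μ' _ η hη hη1 (dom s hs hs4).1 (dom s hs hs4).2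
        (le_trans (by gcongr) hM))
    refine (add_le_add b1 b2).trans ?_
    rw [← ENNReal.ofReal_add hL0.le (by positivity)]
    apply ENNReal.ofReal_le_ofReal
    nlinarith
  · refine (Bl_small h a b μ hη hη1 ht0 ht1).trans (ENNReal.ofReal_le_ofReal ?_)
    gcongr
    linarith

end

theorem lp_scale {a : ℝ} {T : ℕ → ℝ} (h0 : a ≤ T 0) (M : ℕ) :
    a ≤ T M ∨ ∃ m < M, T (m + 1) < a ∧ a ≤ T m := by
  induction M with
  | zero => exact Or.inl h0
  | succ M ih =>
    rcases ih with h | ⟨m, hm, h⟩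
    · rcases le_or_gt a (T (M + 1)) with h' | h'
      · exact Or.inl h'
      · exact Or.inr ⟨M, by omega, h', h⟩
    · exact Or.inr ⟨m, by omega, h⟩

theorem lp_point {a p : ℝ} (ha : 0 ≤ a) (hp : 1 < p) {T g f : ℕ → ℝ} (hT : ∀ m, 0 < T m)
    (h0 : a ≤ T 0) (hg : ∀ m, 0 ≤ g m) (hf : ∀ m, 0 ≤ f m) (hgf : ∀ m, a ≤ g m + f m) (M : ℕ) :
    a ^ p ≤ ∑ m ∈ Finset.range M, (T m ^ p * (2 / T (m + 1)) * g m +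
      T m ^ p * (4 / T (m + 1) ^ 2) * f m ^ 2) + T M ^ (p - 1) * a := by
  have hnn : ∀ m, 0 ≤ T m ^ p * (2 / T (m + 1)) * g m + T m ^ p * (4 / T (m + 1) ^ 2) * f m ^ 2 := by
    intro m
    have := hT m; have := hT (m + 1); have := hg m; have := hf m
    positivity
  rcases lp_scale h0 M with h | ⟨m, hm, h1, h2⟩
  · have e : a ^ p = a ^ (p - 1) * a := by
      rcases ha.eq_or_lt with h' | h'
      · rw [← h', Real.zero_rpow (by linarith)]; ring
      · rw [← Real.rpow_add_one h'.ne']; congr 1; ring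
    have := Finset.sum_nonneg fun m (_ : m ∈ Finset.range M) => hnn m
    have h3 : a ^ (p - 1) ≤ T M ^ (p - 1) := Real.rpow_le_rpow ha h (by linarith)
    rw [e]
    nlinarith
  · have s1 := Finset.single_le_sum (f := fun m => T m ^ p * (2 / T (m + 1)) * g m +
      T m ^ p * (4 / T (m + 1) ^ 2) * f m ^ 2) (fun m _ => hnn m) (Finset.mem_range.2 hm)
    have s2 : 0 ≤ T M ^ (p - 1) * a := mul_nonneg (Real.rpow_nonneg (hT M).le _) ha
    have s3 : a ^ p ≤ T m ^ p := Real.rpow_le_rpow ha h2 (by linarith)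
    have t1 := hT (m + 1)
    have t0 : 0 < T m ^ p := Real.rpow_pos_of_pos (hT m) _
    have key : 1 ≤ 2 / T (m + 1) * g m + 4 / T (m + 1) ^ 2 * f m ^ 2 := by
      have e : 2 / T (m + 1) * g m + 4 / T (m + 1) ^ 2 * f m ^ 2 =
        (2 * g m / T (m + 1)) + (2 * f m / T (m + 1)) ^ 2 := by ring
      rw [e]
      have q1 : 0 ≤ 2 * g m / T (m + 1) := by have := hg m; positivity
      have q2 : 2 ≤ 2 * g m / T (m + 1) + 2 * f m / T (m + 1) := by
        rw [← add_div, le_div_iff₀ t1]; linarith [hgf m]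
      have q3 : 0 ≤ 2 * f m / T (m + 1) := by have := hf m; positivity
      rcases le_or_gt 1 (2 * g m / T (m + 1)) with q | q
      · nlinarith [sq_nonneg (2 * f m / T (m + 1))]
      · nlinarith
    nlinarith

theorem lp_seq {θ A η p : ℝ} (hθ : 0 < θ) (hθ1 : θ < 1) (hA : 1 ≤ A) (hη : 0 < η) (hp : 1 < p)
    (hp2 : p < 2) (M : ℕ) {a : ℤ → ℝ} {g f : ℕ → ℤ → ℝ} (ha : ∀ k, 0 ≤ a k)
    (ha2 : ∀ k, a k ≤ 2 * η)
    (hg : ∀ m k, 0 ≤ g m k) (hf : ∀ m k, 0 ≤ f m k) (hgf : ∀ m k, a k ≤ g m k + f m k)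
    (sg : ∀ m, ∑' k, ENNReal.ofReal (g m k) ≤ ENNReal.ofReal (A * 2 ^ m))
    (sf : ∀ m, ∑' k, ENNReal.ofReal (f m k ^ 2) ≤ ENNReal.ofReal (A * η * (2 * θ) ^ m))
    (sa : ∑' k, ENNReal.ofReal (a k) ≤ ENNReal.ofReal (A * 2 ^ M)) :
    ∑' k, ENNReal.ofReal (a k ^ p) ≤ ENNReal.ofReal (8 * A / θ ^ 2 * η ^ (p - 1) *
      ∑ m ∈ Finset.range (M + 1), (2 * θ ^ (p - 1)) ^ m) := by
  set T : ℕ → ℝ := fun m => 2 * η * θ ^ m with hT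
  have hTp : ∀ m, 0 < T m := fun m => by positivity
  set c : ℕ → ℝ := fun m => T m ^ p * (2 / T (m + 1)) with hc
  set d : ℕ → ℝ := fun m => T m ^ p * (4 / T (m + 1) ^ 2) with hd
  have hc0 : ∀ m, 0 ≤ c m := fun m => by have := hTp m; have := hTp (m + 1); positivity
  have hd0 : ∀ m, 0 ≤ d m := fun m => by have := hTp m; have := hTp (m + 1); positivity
  have he0 : 0 ≤ T M ^ (p - 1) := Real.rpow_nonneg (hTp M).le _
  have step1 : ∑' k, ENNReal.ofReal (a k ^ p) ≤
      ∑' k, (∑ m ∈ Finset.range M, (ENNReal.ofReal (c m) * ENNReal.ofReal (g m k) +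
        ENNReal.ofReal (d m) * ENNReal.ofReal (f m k ^ 2)) +
        ENNReal.ofReal (T M ^ (p - 1)) * ENNReal.ofReal (a k)) := by
    apply ENNReal.tsum_le_tsum
    intro k
    have h := lp_point (ha k) hp hTp (g := fun m => g m k) (f := fun m => f m k)
      (by simpa [hT] using ha2 k) (fun m => hg m k) (fun m => hf m k) (fun m => hgf m k) M
    refine (ENNReal.ofReal_le_ofReal h).trans (le_of_eq ?_)
    have nn : ∀ m, 0 ≤ c m * g m k + d m * f m k ^ 2 := fun m =>
      add_nonneg (mul_nonneg (hc0 m) (hg m k)) (mul_nonneg (hd0 m) (sq_nonneg _))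
    rw [ENNReal.ofReal_add (Finset.sum_nonneg fun m _ => nn m) (mul_nonneg he0 (ha k)),
      ENNReal.ofReal_mul he0, ENNReal.ofReal_sum_of_nonneg fun m _ => nn m]
    congr 1
    refine Finset.sum_congr rfl fun m _ => ?_
    rw [ENNReal.ofReal_add (mul_nonneg (hc0 m) (hg m k)) (mul_nonneg (hd0 m) (sq_nonneg _)),
      ENNReal.ofReal_mul (hc0 m), ENNReal.ofReal_mul (hd0 m)]
  refine step1.trans ?_
  rw [ENNReal.tsum_add, Summable.tsum_finsetSum fun _ _ => ENNReal.summable, ENNReal.tsum_mul_left]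
  have hη' : 0 < η ^ (p - 1) := Real.rpow_pos_of_pos hη _
  have hTr : ∀ m, T m ^ (p - 1) ≤ 2 * (η ^ (p - 1) * (θ ^ (p - 1)) ^ m) := by
    intro m
    simp only [hT]
    rw [Real.mul_rpow (by positivity) (by positivity), Real.mul_rpow (by norm_num) hη.le,
      ← Real.rpow_natCast, ← Real.rpow_mul hθ.le, mul_comm (m : ℝ), Real.rpow_mul hθ.le,
      Real.rpow_natCast, mul_assoc]
    gcongr
    calc (2:ℝ) ^ (p - 1) ≤ 2 ^ (1:ℝ) := Real.rpow_le_rpow_of_exponent_le (by norm_num) (by linarith)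
      _ = 2 := by norm_num
  have hTT : ∀ m, T (m + 1) = θ * T m := fun m => by simp only [hT]; ring
  have hTe : ∀ m, T m ^ p = T m ^ (p - 1) * T m := fun m => by
    rw [← Real.rpow_add_one (hTp m).ne']; congr 1; ring
  have hθ2 : 1 ≤ 1 / θ := by rw [le_div_iff₀ hθ]; linarith
  have hθ3 : 1 / θ ≤ 1 / θ ^ 2 := by
    rw [div_le_div_iff₀ hθ (by positivity)]; nlinarith
  have c1 : ∀ m, c m * (A * 2 ^ m) ≤ 4 * A / θ ^ 2 * η ^ (p - 1) * (2 * θ ^ (p - 1)) ^ m := by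
    intro m
    have e : c m = T m ^ (p - 1) * (2 / θ) := by
      simp only [hc]; rw [hTT, hTe]; have := (hTp m).ne'; field_simp
    rw [e, mul_pow]
    calc _ ≤ 2 * (η ^ (p - 1) * (θ ^ (p - 1)) ^ m) * (2 * (1 / θ ^ 2)) * (A * 2 ^ m) := by
          gcongr
          · exact hTr m
          · rw [div_eq_mul_one_div]; gcongr
      _ = _ := by ring
  have d1 : ∀ m, d m * (A * η * (2 * θ) ^ m) ≤
      4 * A / θ ^ 2 * η ^ (p - 1) * (2 * θ ^ (p - 1)) ^ m := by
    intro m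
    have e : d m * (A * η * (2 * θ) ^ m) = T m ^ (p - 1) * (2 * A / θ ^ 2 * 2 ^ m) := by
      simp only [hd]; rw [hTT, hTe]; have := (hTp m).ne'
      have e2 : η * θ ^ m = T m / 2 := by simp only [hT]; ring
      calc _ = T m ^ (p - 1) * T m * (4 / (θ * T m) ^ 2) * (A * 2 ^ m * (η * θ ^ m)) := by
            rw [mul_pow 2 θ]; ring
        _ = _ := by rw [e2]; field_simp; ring
    rw [e, mul_pow]
    calc _ ≤ 2 * (η ^ (p - 1) * (θ ^ (p - 1)) ^ m) * (2 * A / θ ^ 2 * 2 ^ m) := by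
          gcongr
          exact hTr m
      _ = _ := by ring
  have e1 : T M ^ (p - 1) * (A * 2 ^ M) ≤ 8 * A / θ ^ 2 * η ^ (p - 1) * (2 * θ ^ (p - 1)) ^ M := by
    rw [mul_pow]
    calc _ ≤ 2 * (η ^ (p - 1) * (θ ^ (p - 1)) ^ M) * (A * 2 ^ M) := by
          gcongr
          exact hTr M
      _ = 2 * A * 1 * η ^ (p - 1) * (2 ^ M * (θ ^ (p - 1)) ^ M) := by ring
      _ ≤ 8 * A * (1 / θ ^ 2) * η ^ (p - 1) * (2 ^ M * (θ ^ (p - 1)) ^ M) := by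
          gcongr
          · norm_num
          · linarith
      _ = _ := by ring
  rw [Finset.sum_range_succ, mul_add, Finset.mul_sum]
  rw [ENNReal.ofReal_add (Finset.sum_nonneg fun m _ => by positivity) (by positivity),
    ENNReal.ofReal_sum_of_nonneg fun m _ => by positivity]
  refine add_le_add (Finset.sum_le_sum fun m _ => ?_) ?_
  · rw [ENNReal.tsum_add, ENNReal.tsum_mul_left, ENNReal.tsum_mul_left]
    calc _ ≤ ENNReal.ofReal (c m) * ENNReal.ofReal (A * 2 ^ m) +
        ENNReal.ofReal (d m) * ENNReal.ofReal (A * η * (2 * θ) ^ m) := by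
          gcongr
          · exact sg m
          · exact sf m
      _ = ENNReal.ofReal (c m * (A * 2 ^ m) + d m * (A * η * (2 * θ) ^ m)) := by
          rw [ENNReal.ofReal_add (mul_nonneg (hc0 m) (by positivity))
            (mul_nonneg (hd0 m) (by positivity)), ENNReal.ofReal_mul (hc0 m),
            ENNReal.ofReal_mul (hd0 m)]
      _ ≤ _ := by
          apply ENNReal.ofReal_le_ofReal
          refine (add_le_add (c1 m) (d1 m)).trans (le_of_eq ?_)
          ring
  · refine (mul_le_mul_right sa _).trans ?_
    rw [← ENNReal.ofReal_mul he0]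
    exact ENNReal.ofReal_le_ofReal e1

theorem ofReal_norm_rpow (z : ℂ) {p : ℝ} (hp : 0 ≤ p) :
    ENNReal.ofReal (‖z‖ ^ p) = ‖z‖ₑ ^ p := by
  rw [← ENNReal.ofReal_rpow_of_nonneg (norm_nonneg _) hp, ofReal_norm]

/-- The number of scales. -/
theorem exists_M {θ L : ℝ} (hθ : 0 < θ) (hθ1 : θ < 1 / 2) (hL : 1 / 2 ≤ L) :
    ∃ M : ℕ, 2 * L * (θ / 2) ^ M ≤ 1 ∧ (2 / θ) ^ M ≤ 2 / θ * (2 * L) := by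
  have h1 : 1 < 2 / θ := by rw [lt_div_iff₀ hθ]; linarith
  obtain ⟨n, hn1, hn2⟩ := exists_nat_pow_near (by linarith : 1 ≤ 2 * L) h1
  refine ⟨n + 1, ?_, ?_⟩
  · have e : (θ / 2) ^ (n + 1) = 1 / (2 / θ) ^ (n + 1) := by
      rw [← one_div_pow, one_div_div]
    rw [e, mul_one_div, div_le_one (by positivity)]
    exact hn2.le
  · rw [pow_succ, mul_comm]
    gcongr

/-- Growth function of the scale sum. -/
theorem scale_sum {θ α p : ℝ} (hα : 0 < α) (hθ0 : 0 < θ) (hθh : θ < 1 / 2) (hθ : θ ^ α = 1 / 2)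
    (hp : 1 ≤ p) {B : ℝ → ℝ}
    (hB : (p < 1 + α ∧ ∀ L, B L = L ^ (1 - p / (1 + α))) ∨ (p = 1 + α ∧ ∀ L, B L = Real.log L) ∨
      (1 + α < p ∧ ∀ L, B L = 1)) :
    ∃ C : ℝ, 1 ≤ C ∧ ∀ L : ℝ, 2 ≤ L → ∃ M : ℕ, 2 * L * (θ / 2) ^ M ≤ 1 ∧
      ∑ m ∈ Finset.range (M + 1), (2 * θ ^ (p - 1)) ^ m ≤ C * B L := by
  have h2 : (2:ℝ) = θ ^ (-α) := by rw [Real.rpow_neg hθ0.le, hθ]; norm_num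
  have hr : 2 * θ ^ (p - 1) = θ ^ (p - 1 - α) := by
    rw [h2, ← Real.rpow_add hθ0]; congr 1; ring
  have hb : 2 / θ = θ ^ (-(1 + α)) := by
    rw [div_eq_mul_inv, ← Real.rpow_neg_one θ]
    nth_rw 1 [h2]
    rw [← Real.rpow_add hθ0]; congr 1; ring
  have hth1 : θ < 1 := by linarith
  rw [hr]
  rcases hB with ⟨hpl, hB⟩ | ⟨hpe, hB⟩ | ⟨hpg, hB⟩
  · set r := θ ^ (p - 1 - α) with hrd
    have hr1 : 1 < r := Real.one_lt_rpow_of_pos_of_lt_one_of_neg hθ0 hth1 (by linarith)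
    set s := 1 - p / (1 + α) with hs
    have hs0 : 0 ≤ s := by
      rw [hs, sub_nonneg, div_le_one (by linarith)]; exact hpl.le
    have hrs : ∀ M : ℕ, r ^ M = ((2 / θ) ^ M) ^ s := by
      intro M
      rw [hb, hrd, ← Real.rpow_natCast, ← Real.rpow_natCast, ← Real.rpow_mul hθ0.le,
        ← Real.rpow_mul hθ0.le, ← Real.rpow_mul hθ0.le]
      congr 1
      rw [hs]; field_simp; ring
    refine ⟨1 + r / (r - 1) * (2 / θ * 2) ^ s, ?_, ?_⟩
    · have : 0 ≤ r / (r - 1) * (2 / θ * 2) ^ s := by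
        have : 0 < r - 1 := by linarith
        positivity
      linarith
    intro L hL
    obtain ⟨M, h1, h3⟩ := exists_M hθ0 hθh (by linarith : 1 / 2 ≤ L)
    refine ⟨M, h1, ?_⟩
    rw [geom_sum_eq hr1.ne', hB]
    have hr0 : 0 < r - 1 := by linarith
    have hLs : 0 < L ^ s := Real.rpow_pos_of_pos (by linarith) _
    calc (r ^ (M + 1) - 1) / (r - 1) ≤ r ^ (M + 1) / (r - 1) := by gcongr; linarith
      _ = r / (r - 1) * ((2 / θ) ^ M) ^ s := by rw [← hrs]; ring
      _ ≤ r / (r - 1) * (2 / θ * (2 * L)) ^ s := by gcongr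
      _ = r / (r - 1) * (2 / θ * 2) ^ s * L ^ s := by
          rw [← mul_assoc (2 / θ), Real.mul_rpow (by positivity) (by linarith)]; ring
      _ ≤ _ := by nlinarith
  · have e : p - 1 - α = 0 := by linarith
    rw [e, Real.rpow_zero]
    have hl2 := Real.log_pos (by norm_num : (1:ℝ) < 2)
    have hlb : 0 < Real.log (2 / θ) := Real.log_pos (by rw [lt_div_iff₀ hθ0]; linarith)
    refine ⟨1 + (2 / Real.log 2 + 2 / Real.log (2 / θ)), ?_, ?_⟩
    · have : 0 ≤ 2 / Real.log 2 + 2 / Real.log (2 / θ) := by positivity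
      linarith
    intro L hL
    obtain ⟨M, h1, h3⟩ := exists_M hθ0 hθh (by linarith : 1 / 2 ≤ L)
    refine ⟨M, h1, ?_⟩
    rw [hB]
    have hlL : Real.log 2 ≤ Real.log L := Real.log_le_log (by norm_num) hL
    have hLM : M * Real.log (2 / θ) ≤ Real.log (2 / θ) + 2 * Real.log L := by
      have := Real.log_le_log (by positivity) h3
      rw [Real.log_pow, Real.log_mul (by positivity) (by positivity),
        Real.log_mul (by norm_num) (by positivity)] at this
      linarith
    have hM : (M : ℝ) ≤ 1 + 2 / Real.log (2 / θ) * Real.log L := by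
      rw [← mul_le_mul_iff_left₀ hlb]
      refine hLM.trans (le_of_eq ?_)
      field_simp
    have h4 : 2 ≤ 2 / Real.log 2 * Real.log L := by
      rw [div_mul_eq_mul_div, le_div_iff₀ hl2]; linarith
    simp only [one_pow, Finset.sum_const, Finset.card_range, nsmul_eq_mul, mul_one]
    push_cast
    nlinarith
  · set r := θ ^ (p - 1 - α) with hrd
    have hr1 : r < 1 := Real.rpow_lt_one hθ0.le hth1 (by linarith)
    have hr0 : 0 < r := Real.rpow_pos_of_pos hθ0 _
    refine ⟨1 / (1 - r), ?_, ?_⟩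
    · rw [le_div_iff₀ (by linarith)]; linarith
    intro L hL
    obtain ⟨M, h1, h3⟩ := exists_M hθ0 hθh (by linarith : 1 / 2 ≤ L)
    refine ⟨M, h1, ?_⟩
    rw [hB, mul_one, one_div, ← tsum_geometric_of_lt_one hr0.le hr1]
    exact (summable_geometric_of_lt_one hr0.le hr1).sum_le_tsum _ fun _ _ => by positivity

section
variable {θ ε K : ℝ} {S σ σ' ρ ρ' : ℝ → ℝ}

theorem block_p (h : Cant θ S) (c : Cut θ ε K σ σ' ρ ρ') {α : ℝ} (hα : 0 < α)
    (hθ : θ ^ α = 1 / 2) {p : ℝ} (hp : 1 < p) (hp2 : p < 2) {B : ℝ → ℝ}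
    (hB : (p < 1 + α ∧ ∀ L, B L = L ^ (1 - p / (1 + α))) ∨ (p = 1 + α ∧ ∀ L, B L = Real.log L) ∨
      (1 + α < p ∧ ∀ L, B L = 1)) :
    ∃ C : ℝ, 1 ≤ C ∧ ∀ a b μ t₀ η L : ℝ, 0 < η → η ≤ 1 → 0 ≤ t₀ - η → t₀ + 6 * η ≤ 2 * π →
      2 ≤ L → |μ| ≤ L →
      ∑' k : ℤ, ‖fourierCoef (Bl S a b μ t₀ η) k‖ₑ ^ p ≤ ENNReal.ofReal (C * η ^ (p - 1) * B L) := by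
  have h0 := h.pos
  have h2 := h.lt
  obtain ⟨A, hA, hbl⟩ := block h c
  obtain ⟨C, hC, hCb⟩ := scale_sum hα h0 h2 hθ hp.le hB
  have hA8 : 1 ≤ 8 * A / θ ^ 2 := by
    rw [le_div_iff₀ (by positivity)]; nlinarith
  refine ⟨8 * A / θ ^ 2 * C, one_le_mul_of_one_le_of_one_le hA8 hC, ?_⟩
  intro a b μ t₀ η L hη hη1 ht0 ht1 hL hμ
  obtain ⟨hdec, hM, -, hco⟩ := hbl a b μ t₀ η hη hη1 ht0 ht1
  choose g f hgc hfc hgf hg hf using hdec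
  obtain ⟨M, hM1, hM2⟩ := hCb L hL
  have hM' := hM M (le_trans (by gcongr) hM1)
  have key := lp_seq h0 (by linarith) hA hη hp hp2 M
    (a := fun k => ‖fourierCoef (Bl S a b μ t₀ η) k‖) (g := fun m k => ‖fourierCoef (g m) k‖)
    (f := fun m k => ‖fourierCoef (f m) k‖) (fun k => norm_nonneg _) hco (fun m k => norm_nonneg _)
    (fun m k => norm_nonneg _) (fun m k => by rw [hgf m k]; exact norm_add_le _ _)
    (fun m => by simpa only [ofReal_norm, N1] using hg m) hf
    (by simpa only [ofReal_norm, N1] using hM')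
  simp only [ofReal_norm_rpow _ (by linarith : 0 ≤ p)] at key
  refine key.trans (ENNReal.ofReal_le_ofReal ?_)
  calc _ ≤ 8 * A / θ ^ 2 * η ^ (p - 1) * (C * B L) := by gcongr
    _ = _ := by ring

theorem block_1 (h : Cant θ S) (c : Cut θ ε K σ σ' ρ ρ') {α : ℝ} (hα : 0 < α)
    (hθ : θ ^ α = 1 / 2) :
    ∃ C : ℝ, 1 ≤ C ∧ ∀ a b μ t₀ η : ℝ, 0 < η → η ≤ 1 → 0 ≤ t₀ - η → t₀ + 6 * η ≤ 2 * π →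
      N1 (Bl S a b μ t₀ η) ≤ ENNReal.ofReal (C * |μ| ^ (α / (1 + α))) := by
  have h0 := h.pos
  have h2 := h.lt
  obtain ⟨A, hA, hbl⟩ := block h c
  have h2' : (2:ℝ) = θ ^ (-α) := by rw [Real.rpow_neg h0.le, hθ]; norm_num
  have hb : 2 / θ = θ ^ (-(1 + α)) := by
    rw [div_eq_mul_inv, ← Real.rpow_neg_one θ]
    nth_rw 1 [h2']
    rw [← Real.rpow_add h0]; congr 1; ring
  set s := α / (1 + α) with hs
  have hs0 : 0 < s := by positivity
  have hs1 : s ≤ 1 := by rw [hs, div_le_one (by linarith)]; linarith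
  have hrs : ∀ M : ℕ, (2:ℝ) ^ M = ((2 / θ) ^ M) ^ s := by
    intro M
    rw [hb]
    nth_rw 1 [h2']
    rw [← Real.rpow_natCast, ← Real.rpow_natCast, ← Real.rpow_mul h0.le,
      ← Real.rpow_mul h0.le, ← Real.rpow_mul h0.le]
    congr 1
    rw [hs]; field_simp
  have h1 : 1 ≤ (2 / θ * 2) ^ s := by
    apply Real.one_le_rpow _ hs0.le
    rw [div_mul_eq_mul_div, le_div_iff₀ h0]; linarith
  refine ⟨A * (2 / θ * 2) ^ s, one_le_mul_of_one_le_of_one_le hA h1, ?_⟩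
  intro a b μ t₀ η hη hη1 ht0 ht1
  obtain ⟨-, hM, hsm, -⟩ := hbl a b μ t₀ η hη hη1 ht0 ht1
  rcases le_or_gt (1 / 2) |μ| with hμ | hμ
  · obtain ⟨M, m1, m2⟩ := exists_M h0 h2 hμ
    refine (hM M m1).trans (ENNReal.ofReal_le_ofReal ?_)
    rw [hrs]
    calc _ ≤ A * (2 / θ * (2 * |μ|)) ^ s := by gcongr
      _ = _ := by
          rw [← mul_assoc (2 / θ), Real.mul_rpow (by positivity) (abs_nonneg _)]; ring
  · refine hsm.trans (ENNReal.ofReal_le_ofReal ?_)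
    have e : |μ| ≤ |μ| ^ s := by
      rcases (abs_nonneg μ).eq_or_lt with h' | h'
      · rw [← h']; exact Real.rpow_nonneg le_rfl _
      · calc |μ| = |μ| ^ (1:ℝ) := (Real.rpow_one _).symm
          _ ≤ _ := Real.rpow_le_rpow_of_exponent_ge h' (by linarith) hs1
    calc A * |μ| ≤ A * 1 * |μ| ^ s := by rw [mul_one]; gcongr
      _ ≤ _ := by gcongr

end

theorem exists_intervals : ∃ I : ℕ → ℝ × ℝ,
    (∀ n, 0 ≤ (I n).1 ∧ (I n).1 < (I n).2 ∧ (I n).2 ≤ 2 * π) ∧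
    ∀ u v : ℝ, 0 ≤ u → u < v → v ≤ 2 * π → ∃ n, u < (I n).1 ∧ (I n).2 < v := by
  classical
  obtain ⟨e, he⟩ := exists_surjective_nat (ℚ × ℚ)
  refine ⟨fun n => if 0 ≤ ((e n).1 : ℝ) ∧ ((e n).1 : ℝ) < (e n).2 ∧ ((e n).2 : ℝ) ≤ 2 * π then
    (((e n).1 : ℝ), ((e n).2 : ℝ)) else (1, 2), ?_, ?_⟩
  · intro n
    have := Real.pi_gt_three
    by_cases hc : 0 ≤ ((e n).1 : ℝ) ∧ ((e n).1 : ℝ) < (e n).2 ∧ ((e n).2 : ℝ) ≤ 2 * π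
    · simp only [if_pos hc]; exact hc
    · simp only [if_neg hc]
      refine ⟨by norm_num, by norm_num, by linarith⟩
  · intro u v hu huv hv
    obtain ⟨q, hq1, hq2⟩ := exists_rat_btwn huv
    obtain ⟨q', hq1', hq2'⟩ := exists_rat_btwn hq2
    obtain ⟨n, hn⟩ := he (q, q')
    refine ⟨n, ?_⟩
    have hc : 0 ≤ ((e n).1 : ℝ) ∧ ((e n).1 : ℝ) < (e n).2 ∧ ((e n).2 : ℝ) ≤ 2 * π := by
      rw [hn]
      exact ⟨by simp only; linarith, hq1', by simp only; linarith⟩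
    simp only [if_pos hc]
    rw [hn]
    exact ⟨hq1, hq2'⟩

/-- The n-th summand of the construction. -/
noncomputable def fn (S : ℝ → ℝ) (t η : ℕ → ℝ) (n : ℕ) (x : ℝ) : ℝ :=
  η n ^ 2 * Psi S ((x - t n) / η n)

structure Dat (S : ℝ → ℝ) (t η : ℕ → ℝ) : Prop where
  pos : ∀ n, 0 < η n
  le1 : η 0 ≤ 1
  dec : ∀ n, η (n + 1) ≤ η n / 10
  lo : ∀ n, 0 ≤ t n - η n
  hi : ∀ n, t n + 6 * η n ≤ 2 * π
  aff : ∀ n, ∃ a b : ℝ, ∀ x ∈ Icc (t n) (t n + 5 * η n),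
    ∑ k ∈ Finset.range n, fn S t η k x = a * x + b
  dense : ∀ u v : ℝ, 0 ≤ u → u < v → v ≤ 2 * π → ∃ n, u < t n ∧ t n + 5 * η n < v

theorem LA_step {Φ : ℝ → ℝ} (hΦ : LA Φ) {u v η₀ : ℝ} (huv : u < v) (hη : 0 < η₀) :
    ∃ t η : ℝ, 0 < η ∧ η ≤ η₀ ∧ u ≤ t - η ∧ t + 6 * η ≤ v ∧
      ∃ a b : ℝ, ∀ x ∈ Icc t (t + 5 * η), Φ x = a * x + b := by
  obtain ⟨u', v', a, b, h1, h2, h3, h4⟩ := hΦ u v huv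
  set η := min η₀ ((v' - u') / 7) with hd
  have e1 : η ≤ η₀ := min_le_left _ _
  have e2 : η ≤ (v' - u') / 7 := min_le_right _ _
  have e0 : 0 < η := lt_min hη (by linarith)
  refine ⟨u' + η, η, e0, e1, by linarith, by linarith, a, b, fun x hx => h4 x ⟨?_, ?_⟩⟩
  · linarith [hx.1]
  · linarith [hx.2]

section
variable {θ : ℝ} {S : ℝ → ℝ}

theorem exists_dat (h : Cant θ S) : ∃ t η : ℕ → ℝ, Dat S t η := by
  obtain ⟨I, hI, hId⟩ := exists_intervals
  have step : ∀ (s : (ℝ → ℝ) × ℝ × ℝ) (n : ℕ), ∃ r : ℝ × ℝ, (LA s.1 ∧ 0 < s.2.2) →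
      0 < r.2 ∧ r.2 ≤ s.2.2 / 10 ∧ (I n).1 ≤ r.1 - r.2 ∧ r.1 + 6 * r.2 ≤ (I n).2 ∧
      ∃ a b : ℝ, ∀ x ∈ Icc r.1 (r.1 + 5 * r.2), s.1 x = a * x + b := by
    intro s n
    by_cases hs : LA s.1 ∧ 0 < s.2.2
    · obtain ⟨t, η, hr⟩ := LA_step hs.1 (hI n).2.1 (by linarith [hs.2] : 0 < s.2.2 / 10)
      exact ⟨(t, η), fun _ => hr⟩
    · exact ⟨(0, 0), fun hc => absurd hc hs⟩
  choose r hr using step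
  let st : ℕ → (ℝ → ℝ) × ℝ × ℝ := fun n => Nat.rec ((fun _ => 0), 0, 10)
    (fun n s => ((fun x => s.1 x + (r s n).2 ^ 2 * Psi S ((x - (r s n).1) / (r s n).2)),
      (r s n).1, (r s n).2)) n
  have st0 : st 0 = ((fun _ => 0), 0, 10) := rfl
  have st1 : ∀ n, st (n + 1) =
    ((fun x => (st n).1 x + (r (st n) n).2 ^ 2 * Psi S ((x - (r (st n) n).1) / (r (st n) n).2)),
      (r (st n) n).1, (r (st n) n).2) := fun n => rfl
  have inv : ∀ n, LA (st n).1 ∧ 0 < (st n).2.2 := by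
    intro n
    induction n with
    | zero => rw [st0]; exact ⟨LA.const 0, by norm_num⟩
    | succ n ih =>
      have := hr (st n) n ih
      rw [st1]
      exact ⟨ih.1.add ((Psi_LA h).comp _ _ this.1), this.1⟩
  let t : ℕ → ℝ := fun n => (r (st n) n).1
  let η : ℕ → ℝ := fun n => (r (st n) n).2
  have hsum : ∀ n x, (st n).1 x = ∑ k ∈ Finset.range n, fn S t η k x := by
    intro n x
    induction n with
    | zero => rw [st0]; simp
    | succ n ih => rw [Finset.sum_range_succ, ← ih, st1]; rfl
  refine ⟨t, η, fun n => (hr _ n (inv n)).1, ?_, ?_, ?_, ?_, ?_, ?_⟩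
  · have := (hr _ 0 (inv 0)).2.1
    rw [st0] at this
    norm_num at this
    exact this
  · intro n
    have := (hr _ (n + 1) (inv (n + 1))).2.1
    exact this
  · intro n
    have := (hr _ n (inv n)).2.2.1
    have h2 := (hI n).1
    exact h2.trans this
  · intro n
    exact ((hr _ n (inv n)).2.2.2.1).trans (hI n).2.2
  · intro n
    obtain ⟨a, b, hab⟩ := (hr _ n (inv n)).2.2.2.2
    exact ⟨a, b, fun x hx => by rw [← hsum]; exact hab x hx⟩
  · intro u v hu huv hv
    obtain ⟨n, h1, h2⟩ := hId u v hu huv hv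
    have h0 := (hr _ n (inv n)).1
    have h3 := (hr _ n (inv n)).2.2.1
    have h4 := (hr _ n (inv n)).2.2.2.1
    refine ⟨n, ?_, ?_⟩
    · change u < (r (st n) n).1; linarith
    · change (r (st n) n).1 + 5 * (r (st n) n).2 < v; linarith

variable {t η : ℕ → ℝ}

theorem Dat.geo (d : Dat S t η) (n k : ℕ) : η (n + k) ≤ η n * (1 / 10) ^ k := by
  induction k with
  | zero => simp
  | succ k ih =>
    have := d.dec (n + k)
    rw [← add_assoc, pow_succ]
    linarith

theorem Dat.geo0 (d : Dat S t η) (k : ℕ) : η k ≤ (1 / 10) ^ k := by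
  have := d.geo 0 k
  rw [zero_add] at this
  have h1 := d.le1
  have h2 : (0:ℝ) < (1 / 10) ^ k := by positivity
  nlinarith

theorem Dat.leone (d : Dat S t η) (k : ℕ) : η k ≤ 1 :=
  (d.geo0 k).trans (pow_le_one₀ (by norm_num) (by norm_num))

theorem Dat.rpow_le (d : Dat S t η) {s : ℝ} (hs : 0 < s) (n : ℕ) :
    η n ^ s ≤ ((1 / 10 : ℝ) ^ s) ^ n := by
  rw [← Real.rpow_natCast, ← Real.rpow_mul (by norm_num), mul_comm, Real.rpow_mul (by norm_num),
    Real.rpow_natCast]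
  exact Real.rpow_le_rpow (d.pos n).le (d.geo0 n) hs.le

theorem Dat.summ (d : Dat S t η) {s : ℝ} (hs : 0 < s) : Summable fun n => η n ^ s := by
  refine Summable.of_nonneg_of_le (fun n => Real.rpow_nonneg (d.pos n).le _) (d.rpow_le hs)
    (summable_geometric_of_lt_one (by positivity) (Real.rpow_lt_one (by norm_num) (by norm_num) hs))

theorem Dat.summ1 (d : Dat S t η) : Summable fun n => η n := by
  simpa using d.summ one_pos

theorem Dat.summ2 (d : Dat S t η) : Summable fun n => η n ^ 2 := by
  have := d.summ two_pos
  simpa using this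

theorem fn_abs (h : Cant θ S) (n : ℕ) (x : ℝ) : |fn S t η n x| ≤ 10 * η n ^ 2 := by
  unfold fn
  rw [abs_mul, abs_of_nonneg (sq_nonneg _), mul_comm]
  have := Psi_abs h ((x - t n) / η n)
  gcongr

theorem fn_summ (h : Cant θ S) (d : Dat S t η) (x : ℝ) : Summable fun n => fn S t η n x :=
  Summable.of_norm_bounded (d.summ2.mul_left 10) fun n => fn_abs h n x

theorem fn_zero (h : Cant θ S) (d : Dat S t η) (n : ℕ) {x : ℝ}
    (hx : x ≤ t n ∨ t n + 5 * η n ≤ x) : fn S t η n x = 0 := by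
  unfold fn
  have hη := d.pos n
  rcases hx with hx | hx
  · rw [Psi_le0 h (div_nonpos_of_nonpos_of_nonneg (by linarith) hη.le), mul_zero]
  · rw [Psi_ge5 h (x := (x - t n) / η n) (by rw [le_div_iff₀ hη]; linarith), mul_zero]

theorem fn_cont (h : Cant θ S) (n : ℕ) : Continuous (fn S t η n) := by
  have := Psi_cont h
  unfold fn; fun_prop

theorem fn_deriv (h : Cant θ S) (d : Dat S t η) (n : ℕ) (x : ℝ) :
    HasDerivAt (fn S t η n) (η n * psi S ((x - t n) / η n)) x := by
  have dx : HasDerivAt (fun x => (x - t n) / η n) (1 / η n) x :=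
    ((hasDerivAt_id x).sub_const (t n)).div_const (η n)
  have d1 := (HasDerivAt.comp (h₂ := Psi S) x (Psi_deriv h ((x - t n) / η n)) dx).const_mul
    (η n ^ 2)
  have e : η n * psi S ((x - t n) / η n) = η n ^ 2 * (psi S ((x - t n) / η n) * (1 / η n)) := by
    have := (d.pos n).ne'; field_simp
  rw [e]
  exact d1

theorem psi_holder (h : Cant θ S) {α : ℝ} (hα : 0 < α) (hθ : θ ^ α = 1 / 2) (x y : ℝ) :
    |psi S x - psi S y| ≤ 4 * (1 / ((1 - 2 * θ) * θ)) ^ α * |x - y| ^ α := by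
  have h1 := h.holder hα hθ x y
  have h2 := h.holder hα hθ (x - 2) (y - 2)
  have h3 := h.holder hα hθ (x - 4) (y - 4)
  rw [sub_sub_sub_cancel_right] at h2 h3
  unfold psi
  rw [abs_le] at h1 h2 h3 ⊢
  constructor <;> linarith [h1.1, h1.2, h2.1, h2.2, h3.1, h3.2]

/-- Derivative of the sum, before periodization. -/
noncomputable def GG (S : ℝ → ℝ) (t η : ℕ → ℝ) (x : ℝ) : ℝ :=
  ∑' n, η n * psi S ((x - t n) / η n)

theorem gn_abs (h : Cant θ S) (d : Dat S t η) (n : ℕ) (x : ℝ) :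
    |η n * psi S ((x - t n) / η n)| ≤ 2 * η n := by
  have hη := d.pos n
  rw [abs_mul, abs_of_pos hη, mul_comm]
  have := psi_abs h ((x - t n) / η n)
  gcongr

theorem gn_summ (h : Cant θ S) (d : Dat S t η) (x : ℝ) :
    Summable fun n => η n * psi S ((x - t n) / η n) :=
  Summable.of_norm_bounded (d.summ1.mul_left 2) fun n => gn_abs h d n x

theorem GG_deriv (h : Cant θ S) (d : Dat S t η) (x : ℝ) :
    HasDerivAt (fun z => ∑' n, fn S t η n z) (GG S t η x) x :=
  hasDerivAt_tsum (d.summ1.mul_left 2) (fun n y => fn_deriv h d n y) (fun n y => gn_abs h d n y)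
    (fn_summ h d 0) x

theorem GG_zero (h : Cant θ S) (d : Dat S t η) {x : ℝ} (hx : x ≤ 0 ∨ 2 * π ≤ x) :
    GG S t η x = 0 := by
  unfold GG
  rw [← tsum_zero (β := ℕ)]
  congr 1; ext n
  have hη := d.pos n
  have h1 := d.lo n
  have h2 := d.hi n
  rcases hx with hx | hx
  · rw [psi_le0 h (div_nonpos_of_nonpos_of_nonneg (by linarith) hη.le), mul_zero]
  · rw [psi_ge5 h (x := (x - t n) / η n) (by rw [le_div_iff₀ hη]; linarith), mul_zero]

theorem GG_holder (h : Cant θ S) (d : Dat S t η) {α : ℝ} (hα : 0 < α) (hα1 : α < 1)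
    (hθ : θ ^ α = 1 / 2) : ∃ C : ℝ, 0 < C ∧ ∀ x y, |GG S t η x - GG S t η y| ≤ C * |x - y| ^ α := by
  have hs := d.summ (s := 1 - α) (by linarith)
  have h0 := h.pos
  have h2 := h.lt
  set D := 4 * (1 / ((1 - 2 * θ) * θ)) ^ α with hD
  have hD0 : 0 ≤ D := by
    have : 0 < 1 - 2 * θ := by linarith
    positivity
  have hts : 0 ≤ ∑' n, η n ^ (1 - α) := tsum_nonneg fun n => Real.rpow_nonneg (d.pos n).le _
  refine ⟨D * (∑' n, η n ^ (1 - α)) + 1, by positivity, fun x y => ?_⟩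
  have hxy : 0 ≤ |x - y| ^ α := by positivity
  have key : |GG S t η x - GG S t η y| ≤ ∑' n, D * |x - y| ^ α * η n ^ (1 - α) := by
    unfold GG
    rw [← (gn_summ h d x).tsum_sub (gn_summ h d y), ← Real.norm_eq_abs]
    refine tsum_of_norm_bounded (hs.mul_left _).hasSum fun n => ?_
    have hη := d.pos n
    rw [← mul_sub, norm_mul, Real.norm_eq_abs, Real.norm_eq_abs, abs_of_pos hη]
    have p1 := psi_holder h hα hθ ((x - t n) / η n) ((y - t n) / η n)
    have e1 : (x - t n) / η n - (y - t n) / η n = (x - y) / η n := by ring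
    rw [e1, abs_div, abs_of_pos hη, Real.div_rpow (abs_nonneg _) hη.le] at p1
    rw [Real.rpow_sub hη, Real.rpow_one]
    calc _ ≤ η n * (D * (|x - y| ^ α / η n ^ α)) := by gcongr
      _ = _ := by ring
  rw [tsum_mul_left] at key
  nlinarith

/-- Periodization of the derivative. -/
noncomputable def gper (S : ℝ → ℝ) (t η : ℕ → ℝ) (x : ℝ) : ℝ :=
  GG S t η (x - ⌊x / (2 * π)⌋ * (2 * π))

theorem fl_prop (x : ℝ) : (⌊x / (2 * π)⌋ : ℝ) * (2 * π) ≤ x ∧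
    x < ((⌊x / (2 * π)⌋ : ℝ) + 1) * (2 * π) := by
  have hpi := Real.two_pi_pos
  exact ⟨by rw [← le_div_iff₀ hpi]; exact Int.floor_le _,
    by rw [← div_lt_iff₀ hpi]; exact Int.lt_floor_add_one _⟩

theorem gper_per (x : ℝ) : gper S t η (x + 2 * π) = gper S t η x := by
  have hpi := Real.two_pi_pos
  unfold gper
  have : (x + 2 * π) / (2 * π) = x / (2 * π) + 1 := by field_simp
  rw [this, Int.floor_add_one]
  push_cast
  congr 1; ring

theorem gper_eq (h : Cant θ S) (d : Dat S t η) {x : ℝ} (hx : x ∈ Icc 0 (2 * π)) :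
    gper S t η x = GG S t η x := by
  have hpi := Real.two_pi_pos
  unfold gper
  rcases hx.2.eq_or_lt with h1 | h1
  · rw [h1, div_self hpi.ne', Int.floor_one, GG_zero h d (Or.inr le_rfl),
      GG_zero h d (Or.inl (by simp))]
  · have : ⌊x / (2 * π)⌋ = 0 := by
      rw [Int.floor_eq_zero_iff]
      exact ⟨div_nonneg hx.1 hpi.le, (div_lt_one hpi).2 h1⟩
    rw [this]; simp

theorem gper_holder (h : Cant θ S) (d : Dat S t η) {α C : ℝ} (hα : 0 < α) (hC : 0 < C)
    (hH : ∀ x y, |GG S t η x - GG S t η y| ≤ C * |x - y| ^ α) (x y : ℝ) :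
    |gper S t η x - gper S t η y| ≤ 2 * C * |x - y| ^ α := by
  have hpi := Real.two_pi_pos
  wlog hxy : x ≤ y generalizing x y
  · rw [abs_sub_comm, abs_sub_comm x]
    exact this y x (le_of_not_ge hxy)
  have hnn : 0 ≤ C * |x - y| ^ α := by positivity
  set i := ⌊x / (2 * π)⌋ with hi
  set j := ⌊y / (2 * π)⌋ with hj
  obtain ⟨x1, x2⟩ := fl_prop x
  obtain ⟨y1, y2⟩ := fl_prop y
  rw [← hi] at x1 x2
  rw [← hj] at y1 y2
  have hij : i ≤ j := Int.floor_le_floor (by gcongr)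
  rcases hij.eq_or_lt with he | hl
  · have := hH (x - i * (2 * π)) (y - i * (2 * π))
    rw [sub_sub_sub_cancel_right] at this
    unfold gper
    rw [← hi, ← hj, ← he]
    linarith
  · have hl' : (i : ℝ) + 1 ≤ j := by exact_mod_cast hl
    have hm : ((i : ℝ) + 1) * (2 * π) ≤ j * (2 * π) := by gcongr
    have a1 := hH (x - i * (2 * π)) (2 * π)
    rw [GG_zero h d (x := 2 * π) (Or.inr le_rfl), sub_zero] at a1
    have a2 := hH (y - j * (2 * π)) 0
    rw [GG_zero h d (x := 0) (Or.inl le_rfl), sub_zero] at a2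
    have b1 : |x - i * (2 * π) - 2 * π| ^ α ≤ |x - y| ^ α := by
      apply Real.rpow_le_rpow (abs_nonneg _) _ hα.le
      rw [abs_of_nonpos (by linarith), abs_of_nonpos (by linarith)]
      linarith
    have b2 : |y - j * (2 * π) - 0| ^ α ≤ |x - y| ^ α := by
      apply Real.rpow_le_rpow (abs_nonneg _) _ hα.le
      rw [abs_of_nonneg (by linarith), abs_of_nonpos (by linarith)]
      linarith
    have c1 : C * |x - i * (2 * π) - 2 * π| ^ α ≤ C * |x - y| ^ α := by gcongr
    have c2 : C * |y - j * (2 * π) - 0| ^ α ≤ C * |x - y| ^ α := by gcongr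
    have t1 := abs_sub (GG S t η (x - i * (2 * π))) (GG S t η (y - j * (2 * π)))
    unfold gper
    rw [← hi, ← hj]
    linarith

theorem holder_cont {g : ℝ → ℝ} {α C : ℝ} (hα : 0 < α)
    (hH : ∀ x y, |g x - g y| ≤ C * |x - y| ^ α) : Continuous g := by
  rw [continuous_iff_continuousAt]
  intro x
  rw [ContinuousAt, tendsto_iff_norm_sub_tendsto_zero]
  have lim : Filter.Tendsto (fun y : ℝ => C * |y - x| ^ α) (nhds x) (nhds 0) := by
    have c : Continuous fun y : ℝ => C * |y - x| ^ α :=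
      continuous_const.mul ((Continuous.abs (by fun_prop)).rpow_const fun _ => Or.inr hα.le)
    have := c.tendsto x
    simpa [Real.zero_rpow hα.ne'] using this
  exact squeeze_zero (fun _ => norm_nonneg _) (fun y => hH y x) lim

theorem tail_bound (h : Cant θ S) (d : Dat S t η) (n : ℕ) (x : ℝ) :
    |∑' k, fn S t η (k + (n + 1)) x| ≤ 10 / 99 * η n ^ 2 := by
  have hg : HasSum (fun k : ℕ => 10 * η n ^ 2 / 100 * (1 / 100 : ℝ) ^ k)
      (10 * η n ^ 2 / 100 * (1 - 1 / 100)⁻¹) :=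
    (hasSum_geometric_of_lt_one (by norm_num) (by norm_num)).mul_left _
  have := tsum_of_norm_bounded (f := fun k => fn S t η (k + (n + 1)) x) hg fun k => ?_
  · rw [Real.norm_eq_abs] at this
    refine this.trans (le_of_eq ?_)
    ring
  · refine (fn_abs h _ x).trans ?_
    have h1 := d.geo n (k + 1)
    have e : k + (n + 1) = n + (k + 1) := by ring
    rw [e]
    have h2 := (d.pos (n + (k + 1))).le
    calc 10 * η (n + (k + 1)) ^ 2 ≤ 10 * (η n * (1 / 10) ^ (k + 1)) ^ 2 := by gcongr
      _ = 10 * η n ^ 2 / 100 * ((1 / 10) ^ 2) ^ k := by rw [← pow_mul]; ring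
      _ = _ := by norm_num

theorem not_affine (h : Cant θ S) (d : Dat S t η) (n : ℕ) {a b : ℝ}
    (hab : ∀ x ∈ Icc (t n) (t n + 5 * η n), ∑' k, fn S t η k x = a * x + b) : False := by
  have hη := d.pos n
  obtain ⟨a', b', hab'⟩ := d.aff n
  have split : ∀ x, ∑' k, fn S t η k x = ∑ k ∈ Finset.range n, fn S t η k x + fn S t η n x +
      ∑' k, fn S t η (k + (n + 1)) x := by
    intro x
    rw [← Finset.sum_range_succ, (fn_summ h d x).sum_add_tsum_nat_add]
  have key : ∀ x ∈ Icc (t n) (t n + 5 * η n), a * x + b = a' * x + b' + fn S t η n x +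
      ∑' k, fn S t η (k + (n + 1)) x := by
    intro x hx
    rw [← hab x hx, ← hab' x hx, split]
  have k1 := key (t n) ⟨le_rfl, by linarith⟩
  have k2 := key (t n + 5 / 2 * η n) ⟨by linarith, by linarith⟩
  have k3 := key (t n + 5 * η n) ⟨by linarith, by linarith⟩
  rw [fn_zero h d n (Or.inl le_rfl)] at k1
  rw [fn_zero h d n (Or.inr le_rfl)] at k3
  have e : fn S t η n (t n + 5 / 2 * η n) = η n ^ 2 * Psi S (5 / 2) := by
    unfold fn
    congr 2
    field_simp; ring
  rw [e] at k2
  have hm := Psi_mid h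
  have hm2 : η n ^ 2 * (1 / 2) ≤ η n ^ 2 * Psi S (5 / 2) := by gcongr
  have t1 := abs_le.1 (tail_bound h d n (t n))
  have t2 := abs_le.1 (tail_bound h d n (t n + 5 / 2 * η n))
  have t3 := abs_le.1 (tail_bound h d n (t n + 5 * η n))
  have hq : 0 < η n ^ 2 := by positivity
  linarith [t1.1, t1.2, t2.1, t2.2, t3.1, t3.2]

theorem exists_phi (h : Cant θ S) (d : Dat S t η) {α : ℝ} (hα : 0 < α) (hα1 : α < 1)
    (hθ : θ ^ α = 1 / 2) : ∃ φ φ' : ℝ → ℝ, (∀ x, HasDerivAt φ (φ' x) x) ∧ Continuous φ' ∧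
      (∀ x, φ (x + 2 * π) = φ x) ∧ (∃ C : ℝ, 0 < C ∧ ∀ x y, |φ' x - φ' y| ≤ C * |x - y| ^ α) ∧
      (∀ u v : ℝ, u < v → ¬ ∃ a b : ℝ, ∀ x ∈ Ioo u v, φ x = a * x + b) ∧
      (∀ x ∈ Icc 0 (2 * π), φ x = ∑' n, fn S t η n x) := by
  have hpi := Real.two_pi_pos
  obtain ⟨C, hC, hH⟩ := GG_holder h d hα hα1 hθ
  have hgH := gper_holder h d hα hC hH
  have hgc : Continuous (gper S t η) := holder_cont hα hgH
  have hGc : Continuous (GG S t η) := holder_cont hα hH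
  set φ : ℝ → ℝ := fun x => ∫ s in (0:ℝ)..x, gper S t η s with hφ
  have hd : ∀ x, HasDerivAt φ (gper S t η x) x := fun x => (hgc.integral_hasStrictDerivAt 0 x).hasDerivAt
  have z0 : ∑' n, fn S t η n 0 = 0 := by
    refine (tsum_congr fun n => ?_).trans tsum_zero
    exact fn_zero h d n (Or.inl (by linarith [d.lo n, d.pos n]))
  have z1 : ∑' n, fn S t η n (2 * π) = 0 := by
    refine (tsum_congr fun n => ?_).trans tsum_zero
    exact fn_zero h d n (Or.inr (by linarith [d.hi n, d.pos n]))
  have heq : ∀ x ∈ Icc 0 (2 * π), φ x = ∑' n, fn S t η n x := by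
    intro x hx
    have e1 : φ x = ∫ s in (0:ℝ)..x, GG S t η s := by
      apply intervalIntegral.integral_congr
      intro s hs
      rw [uIcc_of_le hx.1] at hs
      exact gper_eq h d ⟨hs.1, hs.2.trans hx.2⟩
    rw [e1, intervalIntegral.integral_eq_sub_of_hasDerivAt (fun s _ => GG_deriv h d s)
      (hGc.intervalIntegrable _ _), z0, sub_zero]
  have hper : ∀ x, φ (x + 2 * π) = φ x := by
    have hc : ∀ x y, φ (x + 2 * π) - φ x = φ (y + 2 * π) - φ y := by
      refine is_const_of_deriv_eq_zero (f := fun x => φ (x + 2 * π) - φ x) ?_ ?_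
      · intro x
        exact (((hd (x + 2 * π)).comp_add_const x (2 * π)).sub (hd x)).differentiableAt
      · intro x
        refine (((hd (x + 2 * π)).comp_add_const x (2 * π)).sub (hd x)).deriv.trans ?_
        rw [gper_per, sub_self]
    intro x
    have := hc x 0
    rw [zero_add, heq (2 * π) ⟨hpi.le, le_rfl⟩, heq 0 ⟨le_rfl, hpi.le⟩, z0, z1] at this
    linarith
  refine ⟨φ, gper S t η, hd, hgc, hper, ⟨2 * C, by positivity, hgH⟩, ?_, heq⟩
  rintro u v huv ⟨a, b, hab⟩
  obtain ⟨u1, u2⟩ := fl_prop u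
  set j := ⌊u / (2 * π)⌋ with hj
  have hp' : Function.Periodic φ (2 * π) := hper
  obtain ⟨n, n1, n2⟩ := d.dense (u - j * (2 * π)) (min (v - j * (2 * π)) (2 * π)) (by linarith)
    (lt_min (by linarith) (by linarith)) (min_le_right _ _)
  have n3 := n2.trans_le (min_le_left _ _)
  have n4 := n2.trans_le (min_le_right _ _)
  refine not_affine h d n (a := a) (b := a * (j * (2 * π)) + b) fun x hx => ?_
  rw [← heq x ⟨by linarith [hx.1, d.lo n, d.pos n], by linarith [hx.2]⟩,
    ← (hp'.int_mul j) x, hab (x + j * (2 * π)) ⟨by linarith [hx.1], by linarith [hx.2]⟩]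
  ring

end

theorem ApNorm_eq {p : ℝ} (hp : 1 ≤ p) (f : ℝ → ℂ) :
    ApNorm p f = eLpNorm (fourierCoef f) (ENNReal.ofReal p) Measure.count := by
  rw [eLpNorm_eq_lintegral_rpow_enorm_toReal (by simp; linarith) ENNReal.ofReal_ne_top,
    ENNReal.toReal_ofReal (by linarith), lintegral_count]
  rfl

theorem ApNorm_one {p : ℝ} (hp : 1 ≤ p) : ApNorm p (fun _ => 1) = 1 := by
  unfold ApNorm
  rw [tsum_eq_single 0]
  · rw [fc_one_zero]; simp
  · intro k hk
    rw [fc_one_ne hk]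
    simp; linarith

section
variable {θ : ℝ} {S : ℝ → ℝ} {t η : ℕ → ℝ}

theorem fc_dist (h : Cant θ S) (d : Dat S t η) {φ : ℝ → ℝ} (hφ : Continuous φ)
    (heq : ∀ x ∈ Icc 0 (2 * π), φ x = ∑' n, fn S t η n x) (lam : ℝ) (n : ℕ) (k : ℤ) :
    ‖fourierCoef (fun x => Complex.exp (Complex.I * (lam : ℂ) * (φ x : ℂ))) k -
      fourierCoef (fun x => Complex.exp (Complex.I *
        ((lam * ∑ j ∈ Finset.range (n + 1), fn S t η j x : ℝ) : ℂ))) k‖ ≤ |lam| * η n ^ 2 := by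
  have hc : ∀ j, Continuous (fn S t η j) := fun j => fn_cont h j
  have hpi := Real.two_pi_pos
  rw [← fc_sub (by fun_prop) (by fun_prop)]
  refine (fc_norm_le k).trans ?_
  have b : ∫ x in (0:ℝ)..(2 * π), ‖Complex.exp (Complex.I * (lam : ℂ) * (φ x : ℂ)) -
      Complex.exp (Complex.I * ((lam * ∑ j ∈ Finset.range (n + 1), fn S t η j x : ℝ) : ℂ))‖ ≤
      ∫ x in (0:ℝ)..(2 * π), |lam| * η n ^ 2 := by
    apply intervalIntegral.integral_mono_on hpi.le
    · apply Continuous.intervalIntegrable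
      fun_prop
    · exact intervalIntegrable_const
    · intro x hx
      have e : Complex.I * (lam : ℂ) * (φ x : ℂ) = Complex.I * ((lam * φ x : ℝ) : ℂ) := by
        push_cast; ring
      rw [e]
      refine (exp_I_sub_le _ _).trans ?_
      rw [← mul_sub, abs_mul, heq x hx, ← (fn_summ h d x).sum_add_tsum_nat_add (n + 1),
        add_sub_cancel_left]
      have := tail_bound h d n x
      have := sq_nonneg (η n)
      gcongr
      linarith
  rw [intervalIntegral.integral_const, smul_eq_mul, sub_zero] at b
  rw [inv_mul_le_iff₀ hpi]
  exact b

theorem fc_telescope (h : Cant θ S) (d : Dat S t η) (lam : ℝ) : ∃ a b : ℕ → ℝ, ∀ N k,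
    fourierCoef (fun x => Complex.exp (Complex.I *
        ((lam * ∑ j ∈ Finset.range N, fn S t η j x : ℝ) : ℂ))) k =
      fourierCoef (fun _ => 1) k + ∑ n ∈ Finset.range N,
        fourierCoef (Bl S (a n) (b n) (lam * η n ^ 2) (t n) (η n)) k := by
  have hc : ∀ j, Continuous (fn S t η j) := fun j => fn_cont h j
  choose a b hab using d.aff
  refine ⟨fun n => lam * a n, fun n => lam * b n, fun N k => ?_⟩
  induction N with
  | zero => simp
  | succ N ih =>
    rw [Finset.sum_range_succ, ← add_assoc, ← ih, ← fc_add (by fun_prop) (Bl_cont h _ _ _ _ _)]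
    congr 1
    ext x
    rw [Finset.sum_range_succ]
    by_cases hx : x ∈ Icc (t N) (t N + 5 * η N)
    · have := hab N x hx
      unfold Bl
      rw [this, fn]
      have e1 : lam * (a N * x + b N) = lam * a N * x + lam * b N := by ring
      have e2 : lam * (a N * x + b N + η N ^ 2 * Psi S ((x - t N) / η N)) =
        lam * a N * x + lam * b N + lam * η N ^ 2 * Psi S ((x - t N) / η N) := by ring
      rw [e1, e2]; ring
    · have hx' : x ≤ t N ∨ t N + 5 * η N ≤ x := by
        rw [mem_Icc, not_and_or, not_le, not_le] at hx
        exact hx.imp le_of_lt le_of_lt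
      rw [fn_zero h d N hx', Bl_zero h _ _ _ (d.pos N) hx', add_zero, add_zero]

theorem ApNorm_dec (h : Cant θ S) (d : Dat S t η) {φ : ℝ → ℝ} (hφ : Continuous φ)
    (heq : ∀ x ∈ Icc 0 (2 * π), φ x = ∑' n, fn S t η n x) (lam : ℝ) : ∃ a b : ℕ → ℝ,
    ∀ p : ℝ, 1 ≤ p → ApNorm p (fun x => Complex.exp (Complex.I * (lam : ℂ) * (φ x : ℂ))) ≤
      1 + ∑' n, ApNorm p (Bl S (a n) (b n) (lam * η n ^ 2) (t n) (η n)) := by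
  obtain ⟨a, b, hab⟩ := fc_telescope h d lam
  refine ⟨a, b, fun p hp => ?_⟩
  set F : ℕ → ℤ → ℂ := fun N k => fourierCoef (fun x => Complex.exp (Complex.I *
        ((lam * ∑ j ∈ Finset.range (N + 1), fn S t η j x : ℝ) : ℂ))) k with hF
  set E : ℤ → ℂ := fourierCoef (fun x => Complex.exp (Complex.I * (lam : ℂ) * (φ x : ℂ))) with hE
  have hms : ∀ f : ℤ → ℂ, AEStronglyMeasurable f Measure.count := fun f =>
    (measurable_of_countable f).aestronglyMeasurable
  have lim : ∀ k, Filter.Tendsto (fun N => F N k) Filter.atTop (nhds (E k)) := by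
    intro k
    rw [tendsto_iff_norm_sub_tendsto_zero]
    have l2 : Filter.Tendsto (fun n => |lam| * η n ^ 2) Filter.atTop (nhds 0) := by
      simpa using d.summ2.tendsto_atTop_zero.const_mul |lam|
    refine squeeze_zero (fun _ => norm_nonneg _) (fun n => ?_) l2
    rw [norm_sub_rev]
    exact fc_dist h d hφ heq lam n k
  have fat := Lp.eLpNorm_lim_le_liminf_eLpNorm (p := ENNReal.ofReal p) (μ := Measure.count)
    (f := F) (fun n => hms _) E (Filter.Eventually.of_forall lim)
  rw [ApNorm_eq hp]
  refine fat.trans ?_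
  refine (Filter.liminf_le_of_le (a := 1 + ∑' n,
    ApNorm p (Bl S (a n) (b n) (lam * η n ^ 2) (t n) (η n))) (by isBoundedDefault) ?_)
  intro B hB
  obtain ⟨N, hN⟩ := hB.exists
  refine hN.trans ?_
  have e : F N = (fourierCoef (fun _ => 1)) + ∑ n ∈ Finset.range (N + 1),
        fourierCoef (Bl S (a n) (b n) (lam * η n ^ 2) (t n) (η n)) := by
    ext k
    simp only [hF, hab, Pi.add_apply, Finset.sum_apply]
  have h1p : 1 ≤ ENNReal.ofReal p := by simpa using hp
  rw [e]
  refine (eLpNorm_add_le (hms _) (hms _) h1p).trans ?_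
  refine add_le_add ?_ ?_
  · rw [← ApNorm_eq hp, ApNorm_one hp]
  · refine (eLpNorm_sum_le (fun n _ => hms _) h1p).trans ?_
    simp only [← ApNorm_eq hp]
    exact ENNReal.sum_le_tsum _

variable {ε K : ℝ} {σ σ' ρ ρ' : ℝ → ℝ}

theorem UB_p (h : Cant θ S) (c : Cut θ ε K σ σ' ρ ρ') (d : Dat S t η) {φ : ℝ → ℝ}
    (hφ : Continuous φ) (heq : ∀ x ∈ Icc 0 (2 * π), φ x = ∑' n, fn S t η n x)
    {α : ℝ} (hα : 0 < α)
    (hθ : θ ^ α = 1 / 2) {p : ℝ} (hp : 1 < p) (hp2 : p < 2) {B : ℝ → ℝ}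
    (hB : (p < 1 + α ∧ ∀ L, B L = L ^ (1 - p / (1 + α))) ∨ (p = 1 + α ∧ ∀ L, B L = Real.log L) ∨
      (1 + α < p ∧ ∀ L, B L = 1)) (hB1 : ∀ L, 3 ≤ L → 1 ≤ B L) :
    ∃ C : ℝ, 0 < C ∧ ∀ lam : ℝ, 3 ≤ |lam| →
      ApNorm p (fun x => Complex.exp (Complex.I * (lam : ℂ) * (φ x : ℂ))) ≤
        ENNReal.ofReal (C * B |lam| ^ (1 / p)) := by
  obtain ⟨C, hC, hCb⟩ := block_p h c hα hθ hp hp2 hB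
  have hs : 0 < (p - 1) * (1 / p) := by
    have : 0 < p - 1 := by linarith
    positivity
  have sm := d.summ hs
  have ts : 0 ≤ ∑' n, η n ^ ((p - 1) * (1 / p)) :=
    tsum_nonneg fun n => Real.rpow_nonneg (d.pos n).le _
  have hC0 : 0 < C := by linarith
  refine ⟨1 + C ^ (1 / p) * ∑' n, η n ^ ((p - 1) * (1 / p)), by positivity, fun lam hl => ?_⟩
  obtain ⟨a, b, hab⟩ := ApNorm_dec h d hφ heq lam
  refine (hab p hp.le).trans ?_
  have hBl := hB1 _ hl
  have hBp : 1 ≤ B |lam| ^ (1 / p) := Real.one_le_rpow hBl (by positivity)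
  have each : ∀ n, ApNorm p (Bl S (a n) (b n) (lam * η n ^ 2) (t n) (η n)) ≤
      ENNReal.ofReal (C ^ (1 / p) * B |lam| ^ (1 / p) * η n ^ ((p - 1) * (1 / p))) := by
    intro n
    have hη := d.pos n
    have hη1 := d.leone n
    have key := hCb (a n) (b n) (lam * η n ^ 2) (t n) (η n) |lam| hη hη1 (d.lo n) (d.hi n)
      (by linarith) (by
        rw [abs_mul, abs_of_nonneg (sq_nonneg (η n))]
        exact mul_le_of_le_one_right (abs_nonneg _) (pow_le_one₀ hη.le hη1))
    unfold ApNorm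
    refine (ENNReal.rpow_le_rpow key (by positivity)).trans (le_of_eq ?_)
    rw [ENNReal.ofReal_rpow_of_nonneg (by positivity) (by positivity),
      Real.mul_rpow (by positivity) (by linarith), Real.mul_rpow (by positivity) (by positivity),
      ← Real.rpow_mul hη.le]
    congr 1; ring
  refine (add_le_add le_rfl (ENNReal.tsum_le_tsum each)).trans ?_
  rw [← ENNReal.ofReal_tsum_of_nonneg (fun n => by have := d.pos n; positivity) (sm.mul_left _),
    tsum_mul_left, ← ENNReal.ofReal_one, ← ENNReal.ofReal_add (by norm_num) (by positivity)]
  apply ENNReal.ofReal_le_ofReal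
  rw [add_mul, one_mul]
  refine add_le_add hBp (le_of_eq ?_)
  ring

theorem UB_1 (h : Cant θ S) (c : Cut θ ε K σ σ' ρ ρ') (d : Dat S t η) {φ : ℝ → ℝ}
    (hφ : Continuous φ) (heq : ∀ x ∈ Icc 0 (2 * π), φ x = ∑' n, fn S t η n x)
    {α : ℝ} (hα : 0 < α) (hθ : θ ^ α = 1 / 2) :
    ∃ C : ℝ, 0 < C ∧ ∀ lam : ℝ, 3 ≤ |lam| →
      ApNorm 1 (fun x => Complex.exp (Complex.I * (lam : ℂ) * (φ x : ℂ))) ≤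
        ENNReal.ofReal (C * |lam| ^ (α / (1 + α))) := by
  obtain ⟨C, hC, hCb⟩ := block_1 h c hα hθ
  have hs : 0 < 2 * (α / (1 + α)) := by positivity
  have sm := d.summ hs
  have ts : 0 ≤ ∑' n, η n ^ (2 * (α / (1 + α))) :=
    tsum_nonneg fun n => Real.rpow_nonneg (d.pos n).le _
  have hC0 : 0 < C := by linarith
  refine ⟨1 + C * ∑' n, η n ^ (2 * (α / (1 + α))), by positivity, fun lam hl => ?_⟩
  obtain ⟨a, b, hab⟩ := ApNorm_dec h d hφ heq lam
  refine (hab 1 le_rfl).trans ?_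
  have hBp : 1 ≤ |lam| ^ (α / (1 + α)) := Real.one_le_rpow (by linarith) (by positivity)
  have each : ∀ n, ApNorm 1 (Bl S (a n) (b n) (lam * η n ^ 2) (t n) (η n)) ≤
      ENNReal.ofReal (C * |lam| ^ (α / (1 + α)) * η n ^ (2 * (α / (1 + α)))) := by
    intro n
    have hη := d.pos n
    have hη1 := d.leone n
    have key := hCb (a n) (b n) (lam * η n ^ 2) (t n) (η n) hη hη1 (d.lo n) (d.hi n)
    have e : ApNorm 1 (Bl S (a n) (b n) (lam * η n ^ 2) (t n) (η n)) =
        N1 (Bl S (a n) (b n) (lam * η n ^ 2) (t n) (η n)) := by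
      unfold ApNorm N1
      simp only [ENNReal.rpow_one, div_one]
      rfl
    rw [e]
    refine key.trans (le_of_eq ?_)
    rw [abs_mul, abs_of_nonneg (sq_nonneg (η n)), Real.mul_rpow (abs_nonneg _) (sq_nonneg _),
      Real.rpow_mul hη.le, Real.rpow_two, mul_assoc]
  refine (add_le_add le_rfl (ENNReal.tsum_le_tsum each)).trans ?_
  rw [← ENNReal.ofReal_tsum_of_nonneg (fun n => by have := d.pos n; positivity) (sm.mul_left _),
    tsum_mul_left, ← ENNReal.ofReal_one, ← ENNReal.ofReal_add (by norm_num) (by positivity)]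
  apply ENNReal.ofReal_le_ofReal
  rw [add_mul, one_mul]
  refine add_le_add hBp (le_of_eq ?_)
  ring

end

/-- Corollary 2: for 0 < α < 1 there exists a nowhere linear real
φ ∈ C^{1,α}(𝕋) with the stated sharp growth of ‖e^{iλφ}‖_{A_p}. -/
theorem statement4
    (α : ℝ) (hα0 : 0 < α) (hα1 : α < 1) :
    ∃ φ : ℝ → ℝ,
      (∀ t : ℝ, φ (t + 2 * Real.pi) = φ t) ∧
      ContDiff ℝ 1 φ ∧
      (∃ C : ℝ, 0 < C ∧ ∀ s t : ℝ, |deriv φ s - deriv φ t| ≤ C * |s - t| ^ α) ∧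
      -- φ is nowhere linear
      (∀ u v : ℝ, u < v → ¬ ∃ a b : ℝ, ∀ t ∈ Ioo u v, φ t = a * t + b) ∧
      -- (i) ‖e^{iλφ}‖_A = O(|λ|^{α/(1+α)} (log |λ|)^{(1−α)/(1+α)})
      (∃ C : ℝ, 0 < C ∧ ∃ Λ : ℝ, 2 ≤ Λ ∧ ∀ lam : ℝ, Λ ≤ |lam| →
        ApNorm 1 (fun t => Complex.exp (Complex.I * (lam : ℂ) * (φ t : ℂ))) ≤
          ENNReal.ofReal (C * |lam| ^ (α / (1 + α)) *
            (Real.log |lam|) ^ ((1 - α) / (1 + α)))) ∧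
      -- (ii) ‖e^{iλφ}‖_{A_p} ≍ |λ|^{1/p − 1/(1+α)} for 1 < p < 1+α
      (∀ p : ℝ, 1 < p → p < 1 + α →
        ∃ c₁ c₂ : ℝ, 0 < c₁ ∧ 0 < c₂ ∧ ∃ Λ : ℝ, 2 ≤ Λ ∧ ∀ lam : ℝ, Λ ≤ |lam| →
          ENNReal.ofReal (c₁ * |lam| ^ (1 / p - 1 / (1 + α))) ≤
            ApNorm p (fun t => Complex.exp (Complex.I * (lam : ℂ) * (φ t : ℂ))) ∧
          ApNorm p (fun t => Complex.exp (Complex.I * (lam : ℂ) * (φ t : ℂ))) ≤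
            ENNReal.ofReal (c₂ * |lam| ^ (1 / p - 1 / (1 + α)))) ∧
      -- ‖e^{iλφ}‖_{A_p} ≍ 1 for 1+α < p < 2
      (∀ p : ℝ, 1 + α < p → p < 2 →
        ∃ c₁ c₂ : ℝ, 0 < c₁ ∧ 0 < c₂ ∧ ∃ Λ : ℝ, 2 ≤ Λ ∧ ∀ lam : ℝ, Λ ≤ |lam| →
          ENNReal.ofReal c₁ ≤
            ApNorm p (fun t => Complex.exp (Complex.I * (lam : ℂ) * (φ t : ℂ))) ∧
          ApNorm p (fun t => Complex.exp (Complex.I * (lam : ℂ) * (φ t : ℂ))) ≤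
            ENNReal.ofReal c₂) ∧
      -- ‖e^{iλφ}‖_{A_p} = O((log |λ|)^{1/p}) for p = 1+α
      (∃ C : ℝ, 0 < C ∧ ∃ Λ : ℝ, 2 ≤ Λ ∧ ∀ lam : ℝ, Λ ≤ |lam| →
        ApNorm (1 + α) (fun t => Complex.exp (Complex.I * (lam : ℂ) * (φ t : ℂ))) ≤
          ENNReal.ofReal (C * (Real.log |lam|) ^ (1 / (1 + α)))) := by
  have hpi := Real.two_pi_pos
  set θ : ℝ := (1 / 2 : ℝ) ^ (1 / α) with hθd
  have hθ0 : 0 < θ := by positivity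
  have hθ : θ ^ α = 1 / 2 := by
    rw [hθd, ← Real.rpow_mul (by norm_num), one_div_mul_cancel hα0.ne', Real.rpow_one]
  have hθ2 : θ < 1 / 2 := by
    have h1 : 1 < 1 / α := by rw [lt_div_iff₀ hα0]; linarith
    calc θ < (1 / 2 : ℝ) ^ (1:ℝ) :=
          Real.rpow_lt_rpow_of_exponent_gt (by norm_num) (by norm_num) h1
      _ = 1 / 2 := by norm_num
  obtain ⟨S, h⟩ := exists_cant hθ0 hθ2
  obtain ⟨ε, K, σ, σ', ρ, ρ', c⟩ := exists_cut hθ0 hθ2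
  obtain ⟨t, η, d⟩ := exists_dat h
  obtain ⟨φ, φ', hd, hc', hper, ⟨C, hC, hH⟩, hnl, heq⟩ := exists_phi h d hα0 hα1 hθ
  have hφ : Continuous φ := continuous_iff_continuousAt.2 fun x => (hd x).continuousAt
  have hder : deriv φ = φ' := funext fun x => (hd x).deriv
  have hlog : ∀ L : ℝ, 3 ≤ L → 1 ≤ Real.log L := by
    intro L hL
    rw [Real.le_log_iff_exp_le (by linarith)]
    linarith [Real.exp_one_lt_d9]
  have hne : ∃ t₁ t₂, φ' t₁ ≠ φ' t₂ := by
    by_contra hcon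
    push Not at hcon
    refine hnl 0 1 one_pos ⟨φ' 0, φ 0, fun x _ => ?_⟩
    have key := is_const_of_deriv_eq_zero (f := fun x => φ x - φ' 0 * x)
      (fun x => ((hd x).sub ((hasDerivAt_id x).const_mul (φ' 0))).differentiableAt)
      (fun x => (((hd x).sub ((hasDerivAt_id x).const_mul (φ' 0))).deriv).trans (by
        rw [hcon x 0]; ring)) x 0
    simp only [mul_zero, sub_zero] at key
    linarith
  obtain ⟨t₁, t₂, hne⟩ := hne
  refine ⟨φ, hper, ?_, ?_, hnl, ?_, ?_, ?_, ?_⟩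
  · rw [contDiff_one_iff_deriv]
    exact ⟨fun x => (hd x).differentiableAt, by rw [hder]; exact hc'⟩
  · exact ⟨C, hC, fun s t => by rw [hder]; exact hH s t⟩
  · obtain ⟨C₁, hC₁, hub⟩ := UB_1 h c d hφ heq hα0 hθ
    refine ⟨C₁, hC₁, 3, by norm_num, fun lam hl => (hub lam hl).trans ?_⟩
    apply ENNReal.ofReal_le_ofReal
    have h1 : 1 ≤ Real.log |lam| ^ ((1 - α) / (1 + α)) :=
      Real.one_le_rpow (hlog _ hl) (div_nonneg (by linarith) (by linarith))
    exact le_mul_of_one_le_right (by positivity) h1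
  · intro p hp hp2
    obtain ⟨C₁, hC₁, hub⟩ := UB_p h c d hφ heq hα0 hθ hp (by linarith)
      (B := fun L => L ^ (1 - p / (1 + α))) (Or.inl ⟨hp2, fun L => rfl⟩) (fun L hL =>
        Real.one_le_rpow (by linarith)
          (by rw [sub_nonneg, div_le_one (by linarith)]; exact hp2.le))
    obtain ⟨c₁, hc₁, Λ, hΛ, hlb⟩ := LB hd hc' hper hα0 hC hH hne hp.le
    refine ⟨c₁, C₁, hc₁, hC₁, max Λ 3, le_max_of_le_left hΛ, fun lam hl => ⟨?_, ?_⟩⟩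
    · exact hlb lam ((le_max_left _ _).trans hl)
    · refine (hub lam ((le_max_right _ _).trans hl)).trans (le_of_eq ?_)
      rw [← Real.rpow_mul (abs_nonneg _)]
      congr 3
      field_simp
  · intro p hp hp2
    obtain ⟨C₁, hC₁, hub⟩ := UB_p h c d hφ heq hα0 hθ (by linarith : 1 < p) hp2
      (B := fun _ => 1) (Or.inr (Or.inr ⟨hp, fun L => rfl⟩)) (fun L hL => le_rfl)
    refine ⟨1, C₁, one_pos, hC₁, 3, by norm_num, fun lam hl => ⟨?_, ?_⟩⟩
    · exact LB2 hφ (by linarith) hp2 lam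
    · refine (hub lam hl).trans (le_of_eq ?_)
      rw [Real.one_rpow, mul_one]
  · obtain ⟨C₁, hC₁, hub⟩ := UB_p h c d hφ heq hα0 hθ (by linarith : 1 < 1 + α) (by linarith)
      (B := fun L => Real.log L) (Or.inr (Or.inl ⟨rfl, fun L => rfl⟩)) hlog
    exact ⟨C₁, hC₁, 3, by norm_num, hub⟩
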